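/- arXiv:1301.6826 — 4 statements merged into one kernel-verified Lean document; each statement's English description precedes it below -/
import Mathlib

section
/- A finite group G is a solvable SST-group (resp. a solvable BT-group) if and only if G has a normal subgroup N such that N is a solvable PST-group and G/N'' is a solvable SST-group (resp. a solvable BT-group), where N'' denotes the second derived subgroup of N. -/
open scoped Pointwise

section Defs

variable {G : Type*} [Group G]

/-- `K` is an SS-permutable supplement of `H` in `G`: `HK = G` and `H` permutes with
every Sylow subgroup of `K`. -/
def IsSSSupplement (H K : Subgroup G) : Prop :=
  (H : Set G) * (K : Set G) = Set.univ ∧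
    ∀ (p : ℕ) [Fact p.Prime] (P : Sylow p K),
      (H : Set G) * ((P.toSubgroup.map K.subtype : Subgroup G) : Set G) =
        ((P.toSubgroup.map K.subtype : Subgroup G) : Set G) * (H : Set G)

/-- `H` is SS-permutable in `G`: `H` has a supplement `K` such that `H` permutes with
every Sylow subgroup of `K`. -/
def IsSSPermutable (H : Subgroup G) : Prop :=
  ∃ K : Subgroup G, IsSSSupplement H K

/-- `H` is NSS-permutable in `G`: `H` has a normal supplement `K` such that `H` permutes
with every Sylow subgroup of `K`. -/
def IsNSSPermutable (H : Subgroup G) : Prop :=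
  ∃ K : Subgroup G, K.Normal ∧ IsSSSupplement H K

/-- `H` is S-permutable in `G`: it permutes with every Sylow subgroup of `G`. -/
def IsSPermutable (H : Subgroup G) : Prop :=
  ∀ (p : ℕ) [Fact p.Prime] (P : Sylow p G),
    (H : Set G) * ((P : Subgroup G) : Set G) = ((P : Subgroup G) : Set G) * (H : Set G)

/-- `H` is semipermutable in `G`: `HX = XH` for every subgroup `X` with `gcd(|H|,|X|) = 1`. -/
def IsSemipermutable (H : Subgroup G) : Prop :=
  ∀ X : Subgroup G, Nat.Coprime (Nat.card H) (Nat.card X) →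
    (H : Set G) * (X : Set G) = (X : Set G) * (H : Set G)

/-- `H` is S-semipermutable in `G`: `HQ = QH` for every Sylow `q`-subgroup `Q` of `G`
with `q` a prime not dividing `|H|`. -/
def IsSSemipermutable (H : Subgroup G) : Prop :=
  ∀ (q : ℕ) [Fact q.Prime], ¬ q ∣ Nat.card H → ∀ Q : Sylow q G,
    (H : Set G) * ((Q : Subgroup G) : Set G) = ((Q : Subgroup G) : Set G) * (H : Set G)

end Defs

/-- `G` is an SST-group: SS-permutability is a transitive relation. -/
def IsSSTGroup (G : Type*) [Group G] : Prop :=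
  ∀ H K : Subgroup G, H ≤ K → IsSSPermutable (H.subgroupOf K) → IsSSPermutable K →
    IsSSPermutable H

/-- `G` is an NSST-group: NSS-permutability is a transitive relation. -/
def IsNSSTGroup (G : Type*) [Group G] : Prop :=
  ∀ H K : Subgroup G, H ≤ K → IsNSSPermutable (H.subgroupOf K) → IsNSSPermutable K →
    IsNSSPermutable H

/-- `G` is a PST-group: S-permutability is a transitive relation. -/
def IsPSTGroup (G : Type*) [Group G] : Prop :=
  ∀ H K : Subgroup G, H ≤ K → IsSPermutable (H.subgroupOf K) → IsSPermutable K →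
    IsSPermutable H

/-- `G` is a BT-group: semipermutability is a transitive relation. -/
def IsBTGroup (G : Type*) [Group G] : Prop :=
  ∀ H K : Subgroup G, H ≤ K → IsSemipermutable (H.subgroupOf K) → IsSemipermutable K →
    IsSemipermutable H

/-!
Call `SmallerNormalizes G` the property that for primes `q < p` every `q`-element of `G` normalizes
every cyclic `p`-subgroup. A solvable BT-group has it, and it implies BT; a solvable SST-group has
it too, its subgroups of prime power order are moreover SS-permutable, and the two properties
together imply SST. So it is enough to lift both of them from `G ⧸ N''` to `G`.

In a solvable PST-group `N`, at each prime `r`, either the `r`-elements centralize `N'` or there is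
a normal `r`-complement. Hence elements of coprime orders in `N'` commute: the `r`-elements of `N'`
generate an `r`-group `W`, and `[W, W]` contains the `r`-elements of `N''`. Either `N''` has no
nontrivial `r`-elements, or for `p ≠ r` every `p`-element of `G` centralizes `W` modulo `[W, W]`,
hence centralizes `W` by coprime action, and with it the `r`-elements of `N''`. So nothing prime
to `p` is lost when passing between a `p`-subgroup of `G ⧸ N''` and the `p`-elements above it, which
is what makes both properties lift.
-/

open scoped commutatorElement

/-! ### Elements of prime power order and Sylow subgroups of subgroups -/

section PElements

variable {G H : Type*} [Group G] [Group H]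

/-- `x` is a `p`-element: its order is a power of `p`. -/
def IsPElement (p : ℕ) (x : G) : Prop := ∃ n : ℕ, x ^ p ^ n = 1

namespace IsPElement

theorem one (p : ℕ) : IsPElement p (1 : G) := ⟨0, one_pow _⟩

theorem map (f : G →* H) {p : ℕ} {x : G} (hx : IsPElement p x) : IsPElement p (f x) := by
  obtain ⟨n, hn⟩ := hx
  exact ⟨n, by rw [← map_pow, hn, map_one]⟩

theorem of_map {f : G →* H} (hf : Function.Injective f) {p : ℕ} {x : G}
    (hx : IsPElement p (f x)) : IsPElement p x := by
  obtain ⟨n, hn⟩ := hx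
  exact ⟨n, hf (by rw [map_pow, hn, map_one])⟩

theorem coe_iff {K : Subgroup G} {p : ℕ} {x : K} : IsPElement p (x : G) ↔ IsPElement p x :=
  ⟨of_map K.subtype_injective, map K.subtype⟩

theorem conj {p : ℕ} {x : G} (hx : IsPElement p x) (g : G) : IsPElement p (g * x * g⁻¹) :=
  hx.map (MulAut.conj g).toMonoidHom

theorem inv {p : ℕ} {x : G} (hx : IsPElement p x) : IsPElement p x⁻¹ := by
  obtain ⟨n, hn⟩ := hx
  exact ⟨n, by rw [inv_pow, hn, inv_one]⟩

theorem zpow {p : ℕ} {x : G} (hx : IsPElement p x) (k : ℤ) : IsPElement p (x ^ k) := by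
  obtain ⟨n, hn⟩ := hx
  exact ⟨n, by rw [← zpow_natCast, zpow_comm, zpow_natCast, hn, one_zpow]⟩

theorem mul_of_commute {p : ℕ} {x y : G} (hx : IsPElement p x) (hy : IsPElement p y)
    (h : Commute x y) : IsPElement p (x * y) := by
  obtain ⟨n, hn⟩ := hx
  obtain ⟨m, hm⟩ := hy
  refine ⟨n + m, ?_⟩
  rw [h.mul_pow, pow_add, pow_mul, hn, one_pow, one_mul, mul_comm, pow_mul, hm, one_pow]

theorem eq_one {p q : ℕ} (hp : p.Prime) (hq : q.Prime) (hpq : p ≠ q) {x : G}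
    (hxp : IsPElement p x) (hxq : IsPElement q x) : x = 1 := by
  obtain ⟨n, hn⟩ := hxp
  obtain ⟨m, hm⟩ := hxq
  exact orderOf_eq_one_iff.1 (Nat.eq_one_of_dvd_coprimes
    (Nat.Coprime.pow n m ((Nat.coprime_primes hp hq).2 hpq)) (orderOf_dvd_of_pow_eq_one hn)
    (orderOf_dvd_of_pow_eq_one hm))

theorem isPGroup_zpowers {p : ℕ} {x : G} (hx : IsPElement p x) :
    IsPGroup p (Subgroup.zpowers x) := by
  rintro ⟨_, k, rfl⟩
  exact coe_iff.1 (hx.zpow k)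

theorem of_mem {p : ℕ} {P : Subgroup G} (hP : IsPGroup p P) {x : G} (hx : x ∈ P) :
    IsPElement p x :=
  coe_iff (x := ⟨x, hx⟩).2 (hP ⟨x, hx⟩)

theorem mem_of_mem_zpowers {p : ℕ} {x y : G} (hx : IsPElement p x)
    (hy : y ∈ Subgroup.zpowers x) : IsPElement p y :=
  of_mem hx.isPGroup_zpowers hy

theorem exists_orderOf_eq {p : ℕ} (hp : p.Prime) {x : G} (hx : IsPElement p x) :
    ∃ n, orderOf x = p ^ n := by
  obtain ⟨n, hn⟩ := hx
  obtain ⟨m, -, hm⟩ := (Nat.dvd_prime_pow hp).1 (orderOf_dvd_of_pow_eq_one hn)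
  exact ⟨m, hm⟩

theorem dvd_of_zpow_eq_one {p : ℕ} (hp : p.Prime) {x : G} (hx : IsPElement p x) (hx1 : x ≠ 1)
    {k : ℤ} (hk : x ^ k = 1) : (p : ℤ) ∣ k := by
  have := Fact.mk hp
  have hdvd := hx.isPGroup_zpowers.dvd_orderOf (g := ⟨x, Subgroup.mem_zpowers x⟩)
    (fun h => hx1 (congrArg Subtype.val h))
  rw [Subgroup.orderOf_mk] at hdvd
  exact (Int.natCast_dvd_natCast.2 hdvd).trans (orderOf_dvd_iff_zpow_eq_one.2 hk)

theorem mem_zpowers_zpow {p : ℕ} (hp : p.Prime) {x : G} (hx : IsPElement p x) {k : ℤ}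
    (hk : ¬ (p : ℤ) ∣ k) : x ∈ Subgroup.zpowers (x ^ k) := by
  obtain ⟨n, hn⟩ := hx.exists_orderOf_eq hp
  rw [mem_zpowers_zpow_iff, hn, ← Int.isCoprime_iff_gcd_eq_one]
  push_cast
  exact ((Nat.prime_iff_prime_int.1 hp).coprime_iff_not_dvd.2 hk).symm.pow_right

theorem dvd_card {p : ℕ} (hp : p.Prime) {K : Subgroup G} {x : G} (hxK : x ∈ K)
    (hx : IsPElement p x) (hx1 : x ≠ 1) : p ∣ Nat.card K := by
  have hpow : x ^ Nat.card K = 1 := congrArg Subtype.val (pow_card_eq_one' (x := (⟨x, hxK⟩ : K)))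
  exact Int.natCast_dvd_natCast.1 (hx.dvd_of_zpow_eq_one hp hx1 (by rw [zpow_natCast, hpow]))

theorem exists_lift [Finite G] {f : G →* H} (hf : Function.Surjective f) {p : ℕ} (hp : p.Prime)
    {z : H} (hz : IsPElement p z) : ∃ x : G, IsPElement p x ∧ f x = z := by
  obtain ⟨g, rfl⟩ := hf z
  obtain ⟨k, hk⟩ := hz
  obtain ⟨a, m, hm, hord⟩ := Nat.exists_eq_pow_mul_and_not_dvd (orderOf_pos g).ne' p hp.ne_one
  have hcoprime : Nat.Coprime m (p ^ k) :=
    (Nat.Coprime.pow_left k (hp.coprime_iff_not_dvd.2 hm)).symm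
  obtain ⟨c, hc0, hc1⟩ := Nat.chineseRemainder hcoprime 0 1
  refine ⟨g ^ c, ⟨a, ?_⟩, ?_⟩
  · rw [← pow_mul]
    apply orderOf_dvd_iff_pow_eq_one.1
    rw [hord, mul_comm]
    exact mul_dvd_mul_right (Nat.modEq_zero_iff_dvd.1 hc0) _
  · have hc : c ≡ 1 [MOD orderOf (f g)] := hc1.of_dvd (orderOf_dvd_of_pow_eq_one hk)
    rw [map_pow, pow_eq_pow_iff_modEq.2 hc, pow_one]

/-- The `p`-group `⟨x⟩` acts by conjugation on the coset `vS`, whose size is prime to `p`. -/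
theorem exists_commute_mul [Finite G] {p : ℕ} (hp : p.Prime) {x v : G} (hx : IsPElement p x)
    {S : Subgroup G} (hS : ¬ p ∣ Nat.card S) (hxS : ∀ s ∈ S, x * s * x⁻¹ ∈ S)
    (hv : v⁻¹ * (x * v * x⁻¹) ∈ S) : ∃ s ∈ S, Commute x (v * s) := by
  have := Fact.mk hp
  let C : Set G := v • (S : Set G)
  have hstab : ConjAct.toConjAct x ∈ MulAction.stabilizer (ConjAct G) C := by
    rw [MulAction.mem_stabilizer_set' (Set.toFinite C)]
    rintro _ ⟨s, hs, rfl⟩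
    refine ⟨v⁻¹ * (x * v * x⁻¹) * (x * s * x⁻¹), S.mul_mem hv (hxS s hs), ?_⟩
    simp only [ConjAct.smul_def, ConjAct.ofConjAct_toConjAct, smul_eq_mul]
    group
  let y : MulAction.stabilizer (ConjAct G) C := ⟨ConjAct.toConjAct x, hstab⟩
  have hy : IsPElement p y := coe_iff.1 (hx.map ConjAct.toConjAct.toMonoidHom)
  have hcard : Nat.card C = Nat.card S := by
    rw [Nat.card_coe_set_eq, Set.ncard_smul_set, ← Nat.card_coe_set_eq]; rfl
  obtain ⟨⟨_, s, hs, rfl⟩, hfix⟩ :=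
    hy.isPGroup_zpowers.nonempty_fixed_point_of_prime_not_dvd_card C (by rwa [hcard])
  have hconj : x * (v * s) * x⁻¹ = v * s :=
    congrArg Subtype.val (hfix ⟨y, Subgroup.mem_zpowers y⟩)
  exact ⟨s, hs, mul_inv_eq_iff_eq_mul.1 hconj⟩

end IsPElement

/-- `P` is a Sylow `p`-subgroup of `K`, where both are subgroups of a common group. -/
structure IsSylowIn (p : ℕ) (P K : Subgroup G) : Prop where
  le : P ≤ K
  isPGroup : IsPGroup p P
  not_dvd : ¬ p ∣ P.relIndex K

namespace IsSylowIn

theorem of_sylow [Finite G] {p : ℕ} [Fact p.Prime] {K : Subgroup G} (P : Sylow p K) :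
    IsSylowIn p (P.toSubgroup.map K.subtype) K where
  le := Subgroup.map_subtype_le _
  isPGroup := P.2.map _
  not_dvd := by
    rw [Subgroup.relIndex, ← Subgroup.comap_subtype,
      Subgroup.comap_map_eq_self_of_injective K.subtype_injective]
    exact P.not_dvd_index

theorem exists_sylow {p : ℕ} [Fact p.Prime] {P K : Subgroup G} (h : IsSylowIn p P K) :
    ∃ S : Sylow p K, S.toSubgroup.map K.subtype = P :=
  ⟨IsPGroup.toSylow (P := P.subgroupOf K) h.isPGroup.comap_subtype h.not_dvd,
    Subgroup.map_subgroupOf_eq_of_le h.le⟩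

theorem exists_ge [Finite G] {p : ℕ} (hp : p.Prime) {A K : Subgroup G} (hA : IsPGroup p A)
    (hAK : A ≤ K) : ∃ P, IsSylowIn p P K ∧ A ≤ P := by
  have := Fact.mk hp
  obtain ⟨S, hS⟩ := (hA.comap_subtype (K := K)).exists_le_sylow
  exact ⟨_, of_sylow S, fun a ha => ⟨⟨a, hAK ha⟩, hS ha, rfl⟩⟩

theorem eq_of_le [Finite G] {p : ℕ} (hp : p.Prime) {P Q K : Subgroup G} (h : IsSylowIn p P K)
    (hQ : IsPGroup p Q) (hQK : Q ≤ K) (hPQ : P ≤ Q) : Q = P := by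
  have := Fact.mk hp
  refine le_antisymm (Subgroup.relIndex_eq_one.1 ?_) hPQ
  obtain ⟨n, hn⟩ : ∃ n, P.relIndex Q = p ^ n := hQ.index (P.subgroupOf Q)
  have hdvd : P.relIndex Q ∣ P.relIndex K :=
    ⟨_, (Subgroup.relIndex_mul_relIndex P Q K hPQ hQK).symm⟩
  cases n with
  | zero => rwa [pow_zero] at hn
  | succ n => exact absurd ((dvd_pow_self p n.succ_ne_zero).trans (hn ▸ hdvd)) h.not_dvd

theorem trans {p : ℕ} (hp : p.Prime) {P K L : Subgroup G} (h : IsSylowIn p P K)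
    (hKL : K ≤ L) (hd : ¬ p ∣ K.relIndex L) : IsSylowIn p P L where
  le := h.le.trans hKL
  isPGroup := h.isPGroup
  not_dvd := by
    rw [← Subgroup.relIndex_mul_relIndex P K L h.le hKL]
    exact hp.not_dvd_mul h.not_dvd hd

theorem le_of_normal [Finite G] {p : ℕ} (hp : p.Prime) {P K B : Subgroup G}
    (h : IsSylowIn p P K) [B.Normal] (hB : IsPGroup p B) (hBK : B ≤ K) : B ≤ P :=
  sup_eq_left.1
    (h.eq_of_le hp (h.isPGroup.to_sup_of_normal_right hB) (sup_le h.le hBK) le_sup_left)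

end IsSylowIn

theorem exists_isSylowIn [Finite G] {p : ℕ} (hp : p.Prime) (K : Subgroup G) :
    ∃ P, IsSylowIn p P K := by
  obtain ⟨P, hP, -⟩ := IsSylowIn.exists_ge hp IsPGroup.of_bot (bot_le (a := K))
  exact ⟨P, hP⟩

theorem le_of_forall_isSylowIn_le {A B : Subgroup G}
    (h : ∀ p : ℕ, p.Prime → ∃ P, IsSylowIn p P A ∧ P ≤ B) : A ≤ B := by
  refine Subgroup.relIndex_eq_one.1 (Nat.eq_one_iff_not_exists_prime_dvd.2 fun p hp hd => ?_)
  obtain ⟨P, hP, hPB⟩ := h p hp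
  exact hP.not_dvd (hd.trans (Subgroup.relIndex_dvd_of_le_left A hPB))

theorem le_of_forall_isPElement_mem [Finite G] {A B : Subgroup G}
    (h : ∀ p : ℕ, p.Prime → ∀ x ∈ A, IsPElement p x → x ∈ B) : A ≤ B := by
  refine le_of_forall_isSylowIn_le fun p hp => ?_
  obtain ⟨P, hP⟩ := exists_isSylowIn hp A
  exact ⟨P, hP, fun x hx => h p hp x (hP.le hx) (IsPElement.of_mem hP.isPGroup hx)⟩

end PElements

/-! ### Permutability relative to a subgroup -/

section Permutability

variable {G : Type*} [Group G]

/-- The subgroups `A` and `B` permute, that is `AB = BA`. Only `BA ⊆ AB` is required, the other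
inclusion being obtained by taking inverses. -/
def Permutes (A B : Subgroup G) : Prop :=
  ∀ a ∈ A, ∀ b ∈ B, ∃ a' ∈ A, ∃ b' ∈ B, b * a = a' * b'

theorem Permutes.symm {A B : Subgroup G} (h : Permutes A B) : Permutes B A := by
  intro b hb a ha
  obtain ⟨a', ha', b', hb', e⟩ := h a⁻¹ (A.inv_mem ha) b⁻¹ (B.inv_mem hb)
  refine ⟨b'⁻¹, B.inv_mem hb', a'⁻¹, A.inv_mem ha', ?_⟩
  rw [← mul_inv_rev, ← e, mul_inv_rev, inv_inv, inv_inv]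

theorem permutes_iff {A B : Subgroup G} :
    Permutes A B ↔ (A : Set G) * (B : Set G) = (B : Set G) * (A : Set G) := by
  constructor
  · intro h
    apply subset_antisymm
    · rintro _ ⟨a, ha, b, hb, rfl⟩
      obtain ⟨b', hb', a', ha', e⟩ := h.symm b hb a ha
      exact ⟨b', hb', a', ha', e.symm⟩
    · rintro _ ⟨b, hb, a, ha, rfl⟩
      obtain ⟨a', ha', b', hb', e⟩ := h a ha b hb
      exact ⟨a', ha', b', hb', e.symm⟩
  · intro h a ha b hb
    obtain ⟨a', ha', b', hb', e⟩ : b * a ∈ (A : Set G) * (B : Set G) := h ▸ ⟨b, hb, a, ha, rfl⟩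
    exact ⟨a', ha', b', hb', e.symm⟩

theorem Permutes.of_normalizes {A B : Subgroup G} (h : ∀ b ∈ B, ∀ a ∈ A, b * a * b⁻¹ ∈ A) :
    Permutes A B := fun a ha b hb =>
  ⟨b * a * b⁻¹, h b hb a ha, b, hb, by group⟩

theorem Permutes.of_normal (A B : Subgroup G) [hA : A.Normal] : Permutes A B :=
  .of_normalizes fun b _ a ha => hA.conj_mem a ha b

theorem Permutes.of_le {A B : Subgroup G} (h : A ≤ B) : Permutes A B := fun a ha b hb =>
  ⟨1, A.one_mem, b * a, B.mul_mem hb (h ha), by group⟩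

theorem Permutes.inf_right {A B T : Subgroup G} (h : Permutes A B) (hAT : A ≤ T) :
    Permutes A (B ⊓ T) := by
  rintro a ha b ⟨hb, hbT⟩
  obtain ⟨a', ha', b', hb', e⟩ := h a ha b hb
  have hb'T : b' ∈ T := by
    rw [← inv_mul_cancel_left a' b', ← e]
    exact T.mul_mem (T.inv_mem (hAT ha')) (T.mul_mem hbT (hAT ha))
  exact ⟨a', ha', b', ⟨hb', hb'T⟩, e⟩

theorem Permutes.conj_mem {A B N : Subgroup G} (h : Permutes A B) [hN : N.Normal] (hA : A ≤ N)
    (hNB : ∀ x ∈ N, x ∈ B → x = 1) {a b : G} (ha : a ∈ A) (hb : b ∈ B) : b * a * b⁻¹ ∈ A := by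
  obtain ⟨a', ha', b', hb', e⟩ := h a ha b hb
  have hdecomp : b * a * b⁻¹ = a' * (b' * b⁻¹) := by rw [e, mul_assoc]
  have hb'b : b' * b⁻¹ = 1 := by
    refine hNB _ ?_ (B.mul_mem hb' (B.inv_mem hb))
    rw [← inv_mul_cancel_left a' (b' * b⁻¹), ← hdecomp]
    exact N.mul_mem (N.inv_mem (hA ha')) (hN.conj_mem a (hA ha) b)
  rwa [hdecomp, hb'b, mul_one]

section Maps

variable {G' : Type*} [Group G'] {f : G →* G'}

theorem Permutes.map {A B : Subgroup G} (h : Permutes A B) (f : G →* G') :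
    Permutes (A.map f) (B.map f) := by
  rintro _ ⟨a, ha, rfl⟩ _ ⟨b, hb, rfl⟩
  obtain ⟨a', ha', b', hb', e⟩ := h a ha b hb
  exact ⟨f a', ⟨a', ha', rfl⟩, f b', ⟨b', hb', rfl⟩, by rw [← map_mul, e, map_mul]⟩

theorem Permutes.comap {A : Subgroup G'} {B : Subgroup G} (h : Permutes A (B.map f)) :
    Permutes (A.comap f) B := by
  intro a ha b hb
  obtain ⟨a', ha', _, ⟨b', hb', rfl⟩, e⟩ := h (f a) ha (f b) ⟨b, hb, rfl⟩
  refine ⟨b * a * b'⁻¹, ?_, b', hb', by group⟩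
  rwa [Subgroup.mem_comap, map_mul, map_mul, e, map_inv, mul_inv_cancel_right]

theorem permutes_map_iff (hf : Function.Injective f) {A B : Subgroup G} :
    Permutes (A.map f) (B.map f) ↔ Permutes A B := by
  refine ⟨fun h => ?_, fun h => h.map f⟩
  rw [← Subgroup.comap_map_eq_self_of_injective hf A]
  exact h.comap

theorem IsSylowIn.map {p : ℕ} {P K : Subgroup G} (h : IsSylowIn p P K) (f : G →* G') :
    IsSylowIn p (P.map f) (K.map f) where
  le := Subgroup.map_mono h.le
  isPGroup := h.isPGroup.map f
  not_dvd hd := by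
    rw [← Subgroup.relIndex_comap] at hd
    exact h.not_dvd (hd.trans (Subgroup.relIndex_dvd_of_le_left _ (Subgroup.le_comap_map _ _)))

theorem IsSylowIn.exists_map_eq [Finite G] [Finite G'] {p : ℕ} (hp : p.Prime) {K : Subgroup G}
    {P' : Subgroup G'} (h : IsSylowIn p P' (K.map f)) : ∃ P, IsSylowIn p P K ∧ P.map f = P' := by
  obtain ⟨P, hP⟩ := exists_isSylowIn hp (P'.comap f ⊓ K)
  have hmap : (P'.comap f ⊓ K).map f = P' := by
    refine le_antisymm ((Subgroup.map_mono inf_le_left).trans (Subgroup.map_comap_le f P'))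
      fun y hy => ?_
    obtain ⟨x, hx, rfl⟩ := h.le hy
    exact ⟨x, ⟨hy, hx⟩, rfl⟩
  refine ⟨P, hP.trans hp inf_le_right ?_, ?_⟩
  · rw [Subgroup.inf_relIndex_right, Subgroup.relIndex_comap]
    exact h.not_dvd
  · have hPf := hP.map f
    rw [hmap] at hPf
    exact (hPf.eq_of_le hp h.isPGroup le_rfl hPf.le).symm

/-- Schur–Zassenhaus provides a complement of the kernel, which `f` maps isomorphically. -/
theorem exists_map_eq_and_card_eq (hf : Function.Surjective f)
    (hker : Nat.Coprime (Nat.card f.ker) f.ker.index) (X' : Subgroup G') :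
    ∃ X : Subgroup G, X.map f = X' ∧ Nat.card X = Nat.card X' := by
  obtain ⟨T, hT⟩ := Subgroup.exists_right_complement'_of_coprime hker
  let e : T →* G' := f.comp T.subtype
  have he_inj : Function.Injective e := by
    refine (injective_iff_map_eq_one e).2 fun t ht => Subtype.ext ?_
    exact Subgroup.disjoint_def.1 hT.disjoint ht t.2
  have he_surj : Function.Surjective e := fun x' => by
    obtain ⟨g, rfl⟩ := hf x'
    obtain ⟨⟨n, t⟩, rfl⟩ := hT.2 g
    have hn : f n = 1 := n.2
    exact ⟨t, by simp [e, hn]⟩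
  have hX' := Subgroup.map_comap_eq_self_of_surjective he_surj X'
  refine ⟨(X'.comap e).map T.subtype, ?_, ?_⟩
  · rw [Subgroup.map_map]
    exact hX'
  · rw [Subgroup.card_map_of_injective T.subtype_injective,
      ← Subgroup.card_map_of_injective he_inj, hX']

theorem card_comap_of_surjective (hf : Function.Surjective f) (Y : Subgroup G') :
    Nat.card (Y.comap f) = Nat.card f.ker * Nat.card Y := by
  have hY := Subgroup.relIndex_ker (K := Y.comap f) f
  rw [Subgroup.map_comap_eq_self_of_surjective hf] at hY
  rw [← hY, ← Subgroup.relIndex_bot_left, ← Subgroup.relIndex_bot_left,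
    Subgroup.relIndex_mul_relIndex _ _ _ bot_le (MonoidHom.ker_le_comap f Y)]

end Maps

/-- `H` permutes with the Sylow subgroups of `K`; for `H ≤ K` this says that `H` is S-permutable in
`K`. -/
def SPermIn (H K : Subgroup G) : Prop :=
  ∀ p : ℕ, p.Prime → ∀ P, IsSylowIn p P K → Permutes H P

/-- `H` is SS-permutable in `K`, where `H ≤ K` are subgroups of a common group: `K = HL` for some
`L ≤ K` such that `H` permutes with the Sylow subgroups of `L`. -/
def SSPermIn (H K : Subgroup G) : Prop :=
  ∃ L ≤ K, (∀ k ∈ K, ∃ h ∈ H, ∃ l ∈ L, k = h * l) ∧ SPermIn H L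

/-- `H` is semipermutable in `K`, where `H ≤ K` are subgroups of a common group. -/
def SemiIn (H K : Subgroup G) : Prop :=
  ∀ X ≤ K, Nat.Coprime (Nat.card H) (Nat.card X) → Permutes H X

theorem SPermIn.of_normal (H K : Subgroup G) [H.Normal] : SPermIn H K :=
  fun _ _ P _ => Permutes.of_normal H P

theorem SPermIn.ssPermIn {H K : Subgroup G} (h : SPermIn H K) : SSPermIn H K :=
  ⟨K, le_rfl, fun k hk => ⟨1, H.one_mem, k, hk, (one_mul k).symm⟩, h⟩

theorem SemiIn.of_normal (H K : Subgroup G) [H.Normal] : SemiIn H K :=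
  fun X _ _ => Permutes.of_normal H X

theorem SemiIn.mono {H K L : Subgroup G} (h : SemiIn H L) (hKL : K ≤ L) : SemiIn H K :=
  fun X hX hc => h X (hX.trans hKL) hc

theorem SPermIn.inf [Finite G] {H K T : Subgroup G} (h : SPermIn H K) (hHT : H ≤ T) :
    SPermIn H (K ⊓ T) := by
  intro p hp Q hQ
  obtain ⟨P, hP, hQP⟩ := IsSylowIn.exists_ge hp hQ.isPGroup (hQ.le.trans inf_le_left)
  have hPT : P ⊓ T = Q := hQ.eq_of_le hp hP.isPGroup.to_inf_left (inf_le_inf_right T hP.le)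
    (le_inf hQP (hQ.le.trans inf_le_right))
  exact hPT ▸ (h p hp P hP).inf_right hHT

theorem SPermIn.mono [Finite G] {H K T : Subgroup G} (h : SPermIn H K) (hHT : H ≤ T)
    (hTK : T ≤ K) : SPermIn H T := by
  simpa only [inf_eq_right.2 hTK] using h.inf hHT

theorem SSPermIn.mono [Finite G] {H K T : Subgroup G} (h : SSPermIn H K) (hHT : H ≤ T)
    (hTK : T ≤ K) : SSPermIn H T := by
  obtain ⟨L, -, hsup, hperm⟩ := h
  refine ⟨L ⊓ T, inf_le_right, fun t ht => ?_, hperm.inf hHT⟩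
  obtain ⟨a, ha, l, hl, rfl⟩ := hsup t (hTK ht)
  exact ⟨a, ha, l, ⟨hl, (Subgroup.mul_mem_cancel_left T (hHT ha)).1 ht⟩, rfl⟩

section Transport

variable {G' : Type*} [Group G'] {f : G →* G'}

theorem sPermIn_map [Finite G] [Finite G'] (hf : Function.Injective f) {H K : Subgroup G} :
    SPermIn (H.map f) (K.map f) ↔ SPermIn H K := by
  constructor
  · intro h p hp P hP
    exact (permutes_map_iff hf).1 (h p hp _ (hP.map f))
  · intro h p hp P' hP'
    obtain ⟨P, hP, rfl⟩ := hP'.exists_map_eq hp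
    exact (h p hp P hP).map f

theorem ssPermIn_map [Finite G] [Finite G'] (hf : Function.Injective f) {H K : Subgroup G} :
    SSPermIn (H.map f) (K.map f) ↔ SSPermIn H K := by
  constructor
  · rintro ⟨L', hL', hsup, hperm⟩
    obtain ⟨L, rfl⟩ : ∃ L : Subgroup G, L.map f = L' :=
      ⟨L'.comap f, Subgroup.map_comap_eq_self (hL'.trans (Subgroup.map_le_range f K))⟩
    refine ⟨L, (Subgroup.map_le_map_iff_of_injective hf).1 hL', fun k hk => ?_,
      (sPermIn_map hf).1 hperm⟩
    obtain ⟨_, ⟨h, hh, rfl⟩, _, ⟨l, hl, rfl⟩, e⟩ := hsup (f k) (Subgroup.mem_map_of_mem f hk)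
    exact ⟨h, hh, l, hl, hf (by rw [e, map_mul])⟩
  · rintro ⟨L, hL, hsup, hperm⟩
    refine ⟨L.map f, Subgroup.map_mono hL, ?_, (sPermIn_map hf).2 hperm⟩
    rintro _ ⟨k, hk, rfl⟩
    obtain ⟨h, hh, l, hl, rfl⟩ := hsup k hk
    exact ⟨f h, ⟨h, hh, rfl⟩, f l, ⟨l, hl, rfl⟩, map_mul f h l⟩

theorem semiIn_map (hf : Function.Injective f) {H K : Subgroup G} :
    SemiIn (H.map f) (K.map f) ↔ SemiIn H K := by
  constructor
  · intro h X hX hc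
    refine (permutes_map_iff hf).1 (h _ (Subgroup.map_mono hX) ?_)
    rwa [Subgroup.card_map_of_injective hf, Subgroup.card_map_of_injective hf]
  · intro h X' hX' hc
    obtain ⟨X, rfl⟩ : ∃ X : Subgroup G, X.map f = X' :=
      ⟨X'.comap f, Subgroup.map_comap_eq_self (hX'.trans (Subgroup.map_le_range f K))⟩
    rw [Subgroup.card_map_of_injective hf, Subgroup.card_map_of_injective hf] at hc
    exact (h X ((Subgroup.map_le_map_iff_of_injective hf).1 hX') hc).map f

theorem isSPermutable_iff [Finite G] {H : Subgroup G} : IsSPermutable H ↔ SPermIn H ⊤ := by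
  constructor
  · intro h p hp P hP
    have := Fact.mk hp
    exact permutes_iff.2
      (h p (IsPGroup.toSylow hP.isPGroup (by simpa using hP.not_dvd)))
  · intro h p _ P
    exact permutes_iff.1 (h p Fact.out P ⟨le_top, P.2, by simpa using P.not_dvd_index⟩)

theorem isSSPermutable_iff [Finite G] {H : Subgroup G} : IsSSPermutable H ↔ SSPermIn H ⊤ := by
  constructor
  · rintro ⟨K, h, hp⟩
    refine ⟨K, le_top, fun k _ => ?_, fun p hp' P hP => ?_⟩
    · obtain ⟨a, ha, b, hb, e⟩ : k ∈ (H : Set G) * (K : Set G) := h ▸ Set.mem_univ k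
      exact ⟨a, ha, b, hb, e.symm⟩
    · have := Fact.mk hp'
      obtain ⟨S, rfl⟩ := hP.exists_sylow
      exact permutes_iff.2 (hp p S)
  · rintro ⟨K, -, h, hp⟩
    refine ⟨K, Set.eq_univ_of_forall fun k => ?_, fun p _ P => ?_⟩
    · obtain ⟨a, ha, b, hb, e⟩ := h k trivial
      exact ⟨a, ha, b, hb, e.symm⟩
    · exact permutes_iff.1 (hp p Fact.out _ (IsSylowIn.of_sylow P))

theorem isSemipermutable_iff {H : Subgroup G} : IsSemipermutable H ↔ SemiIn H ⊤ :=
  ⟨fun h X _ hc => permutes_iff.2 (h X hc), fun h X hc => permutes_iff.1 (h X le_top hc)⟩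

theorem isPSTGroup_iff [Finite G] : IsPSTGroup G ↔
    ∀ H K : Subgroup G, H ≤ K → SPermIn H K → SPermIn K ⊤ → SPermIn H ⊤ := by
  refine forall₂_congr fun H K => forall_congr' fun h => ?_
  rw [isSPermutable_iff, isSPermutable_iff, isSPermutable_iff,
    ← sPermIn_map K.subtype_injective, Subgroup.map_subgroupOf_eq_of_le h, ← K.subtype.range_eq_map,
    K.range_subtype]

theorem isSSTGroup_iff [Finite G] : IsSSTGroup G ↔
    ∀ H K : Subgroup G, H ≤ K → SSPermIn H K → SSPermIn K ⊤ → SSPermIn H ⊤ := by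
  refine forall₂_congr fun H K => forall_congr' fun h => ?_
  rw [isSSPermutable_iff, isSSPermutable_iff, isSSPermutable_iff,
    ← ssPermIn_map K.subtype_injective, Subgroup.map_subgroupOf_eq_of_le h,
    ← K.subtype.range_eq_map, K.range_subtype]

theorem isBTGroup_iff : IsBTGroup G ↔
    ∀ H K : Subgroup G, H ≤ K → SemiIn H K → SemiIn K ⊤ → SemiIn H ⊤ := by
  refine forall₂_congr fun H K => forall_congr' fun h => ?_
  rw [isSemipermutable_iff, isSemipermutable_iff, isSemipermutable_iff,
    ← semiIn_map K.subtype_injective, Subgroup.map_subgroupOf_eq_of_le h,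
    ← K.subtype.range_eq_map, K.range_subtype]

theorem IsPSTGroup.subgroup_of_normal [Finite G] (h : IsPSTGroup G) (T : Subgroup G) [T.Normal] :
    IsPSTGroup T := by
  rw [isPSTGroup_iff] at h ⊢
  simp only [← sPermIn_map T.subtype_injective, ← MonoidHom.range_eq_map, T.range_subtype]
  intro H K hHK hH hK
  have hK' := h _ T (Subgroup.map_subtype_le K) hK (SPermIn.of_normal T ⊤)
  exact (h _ _ (Subgroup.map_mono hHK) hH hK').mono (Subgroup.map_subtype_le H) le_top

theorem IsSSTGroup.subgroup_of_normal [Finite G] (h : IsSSTGroup G) (T : Subgroup G) [T.Normal] :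
    IsSSTGroup T := by
  rw [isSSTGroup_iff] at h ⊢
  simp only [← ssPermIn_map T.subtype_injective, ← MonoidHom.range_eq_map, T.range_subtype]
  intro H K hHK hH hK
  have hK' := h _ T (Subgroup.map_subtype_le K) hK (SPermIn.of_normal T ⊤).ssPermIn
  exact (h _ _ (Subgroup.map_mono hHK) hH hK').mono (Subgroup.map_subtype_le H) le_top

theorem IsBTGroup.subgroup_of_normal (h : IsBTGroup G) (T : Subgroup G) [T.Normal] :
    IsBTGroup T := by
  rw [isBTGroup_iff] at h ⊢
  simp only [← semiIn_map T.subtype_injective, ← MonoidHom.range_eq_map, T.range_subtype]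
  intro H K hHK hH hK
  have hK' := h _ T (Subgroup.map_subtype_le K) hK (SemiIn.of_normal T ⊤)
  exact (h _ _ (Subgroup.map_mono hHK) hH hK').mono le_top

theorem SPermIn.comap (hf : Function.Surjective f) {H K : Subgroup G'} (h : SPermIn H K) :
    SPermIn (H.comap f) (K.comap f) := by
  intro p hp P hP
  have hPf := hP.map f
  rw [Subgroup.map_comap_eq_self_of_surjective hf] at hPf
  exact (h p hp _ hPf).comap

theorem SPermIn.of_comap [Finite G] [Finite G'] (hf : Function.Surjective f)
    {H : Subgroup G'} {K : Subgroup G} (h : SPermIn (H.comap f) K) : SPermIn H (K.map f) := by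
  intro p hp P' hP'
  obtain ⟨P, hP, rfl⟩ := hP'.exists_map_eq hp
  simpa only [Subgroup.map_comap_eq_self_of_surjective hf] using (h p hp P hP).map f

theorem SSPermIn.comap (hf : Function.Surjective f) {H K : Subgroup G'} (h : SSPermIn H K) :
    SSPermIn (H.comap f) (K.comap f) := by
  obtain ⟨L, hL, hsup, hperm⟩ := h
  refine ⟨L.comap f, Subgroup.comap_mono hL, fun k hk => ?_, hperm.comap hf⟩
  obtain ⟨h, hh, l, hl, e⟩ := hsup (f k) hk
  obtain ⟨g, rfl⟩ := hf l
  refine ⟨k * g⁻¹, ?_, g, hl, by group⟩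
  rwa [Subgroup.mem_comap, map_mul, e, map_inv, mul_inv_cancel_right]

theorem SSPermIn.of_comap [Finite G] [Finite G'] (hf : Function.Surjective f)
    {H : Subgroup G'} {K : Subgroup G} (h : SSPermIn (H.comap f) K) : SSPermIn H (K.map f) := by
  obtain ⟨L, hL, hsup, hperm⟩ := h
  refine ⟨L.map f, Subgroup.map_mono hL, ?_, hperm.of_comap hf⟩
  rintro _ ⟨k, hk, rfl⟩
  obtain ⟨h, hh, l, hl, rfl⟩ := hsup k hk
  exact ⟨f h, hh, f l, ⟨l, hl, rfl⟩, map_mul f h l⟩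

theorem SemiIn.comap (hf : Function.Surjective f) {H K : Subgroup G'} (h : SemiIn H K) :
    SemiIn (H.comap f) (K.comap f) := by
  intro X hX hcoprime
  refine (h _ (Subgroup.map_le_iff_le_comap.2 hX) ?_).comap
  have hH := Subgroup.card_map_dvd (H.comap f) f
  rw [Subgroup.map_comap_eq_self_of_surjective hf] at hH
  exact (hcoprime.coprime_dvd_left hH).coprime_dvd_right (Subgroup.card_map_dvd X f)

theorem SemiIn.of_comap (hf : Function.Surjective f)
    (hker : Nat.Coprime (Nat.card f.ker) f.ker.index) {H : Subgroup G'}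
    (h : SemiIn (H.comap f) ⊤) : SemiIn H ⊤ := by
  intro X' _ hcoprime
  obtain ⟨X, rfl, hX⟩ := exists_map_eq_and_card_eq hf hker X'
  have hkerX : Nat.Coprime (Nat.card f.ker) (Nat.card X) := by
    refine hker.coprime_dvd_right ?_
    rw [hX, Subgroup.index_ker, MonoidHom.range_eq_top.2 hf, Subgroup.card_top]
    exact Subgroup.card_subgroup_dvd_card _
  have hperm := h X le_top (by
    rw [card_comap_of_surjective hf]
    exact hkerX.mul_left (hX ▸ hcoprime))
  simpa only [Subgroup.map_comap_eq_self_of_surjective hf] using hperm.map f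

theorem IsPSTGroup.of_surjective [Finite G] [Finite G']
    (h : IsPSTGroup G) (hf : Function.Surjective f) : IsPSTGroup G' := by
  rw [isPSTGroup_iff] at h ⊢
  intro H K hHK hH hK
  have hG := h _ _ (Subgroup.comap_mono hHK) (hH.comap hf) (hK.comap hf)
  exact Subgroup.map_top_of_surjective f hf ▸ hG.of_comap hf

theorem IsSSTGroup.of_surjective [Finite G] [Finite G']
    (h : IsSSTGroup G) (hf : Function.Surjective f) : IsSSTGroup G' := by
  rw [isSSTGroup_iff] at h ⊢
  intro H K hHK hH hK
  have hG := h _ _ (Subgroup.comap_mono hHK) (hH.comap hf) (hK.comap hf)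
  exact Subgroup.map_top_of_surjective f hf ▸ hG.of_comap hf

theorem IsBTGroup.of_surjective (h : IsBTGroup G) (hf : Function.Surjective f)
    (hker : Nat.Coprime (Nat.card f.ker) f.ker.index) : IsBTGroup G' := by
  rw [isBTGroup_iff] at h ⊢
  intro H K hHK hH hK
  exact (h _ _ (Subgroup.comap_mono hHK) (hH.comap hf) (hK.comap hf)).of_comap hf hker

end Transport

end Permutability

/-! ### Coprime automorphisms normalizing cyclic subgroups -/

section CoprimeAction

variable {G : Type*} [Group G]

theorem commutatorElement_zpow_right {x g : G} (hg : Commute g ⁅x, g⁆) (j : ℤ) :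
    ⁅x, g ^ j⁆ = ⁅x, g⁆ ^ j := by
  have hconj : x * g * x⁻¹ = ⁅x, g⁆ * g := by rw [commutatorElement_def, inv_mul_cancel_right]
  rw [commutatorElement_def x (g ^ j), ← conj_zpow, hconj, hg.symm.mul_zpow, mul_inv_cancel_right]

theorem commutatorElement_zpow_left {x g : G} (hx : Commute x ⁅x, g⁆) (i : ℤ) :
    ⁅x ^ i, g⁆ = ⁅x, g⁆ ^ i := by
  have hx' : Commute x ⁅g, x⁆ := by
    rw [← commutatorElement_inv]
    exact hx.inv_right
  rw [← commutatorElement_inv, commutatorElement_zpow_right hx', ← inv_zpow, commutatorElement_inv]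

theorem commutatorElement_zpow_zpow {x g : G} (hx : Commute x ⁅x, g⁆) (hg : Commute g ⁅x, g⁆)
    (i j : ℤ) : ⁅x ^ i, g ^ j⁆ = ⁅x, g⁆ ^ (i * j) := by
  have hgi : Commute g ⁅x ^ i, g⁆ := by
    rw [commutatorElement_zpow_left hx]
    exact hg.zpow_right i
  rw [commutatorElement_zpow_right hgi, commutatorElement_zpow_left hx, ← zpow_mul]

theorem conj_zpow_eq {x y : G} {i : ℤ} (h : x ^ i = y * x * y⁻¹) (k : ℤ) :
    y * x ^ k * y⁻¹ = x ^ (i * k) := by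
  rw [← conj_zpow, ← h, zpow_mul]

theorem pow_conj_eq {x y : G} {i : ℤ} (h : x ^ i = y * x * y⁻¹) (n : ℕ) :
    y ^ n * x * (y ^ n)⁻¹ = x ^ (i ^ n) := by
  induction n with
  | zero => simp
  | succ n ih =>
    calc y ^ (n + 1) * x * (y ^ (n + 1))⁻¹ = y * (y ^ n * x * (y ^ n)⁻¹) * y⁻¹ := by
          rw [pow_succ']; group
      _ = x ^ (i ^ (n + 1)) := by rw [ih, conj_zpow_eq h, pow_succ']

theorem commute_of_mem_zpowers {x y z : G} (h : Commute y x) (hz : z ∈ Subgroup.zpowers x) :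
    Commute y z := by
  obtain ⟨k, rfl⟩ := Subgroup.mem_zpowers_iff.1 hz
  exact h.zpow_right k

theorem commute_commutatorElement_of_conj_mem_zpowers {a b u : G}
    (ha : a * u * a⁻¹ ∈ Subgroup.zpowers u) (hb : b * u * b⁻¹ ∈ Subgroup.zpowers u) :
    Commute ⁅a⁻¹, b⁻¹⁆ u := by
  obtain ⟨i, hi⟩ := Subgroup.mem_zpowers_iff.1 ha
  obtain ⟨j, hj⟩ := Subgroup.mem_zpowers_iff.1 hb
  have hab : (a * b) * u * (a * b)⁻¹ = (b * a) * u * (b * a)⁻¹ := by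
    calc (a * b) * u * (a * b)⁻¹ = a * (b * u * b⁻¹) * a⁻¹ := by group
      _ = b * (a * u * a⁻¹) * b⁻¹ := by
        rw [← hj, ← hi, conj_zpow_eq hi, conj_zpow_eq hj, mul_comm]
      _ = (b * a) * u * (b * a)⁻¹ := by group
  refine mul_inv_eq_iff_eq_mul.1 ?_
  calc ⁅a⁻¹, b⁻¹⁆ * u * ⁅a⁻¹, b⁻¹⁆⁻¹
      = (b * a)⁻¹ * ((a * b) * u * (a * b)⁻¹) * (b * a) := by rw [commutatorElement_def]; group
    _ = u := by rw [hab]; group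

theorem IsPElement.not_dvd_card_zpowers {p q : ℕ} (hp : p.Prime) (hq : q.Prime) (hpq : p ≠ q)
    {x : G} (hx : IsPElement p x) : ¬ q ∣ Nat.card (Subgroup.zpowers x) := by
  obtain ⟨n, hn⟩ := hx.exists_orderOf_eq hp
  rw [Nat.card_zpowers, hn]
  exact fun h => hpq ((Nat.prime_dvd_prime_iff_eq hq hp).1 (hq.dvd_of_dvd_pow h)).symm

theorem IsPElement.exists_pow_prime_eq_one {p : ℕ} (hp : p.Prime) {x : G} (hx : IsPElement p x)
    (hx1 : x ≠ 1) : ∃ z ∈ Subgroup.zpowers x, z ≠ 1 ∧ z ^ p = 1 := by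
  obtain ⟨n, hn⟩ := hx.exists_orderOf_eq hp
  cases n with
  | zero => exact absurd (orderOf_eq_one_iff.1 hn) hx1
  | succ n =>
    refine ⟨x ^ p ^ n, Subgroup.npow_mem_zpowers x _, fun h => ?_, ?_⟩
    · exact (Nat.pow_dvd_pow_iff_le_right hp.one_lt).1 (hn ▸ orderOf_dvd_of_pow_eq_one h)
        |>.not_gt n.lt_succ_self
    · rw [← pow_mul, ← pow_succ, ← hn, pow_orderOf_eq_one]

theorem dvd_sub_one_of_dvd_pow_sub_one {p r b : ℕ} (hp : p.Prime) (hr : r.Prime) (hrp : r < p)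
    {i : ℤ} (h : (r : ℤ) ∣ i ^ p ^ b - 1) : (r : ℤ) ∣ i - 1 := by
  have := Fact.mk hr
  rw [← ZMod.intCast_zmod_eq_zero_iff_dvd] at h ⊢
  push_cast at h ⊢
  have hpow : (i : ZMod r) ^ p ^ b = 1 := sub_eq_zero.1 h
  have hi0 : (i : ZMod r) ≠ 0 := by
    intro h0
    rw [h0, zero_pow (pow_ne_zero _ hp.ne_zero)] at hpow
    exact zero_ne_one hpow
  have hcoprime : Nat.Coprime (p ^ b) (r - 1) := by
    refine Nat.Coprime.pow_left b (hp.coprime_iff_not_dvd.2 fun hd => ?_)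
    have := Nat.le_of_dvd (Nat.sub_pos_of_lt hr.one_lt) hd
    omega
  refine sub_eq_zero.2 (orderOf_eq_one_iff.1 (Nat.eq_one_of_dvd_coprimes hcoprime ?_ ?_))
  · exact orderOf_dvd_of_pow_eq_one hpow
  · exact orderOf_dvd_of_pow_eq_one (ZMod.pow_card_sub_one_eq_one hi0)

theorem dvd_sub_of_conj_eq_zpow {p : ℕ} (hp : p.Prime) {x y z : G} (hx : IsPElement p x)
    (hx1 : x ≠ 1) (hz1 : z ≠ 1) (hzp : z ^ p = 1) (hxz : Commute x z) {i k m : ℤ}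
    (hi : x ^ i = y * x * y⁻¹) (hk : z ^ k = y * z * y⁻¹)
    (hm : (x * z) ^ m = y * (x * z) * y⁻¹) : (p : ℤ) ∣ i - k := by
  have hz : IsPElement p z := ⟨1, by rwa [pow_one]⟩
  have hxz_pow : x ^ (i - m) = z ^ (m - k) := by
    have : x ^ i * z ^ k = x ^ m * z ^ m := by
      rw [← hxz.mul_zpow, hm, hi, hk]; group
    rw [sub_eq_neg_add, zpow_add, zpow_sub, zpow_neg, inv_mul_eq_iff_eq_mul, ← mul_assoc, ← this,
      mul_inv_cancel_right]
  by_cases hmk : (p : ℤ) ∣ m - k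
  · have hz_pow : z ^ (m - k) = 1 := by
      obtain ⟨c, hc⟩ := hmk
      rw [hc, zpow_mul, zpow_natCast, hzp, one_zpow]
    have him := hx.dvd_of_zpow_eq_one hp hx1 (hxz_pow.trans hz_pow)
    exact sub_add_sub_cancel i m k ▸ dvd_add him hmk
  · have hzx : z ∈ Subgroup.zpowers x := by
      have := hz.mem_zpowers_zpow hp hmk
      rw [← hxz_pow] at this
      exact Subgroup.zpowers_le.2 (Subgroup.zpow_mem_zpowers x _) this
    obtain ⟨t, rfl⟩ := Subgroup.mem_zpowers_iff.1 hzx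
    refine hz.dvd_of_zpow_eq_one hp hz1 ?_
    rw [zpow_sub, hk, conj_zpow_eq hi, ← zpow_mul, mul_comm, mul_inv_cancel]

theorem exists_mem_second_center_of_isPGroup {p : ℕ} (hp : p.Prime) {P : Type*} [Group P]
    [Finite P] (hP : IsPGroup p P) (hc : ¬ ∀ a b : P, Commute a b) :
    ∃ x : P, x ∉ Subgroup.center P ∧ x ^ p ∈ Subgroup.center P ∧
      ∀ g : P, ⁅x, g⁆ ∈ Subgroup.center P := by
  have := Fact.mk hp
  have hnontrivial : Nontrivial (P ⧸ Subgroup.center P) := by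
    rw [QuotientGroup.nontrivial_iff]
    intro h
    exact hc fun a b => Subgroup.mem_center_iff.1 (h ▸ Subgroup.mem_top b) a
  have hQ := hP.to_quotient (Subgroup.center P)
  have := hQ.center_nontrivial
  obtain ⟨⟨w, hw⟩, hw1⟩ := exists_ne (1 : Subgroup.center (P ⧸ Subgroup.center P))
  obtain ⟨v, hvw, hv1, hvp⟩ :=
    IsPElement.exists_pow_prime_eq_one hp (hQ w) fun h => hw1 (Subtype.ext h)
  have hv := Subgroup.zpowers_le.2 hw hvw
  obtain ⟨x, rfl⟩ := QuotientGroup.mk_surjective v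
  refine ⟨x, fun h => hv1 ((QuotientGroup.eq_one_iff x).2 h),
    (QuotientGroup.eq_one_iff _).1 hvp, fun g => (QuotientGroup.eq_one_iff _).1 ?_⟩
  refine (map_commutatorElement (QuotientGroup.mk' _) x g).trans ?_
  exact commutatorElement_eq_one_iff_commute.2 (Subgroup.mem_center_iff.1 hv g).symm

variable [Finite G]

theorem commute_of_conj_eq_zpow {p q : ℕ} (hp : p.Prime) (hq : q.Prime) (hpq : p ≠ q) {x y : G}
    (hx : IsPElement p x) (hy : IsPElement q y) {i : ℤ} (h : x ^ i = y * x * y⁻¹)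
    (hi : (p : ℤ) ∣ i - 1) : Commute y x := by
  obtain ⟨c, hc⟩ := hi
  have hnorm : ∀ s ∈ Subgroup.zpowers (x ^ (p : ℤ)),
      y * s * y⁻¹ ∈ Subgroup.zpowers (x ^ (p : ℤ)) := by
    intro s hs
    obtain ⟨k, rfl⟩ := Subgroup.mem_zpowers_iff.1 hs
    refine Subgroup.mem_zpowers_iff.2 ⟨i * k, ?_⟩
    rw [← zpow_mul, ← zpow_mul, conj_zpow_eq h]
    congr 1; ring
  have hfrattini : x⁻¹ * (y * x * y⁻¹) ∈ Subgroup.zpowers (x ^ (p : ℤ)) := by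
    refine Subgroup.mem_zpowers_iff.2 ⟨c, ?_⟩
    rw [← h, ← zpow_mul, ← hc, ← zpow_neg_one, ← zpow_add, neg_add_eq_sub]
  obtain ⟨s, hs, hcomm⟩ := hy.exists_commute_mul hq
    ((hx.zpow (p : ℤ)).not_dvd_card_zpowers hp hq hpq) hnorm hfrattini
  obtain ⟨k, rfl⟩ := Subgroup.mem_zpowers_iff.1 hs
  rw [← zpow_mul, ← zpow_one_add] at hcomm
  refine commute_of_mem_zpowers hcomm (hx.mem_zpowers_zpow hp fun hd => ?_)
  have : (p : ℤ) ∣ 1 := (dvd_add_left (Dvd.intro k rfl)).1 hd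
  exact hp.one_lt.ne' (by exact_mod_cast Int.eq_one_of_dvd_one (by positivity) this)

theorem commute_of_conj_mem_zpowers_of_lt {p r : ℕ} (hp : p.Prime) (hr : r.Prime) (hrp : r < p)
    {a m : G} (ha : IsPElement p a) (hm : IsPElement r m)
    (h : a * m * a⁻¹ ∈ Subgroup.zpowers m) : Commute a m := by
  rcases eq_or_ne m 1 with rfl | hm1
  · exact Commute.one_right a
  obtain ⟨i, hi⟩ := Subgroup.mem_zpowers_iff.1 h
  obtain ⟨b, hb⟩ := ha
  have hpow : m ^ (i ^ p ^ b - 1) = 1 := by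
    rw [zpow_sub, ← pow_conj_eq hi, hb]; group
  exact commute_of_conj_eq_zpow hr hp hrp.ne hm ⟨b, hb⟩ hi
    (dvd_sub_one_of_dvd_pow_sub_one hp hr hrp (hm.dvd_of_zpow_eq_one hr hm1 hpow))

theorem commute_or_mem_zpowers_commutatorElement {p q : ℕ} (hp : p.Prime) (hq : q.Prime)
    (hpq : p ≠ q) {x y : G} (hx : IsPElement p x) (hy : IsPElement q y)
    (h : y * x * y⁻¹ ∈ Subgroup.zpowers x) : Commute y x ∨ x ∈ Subgroup.zpowers ⁅y, x⁆ := by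
  obtain ⟨i, hi⟩ := Subgroup.mem_zpowers_iff.1 h
  by_cases hd : (p : ℤ) ∣ i - 1
  · exact .inl (commute_of_conj_eq_zpow hp hq hpq hx hy hi hd)
  · right
    rw [commutatorElement_def, ← hi, ← zpow_sub_one]
    exact hx.mem_zpowers_zpow hp hd

theorem commute_of_commute_of_isPGroup {p q : ℕ} (hp : p.Prime) (hq : q.Prime) (hpq : p ≠ q)
    {P : Subgroup G} (hP : IsPGroup p P) {y : G} (hy : IsPElement q y)
    (hn : ∀ x ∈ P, y * x * y⁻¹ ∈ Subgroup.zpowers x) (hc : ∀ a ∈ P, ∀ b ∈ P, Commute a b)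
    {w : G} (hw : w ∈ P) (hw1 : w ≠ 1) (hyw : Commute y w) {x : G} (hx : x ∈ P) :
    Commute y x := by
  obtain ⟨z, hz, hz1, hzp⟩ := (IsPElement.of_mem hP hw).exists_pow_prime_eq_one hp hw1
  have hzP : z ∈ P := Subgroup.zpowers_le.2 hw hz
  have hyz : z ^ (1 : ℤ) = y * z * y⁻¹ := by
    rw [zpow_one, (commute_of_mem_zpowers hyw hz).eq, mul_inv_cancel_right]
  rcases eq_or_ne x 1 with rfl | hx1
  · exact Commute.one_right y
  have hxp := IsPElement.of_mem hP hx
  obtain ⟨i, hi⟩ := Subgroup.mem_zpowers_iff.1 (hn x hx)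
  obtain ⟨m, hm⟩ := Subgroup.mem_zpowers_iff.1 (hn (x * z) (P.mul_mem hx hzP))
  exact commute_of_conj_eq_zpow hp hq hpq hxp hy hi
    (dvd_sub_of_conj_eq_zpow hp hxp hx1 hz1 hzp (hc x hx z hzP) hi hyz hm)

/-- If `y` raises `x`, `g` and the central element `z = ⁅x, g⁆` of order `p` to the powers `i`, `j`
and `k`, then `i ≡ k` and `j ≡ k` modulo `p` because `y` also normalizes `⟨xz⟩` and `⟨gz⟩`, while
`ij ≡ k` by bilinearity of the commutator. Hence `k ≡ 1`. -/
theorem commute_of_not_commute_of_isPGroup {p q : ℕ} (hp : p.Prime) (hq : q.Prime) (hpq : p ≠ q)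
    {P : Subgroup G} (hP : IsPGroup p P) {y : G} (hy : IsPElement q y)
    (hn : ∀ x ∈ P, y * x * y⁻¹ ∈ Subgroup.zpowers x) {x g : G} (hx : x ∈ P) (hg : g ∈ P)
    (hxg : ¬ Commute x g) (hcentral : ∀ a ∈ P, Commute a ⁅x, g⁆) (hgx : Commute g (x ^ p)) :
    Commute y g := by
  have hzP : ⁅x, g⁆ ∈ P := P.commutator_le_self (Subgroup.commutator_mem_commutator hx hg)
  have hz1 : ⁅x, g⁆ ≠ 1 := fun h => hxg (commutatorElement_eq_one_iff_commute.1 h)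
  have hzp : ⁅x, g⁆ ^ p = 1 := by
    rw [← zpow_natCast, ← commutatorElement_zpow_left (hcentral x hx), zpow_natCast]
    exact commutatorElement_eq_one_iff_commute.2 hgx.symm
  have hx1 : x ≠ 1 := by rintro rfl; exact hxg (Commute.one_left g)
  have hg1 : g ≠ 1 := by rintro rfl; exact hxg (Commute.one_right x)
  obtain ⟨i, hi⟩ := Subgroup.mem_zpowers_iff.1 (hn x hx)
  obtain ⟨j, hj⟩ := Subgroup.mem_zpowers_iff.1 (hn g hg)
  obtain ⟨k, hk⟩ := Subgroup.mem_zpowers_iff.1 (hn _ hzP)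
  obtain ⟨m, hm⟩ := Subgroup.mem_zpowers_iff.1 (hn _ (P.mul_mem hx hzP))
  obtain ⟨l, hl⟩ := Subgroup.mem_zpowers_iff.1 (hn _ (P.mul_mem hg hzP))
  have hze := IsPElement.of_mem hP hzP
  have hik : (p : ℤ) ∣ i - k := dvd_sub_of_conj_eq_zpow hp (IsPElement.of_mem hP hx) hx1 hz1 hzp
    (hcentral x hx) hi hk hm
  have hjk : (p : ℤ) ∣ j - k := dvd_sub_of_conj_eq_zpow hp (IsPElement.of_mem hP hg) hg1 hz1 hzp
    (hcentral g hg) hj hk hl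
  have hijk : (p : ℤ) ∣ i * j - k := by
    refine hze.dvd_of_zpow_eq_one hp hz1 ?_
    rw [zpow_sub, ← commutatorElement_zpow_zpow (hcentral x hx) (hcentral g hg), hi, hj, hk,
      ← conjugate_commutatorElement, mul_inv_cancel]
  have hpk : ¬ (p : ℤ) ∣ k := by
    rintro ⟨c, rfl⟩
    rw [zpow_mul, zpow_natCast, hzp, one_zpow, eq_comm, conj_eq_one_iff] at hk
    exact hz1 hk
  have hkk : (p : ℤ) ∣ k * (k - 1) := by
    have : k * (k - 1) = (i * j - k) - (i - k) * j - k * (j - k) := by ring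
    exact this ▸ dvd_sub (dvd_sub hijk (hik.mul_right j)) (hjk.mul_left k)
  have hk1 := ((Nat.prime_iff_prime_int.1 hp).dvd_or_dvd hkk).resolve_left hpk
  exact commute_of_conj_eq_zpow hp hq hpq (IsPElement.of_mem hP hg) hy hj
    (sub_add_sub_cancel j k 1 ▸ dvd_add hjk hk1)

theorem commute_or_commute_of_isPGroup {p q : ℕ} (hp : p.Prime) (hq : q.Prime) (hpq : p ≠ q)
    {P : Subgroup G} (hP : IsPGroup p P) {y : G} (hy : IsPElement q y)
    (hn : ∀ x ∈ P, y * x * y⁻¹ ∈ Subgroup.zpowers x) :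
    (∀ a ∈ P, ∀ b ∈ P, Commute a b) ∨ ∀ a ∈ P, Commute y a := by
  by_cases hc : ∀ a b : P, Commute a b
  · exact .inl fun a ha b hb => congrArg Subtype.val (hc ⟨a, ha⟩ ⟨b, hb⟩)
  right
  obtain ⟨⟨x, hx⟩, hxc, hxp, hxg⟩ := exists_mem_second_center_of_isPGroup hp hP hc
  have hcenter : ∀ z ∈ Subgroup.center P, ∀ g ∈ P, Commute g (z : G) := fun z hz g hg =>
    congrArg Subtype.val (Subgroup.mem_center_iff.1 hz ⟨g, hg⟩)
  have hnoncomm : ∀ g ∈ P, ¬ Commute x g → Commute y g := fun g hg hg' =>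
    commute_of_not_commute_of_isPGroup hp hq hpq hP hy hn hx hg hg' (hcenter _ (hxg ⟨g, hg⟩))
      (hcenter _ hxp g hg)
  obtain ⟨g, hg, hg'⟩ : ∃ g ∈ P, ¬ Commute x g := by
    by_contra! hall
    exact hxc (Subgroup.mem_center_iff.2 fun g => Subtype.ext (hall g g.2).symm.eq)
  intro a ha
  by_cases hxa : Commute x a
  · have hag : ¬ Commute x (a * g) := fun h => hg' (by simpa using hxa.inv_right.mul_right h)
    simpa using (hnoncomm _ (P.mul_mem ha hg) hag).mul_right (hnoncomm g hg hg').inv_right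
  · exact hnoncomm a ha hxa

end CoprimeAction

/-! ### Subgroups generated by elements of prime power order -/

section Closure

variable {G : Type*} [Group G]

/-- The subgroup generated by the `p`-elements of `T`; it is `O^{p'}(T)`. -/
def pClosure (p : ℕ) (T : Subgroup G) : Subgroup G :=
  Subgroup.closure {x | x ∈ T ∧ IsPElement p x}

/-- The subgroup generated by the `q`-elements of `T` for the primes `q ≠ p`; it is `O^p(T)`. -/
def primeToClosure (p : ℕ) (T : Subgroup G) : Subgroup G :=
  Subgroup.closure {x | x ∈ T ∧ ∃ q : ℕ, q.Prime ∧ q ≠ p ∧ IsPElement q x}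

theorem mem_pClosure {p : ℕ} {T : Subgroup G} {x : G} (hx : x ∈ T) (h : IsPElement p x) :
    x ∈ pClosure p T := Subgroup.subset_closure ⟨hx, h⟩

theorem mem_primeToClosure {p q : ℕ} {T : Subgroup G} {x : G} (hx : x ∈ T) (hq : q.Prime)
    (hqp : q ≠ p) (h : IsPElement q x) : x ∈ primeToClosure p T :=
  Subgroup.subset_closure ⟨hx, q, hq, hqp, h⟩

theorem pClosure_le (p : ℕ) (T : Subgroup G) : pClosure p T ≤ T :=
  (Subgroup.closure_le T).2 fun _ hx => hx.1

theorem primeToClosure_le (p : ℕ) (T : Subgroup G) : primeToClosure p T ≤ T :=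
  (Subgroup.closure_le T).2 fun _ hx => hx.1

theorem closure_normal_of_conj_mem {S : Set G} (h : ∀ x ∈ S, ∀ g : G, g * x * g⁻¹ ∈ S) :
    (Subgroup.closure S).Normal where
  conj_mem n hn g := by
    have : Subgroup.closure S ≤ (Subgroup.closure S).comap (MulAut.conj g).toMonoidHom :=
      (Subgroup.closure_le _).2 fun x hx => Subgroup.subset_closure (h x hx g)
    exact this hn

instance pClosure_normal (p : ℕ) (T : Subgroup G) [hT : T.Normal] : (pClosure p T).Normal :=
  closure_normal_of_conj_mem fun x hx g => ⟨hT.conj_mem x hx.1 g, hx.2.conj g⟩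

instance primeToClosure_normal (p : ℕ) (T : Subgroup G) [hT : T.Normal] :
    (primeToClosure p T).Normal := by
  refine closure_normal_of_conj_mem fun x ⟨hx, q, hq, hqp, hxq⟩ g => ?_
  exact ⟨hT.conj_mem x hx g, q, hq, hqp, hxq.conj g⟩

theorem map_mem_pClosure_top {G' : Type*} [Group G'] (f : G →* G') {p : ℕ} {T : Subgroup G} {x : G}
    (hx : x ∈ pClosure p T) : f x ∈ pClosure p (⊤ : Subgroup G') := by
  have : pClosure p T ≤ (pClosure p ⊤).comap f :=
    (Subgroup.closure_le _).2 fun y hy => mem_pClosure trivial (hy.2.map f)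
  exact this hx

theorem isPGroup_pClosure_of_subgroup {p : ℕ} {T : Subgroup G}
    (h : IsPGroup p (pClosure p (⊤ : Subgroup T))) : IsPGroup p (pClosure p T) := by
  refine (h.map T.subtype).to_le ((Subgroup.closure_le _).2 fun x hx => ?_)
  exact ⟨⟨x, hx.1⟩, mem_pClosure trivial (IsPElement.coe_iff.1 hx.2), rfl⟩

theorem commute_of_mem_closure {S : Set G} {y : G} (h : ∀ x ∈ S, Commute y x) {x : G}
    (hx : x ∈ Subgroup.closure S) : Commute y x := by
  have : Subgroup.closure S ≤ Subgroup.centralizer {y} :=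
    (Subgroup.closure_le _).2 fun s hs =>
      Subgroup.mem_centralizer_singleton_iff.2 (h s hs).symm.eq
  exact (Subgroup.mem_centralizer_singleton_iff.1 (this hx)).symm

theorem commute_of_mem_primeToClosure {p : ℕ} {T : Subgroup G} {x : G}
    (h : ∀ q : ℕ, q.Prime → q ≠ p → ∀ y ∈ T, IsPElement q y → Commute y x) {y : G}
    (hy : y ∈ primeToClosure p T) : Commute x y := by
  refine commute_of_mem_closure ?_ hy
  rintro z ⟨hzT, q, hq, hqp, hzq⟩
  exact (h q hq hqp z hzT hzq).symm

variable [Finite G]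

theorem IsSylowIn.mem_of_le_normalizer {p : ℕ} (hp : p.Prime) {P L : Subgroup G}
    (h : IsSylowIn p P L) (hL : L ≤ Subgroup.normalizer (P : Set G)) {x : G} (hx : x ∈ L)
    (hxp : IsPElement p x) : x ∈ P := by
  have hxL : Subgroup.zpowers x ≤ L := Subgroup.zpowers_le.2 hx
  have hsup : IsPGroup p (Subgroup.zpowers x ⊔ P : Subgroup G) :=
    IsPGroup.to_sup_of_normal_right' hxp.isPGroup_zpowers h.isPGroup (hxL.trans hL)
  rw [← h.eq_of_le hp hsup (sup_le hxL h.le) le_sup_right]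
  exact Subgroup.mem_sup_left (Subgroup.mem_zpowers x)

theorem isPGroup_pClosure {p : ℕ} (hp : p.Prime) {T : Subgroup G}
    (h : ∀ q : ℕ, q.Prime → q ≠ p → ∀ y ∈ pClosure p T, IsPElement q y → ∀ x ∈ T,
      IsPElement p x → Commute y x) : IsPGroup p (pClosure p T) := by
  obtain ⟨P, hP⟩ := exists_isSylowIn hp (pClosure p T)
  have hnormalizes : pClosure p T ≤ Subgroup.normalizer (P : Set G) := by
    refine le_of_forall_isSylowIn_le fun q hq => ?_
    rcases eq_or_ne q p with rfl | hqp
    · exact ⟨P, hP, Subgroup.le_normalizer⟩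
    · obtain ⟨Q, hQ⟩ := exists_isSylowIn hq (pClosure p T)
      refine ⟨Q, hQ, Subgroup.le_normalizer_iff.2 fun y hy a ha => ?_⟩
      have hya : Commute y a := commute_of_mem_closure (fun x hx => h q hq hqp y (hQ.le hy)
        (.of_mem hQ.isPGroup hy) x hx.1 hx.2) (hP.le ha)
      rwa [hya.eq, mul_inv_cancel_right]
  refine hP.isPGroup.to_le ((Subgroup.closure_le P).2 fun x hx => ?_)
  exact hP.mem_of_le_normalizer hp hnormalizes (mem_pClosure hx.1 hx.2) hx.2

theorem isPGroup_pClosure_of_commute {p : ℕ} (hp : p.Prime) {T : Subgroup G}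
    (h : ∀ x ∈ T, ∀ y ∈ T, IsPElement p x → IsPElement p y → Commute x y) :
    IsPGroup p (pClosure p T) :=
  isPGroup_pClosure hp fun _ _ _ _ hy _ x hxT hx =>
    (commute_of_mem_closure (fun z hz => h x hxT z hz.1 hx hz.2) hy).symm

theorem isPGroup_pClosure_of_quotient {p : ℕ} (hp : p.Prime) {G' : Type*} [Group G']
    {f : G →* G'} (hcomm : ∀ x : G, IsPElement p x → ∀ m ∈ f.ker, Commute m x)
    (h : IsPGroup p (pClosure p (⊤ : Subgroup G'))) : IsPGroup p (pClosure p (⊤ : Subgroup G)) := by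
  refine isPGroup_pClosure hp fun q hq hqp y hy hyq x _ hx => hcomm x hx y ?_
  exact (hyq.map f).eq_one hq hp hqp (.of_mem h (map_mem_pClosure_top f hy))

theorem isPGroup_pClosure_of_primeToClosure_eq_bot {p : ℕ} (hp : p.Prime) {T : Subgroup G}
    (h : primeToClosure p T = ⊥) : IsPGroup p (pClosure p T) := by
  refine isPGroup_pClosure hp fun q hq hqp y hy hyq x _ _ => ?_
  obtain rfl : y = 1 := Subgroup.mem_bot.1 (h ▸ mem_primeToClosure (pClosure_le p T hy) hq hqp hyq)
  exact Commute.one_left x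

/-- By hypothesis the Sylow `p`-subgroups of `E = O^p(T)` are central in `E`, so by Burnside's
transfer theorem `E` has a normal `p`-complement, which contains all generators of `E`. -/
theorem eq_one_of_mem_primeToClosure {p : ℕ} (hp : p.Prime) {T : Subgroup G}
    (h : ∀ q : ℕ, q.Prime → q ≠ p → ∀ y ∈ T, IsPElement q y → ∀ x ∈ primeToClosure p T,
      IsPElement p x → Commute y x) {x : G} (hx : x ∈ primeToClosure p T)
    (hxp : IsPElement p x) : x = 1 := by
  have := Fact.mk hp
  by_contra hx1
  let E := primeToClosure p T
  let P : Sylow p E := default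
  have hP : Subgroup.normalizer (P : Set E) ≤ Subgroup.centralizer (P : Set E) := by
    refine fun n _ => Subgroup.mem_centralizer_iff.2 fun a ha => Subtype.ext ?_
    have hap : IsPElement p (a : G) := IsPElement.coe_iff.2 (.of_mem P.2 ha)
    exact commute_of_mem_primeToClosure (fun q hq hqp y hy hyq => h q hq hqp y hy hyq a a.2 hap) n.2
  have hle : E ≤ (MonoidHom.transferSylow P hP).ker.map E.subtype := by
    refine (Subgroup.closure_le _).2 fun y ⟨hy, q, hq, hqp, hyq⟩ => ?_
    refine ⟨⟨y, mem_primeToClosure hy hq hqp hyq⟩, ?_, rfl⟩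
    refine MonoidHom.mem_ker.2 (IsPElement.eq_one hq hp hqp ?_ (P.2 _))
    exact IsPElement.map _ (IsPElement.coe_iff.1 hyq)
  refine MonoidHom.not_dvd_card_ker_transferSylow P hP ?_
  rw [← Subgroup.card_map_of_injective E.subtype_injective]
  exact hxp.dvd_card hp (hle hx) hx1

end Closure

/-! ### The local structure at a prime -/

section LocalStructure

variable {G : Type*} [Group G]

/-- `G` has an abelian Sylow `p`-subgroup all of whose subgroups are normal in `G`. Such a Sylow
subgroup consists of all `p`-elements of `G`, so the definition does not mention it. -/
structure AbelianNormalAt (p : ℕ) (G : Type*) [Group G] : Prop where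
  zpowers_normal : ∀ x : G, IsPElement p x → (Subgroup.zpowers x).Normal
  commute : ∀ x y : G, IsPElement p x → IsPElement p y → Commute x y

/-- `K` is a normal `p`-complement of `G`. -/
structure IsNormalCompl (p : ℕ) (K : Subgroup G) : Prop where
  normal : K.Normal
  eq_one : ∀ x ∈ K, IsPElement p x → x = 1
  mem : ∀ q : ℕ, q.Prime → q ≠ p → ∀ x : G, IsPElement q x → x ∈ K

/-- At every prime `p`, either `G` has a normal `p`-complement or its Sylow `p`-subgroup is abelian
with all its subgroups normal in `G`. -/
def HasLocalStructure (G : Type*) [Group G] : Prop :=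
  ∀ p : ℕ, p.Prime → AbelianNormalAt p G ∨ ∃ K : Subgroup G, IsNormalCompl p K

/-- Elements of prime power order coprime to `p` normalize every subgroup of every normal
`p`-subgroup of `G`. -/
def CoprimeNormalizes (G : Type*) [Group G] : Prop :=
  ∀ p q : ℕ, p.Prime → q.Prime → q ≠ p → ∀ B : Subgroup G, B.Normal → IsPGroup p B →
    ∀ y : G, IsPElement q y → ∀ b ∈ B, y * b * y⁻¹ ∈ Subgroup.zpowers b

theorem AbelianNormalAt.conj_mem_zpowers {p : ℕ} (h : AbelianNormalAt p G) {x : G}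
    (hx : IsPElement p x) (g : G) : g * x * g⁻¹ ∈ Subgroup.zpowers x :=
  (h.zpowers_normal x hx).conj_mem x (Subgroup.mem_zpowers x) g

theorem IsNormalCompl.comap {p r : ℕ} (hp : p.Prime) (hr : r.Prime) (hrp : r ≠ p) {G' : Type*}
    [Group G'] {f : G →* G'} (hker : IsPGroup r f.ker) {K : Subgroup G'} (h : IsNormalCompl p K) :
    IsNormalCompl p (K.comap f) where
  normal := h.normal.comap f
  eq_one x hx hxp := IsPElement.eq_one hp hr hrp.symm hxp
    (.of_mem hker (h.eq_one (f x) hx (hxp.map f)))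
  mem q hq hqp x hx := h.mem q hq hqp (f x) (hx.map f)

theorem conj_mem_zpowers_of_mem {x y a : G} (h : y * x * y⁻¹ ∈ Subgroup.zpowers x)
    (ha : a ∈ Subgroup.zpowers x) : y * a * y⁻¹ ∈ Subgroup.zpowers x := by
  obtain ⟨k, rfl⟩ := Subgroup.mem_zpowers_iff.1 ha
  rw [← conj_zpow]
  exact Subgroup.zpow_mem _ h k

theorem zpowers_normal_of_forall_isSylowIn {x : G}
    (h : ∀ q : ℕ, q.Prime → ∃ Q, IsSylowIn q Q ⊤ ∧ ∀ y ∈ Q, y * x * y⁻¹ ∈ Subgroup.zpowers x) :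
    (Subgroup.zpowers x).Normal := by
  refine Subgroup.normalizer_eq_top_iff.1 (top_le_iff.1 (le_of_forall_isSylowIn_le fun q hq => ?_))
  obtain ⟨Q, hQ, hconj⟩ := h q hq
  exact ⟨Q, hQ, Subgroup.le_normalizer_iff.2 fun y hy _ ha =>
    conj_mem_zpowers_of_mem (hconj y hy) ha⟩

variable [Finite G]

theorem exists_isNormalCompl {p : ℕ} (hp : p.Prime)
    (h : ∀ q : ℕ, q.Prime → q ≠ p → ∀ x y : G, IsPElement p x → IsPElement q y → Commute y x) :
    ∃ K : Subgroup G, IsNormalCompl p K :=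
  ⟨primeToClosure p ⊤, inferInstance,
    fun _ hx hxp => eq_one_of_mem_primeToClosure hp
      (fun q hq hqp y _ hy x _ hx => h q hq hqp x y hx hy) hx hxp,
    fun _ hq hqp _ hx => mem_primeToClosure trivial hq hqp hx⟩

theorem CoprimeNormalizes.abelianNormalAt_or_exists_isNormalCompl (hG : CoprimeNormalizes G) {p : ℕ}
    (hp : p.Prime) {P : Subgroup G} [hPn : P.Normal] (hP : IsPGroup p P)
    (hmem : ∀ x : G, IsPElement p x → x ∈ P) :
    AbelianNormalAt p G ∨ ∃ K : Subgroup G, IsNormalCompl p K := by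
  by_cases hc : ∀ a ∈ P, ∀ b ∈ P, Commute a b
  · refine .inl ⟨fun x hx => zpowers_normal_of_forall_isSylowIn fun r hr => ?_,
      fun x y hx hy => hc x (hmem x hx) y (hmem y hy)⟩
    obtain ⟨R, hR⟩ := exists_isSylowIn hr (⊤ : Subgroup G)
    refine ⟨R, hR, fun y hy => ?_⟩
    have hyr := IsPElement.of_mem hR.isPGroup hy
    rcases eq_or_ne r p with rfl | hrp
    · rw [(hc y (hmem y hyr) x (hmem x hx)).eq, mul_inv_cancel_right]
      exact Subgroup.mem_zpowers x
    · exact hG p r hp hr hrp P hPn hP y hyr x (hmem x hx)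
  · refine .inr (exists_isNormalCompl hp fun r hr hrp x y hx hy => ?_)
    exact ((commute_or_commute_of_isPGroup hp hr hrp.symm hP hy
      (hG p r hp hr hrp P hPn hP y hy)).resolve_left hc) x (hmem x hx)

section Quotient

variable {G' : Type*} [Group G'] {f : G →* G'}

theorem AbelianNormalAt.of_quotient [Finite G'] {p q : ℕ} (hp : p.Prime) (hq : q.Prime)
    (hqp : q ≠ p) (hker : IsPGroup p f.ker)
    (hcomm : ∀ x : G, IsPElement q x → ∀ u ∈ f.ker, Commute u x) (h : AbelianNormalAt q G') :
    AbelianNormalAt q G := by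
  have hL : IsPGroup q (pClosure q (⊤ : Subgroup G)) := isPGroup_pClosure_of_quotient hq hcomm
    (isPGroup_pClosure_of_commute hq fun x _ y _ => h.commute x y)
  have hinj : ∀ x ∈ pClosure q (⊤ : Subgroup G), ∀ y ∈ pClosure q (⊤ : Subgroup G),
      f x = f y → x = y := by
    intro x hx y hy hxy
    refine mul_inv_eq_one.1 (IsPElement.eq_one hq hp hqp
      (.of_mem hL (mul_mem hx (inv_mem hy))) (.of_mem hker (MonoidHom.mem_ker.2 ?_)))
    rw [map_mul, map_inv, hxy, mul_inv_cancel]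
  constructor
  · refine fun x hx => zpowers_normal_of_forall_isSylowIn fun r hr => ?_
    obtain ⟨R, hR⟩ := exists_isSylowIn hr (⊤ : Subgroup G)
    refine ⟨R, hR, fun g _ => ?_⟩
    obtain ⟨k, hk⟩ := Subgroup.mem_zpowers_iff.1 (h.conj_mem_zpowers (hx.map f) (f g))
    have hxL := mem_pClosure (Subgroup.mem_top x) hx
    refine Subgroup.mem_zpowers_iff.2 ⟨k, hinj _ (zpow_mem hxL k) _
      ((pClosure_normal q ⊤).conj_mem x hxL g) ?_⟩
    rw [map_zpow, hk, map_mul, map_mul, map_inv]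
  · intro x y hx hy
    have hxL := mem_pClosure (Subgroup.mem_top x) hx
    have hyL := mem_pClosure (Subgroup.mem_top y) hy
    refine hinj _ (mul_mem hxL hyL) _ (mul_mem hyL hxL) ?_
    rw [map_mul, map_mul, (h.commute _ _ (hx.map f) (hy.map f)).eq]

theorem commute_or_mem_map_centralizer [Finite G'] (hf : Function.Surjective f) {q r : ℕ}
    (hq : q.Prime) (hr : r.Prime) (hrq : r ≠ q) {P : Subgroup G}
    (hq_norm : ∀ z : G, IsPElement q z → ∀ u ∈ P, z * u * z⁻¹ ∈ Subgroup.zpowers u)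
    {y : G} (hy : IsPElement r y) (hy_norm : ∀ u ∈ P, y⁻¹ * u * y⁻¹⁻¹ ∈ Subgroup.zpowers u)
    {x : G'} (hx : IsPElement q x) (h : f y * x * (f y)⁻¹ ∈ Subgroup.zpowers x) :
    Commute (f y) x ∨ x ∈ (Subgroup.centralizer (P : Set G)).map f := by
  refine (commute_or_mem_zpowers_commutatorElement hq hr hrq.symm hx (hy.map f) h).imp_right
    fun hxy => ?_
  obtain ⟨z, hz, rfl⟩ := hx.exists_lift hf hq
  have hcomm : ⁅y, z⁆ ∈ Subgroup.centralizer (P : Set G) := by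
    refine Subgroup.mem_centralizer_iff.2 fun u hu => Commute.symm ?_
    simpa only [inv_inv] using
      commute_commutatorElement_of_conj_mem_zpowers (hy_norm u hu) (hq_norm _ hz.inv u hu)
  rw [← map_commutatorElement] at hxy
  exact Subgroup.zpowers_le.2 (Subgroup.mem_map_of_mem f hcomm) hxy

/-- The `q`-elements of `G ⧸ P` that commute with a given `r`-element `y` and those in the image `D`
of `C_G(P)` cover all `q`-elements. The latter form an abelian group, which is not contained in `D`,
and a group is not the union of two proper subgroups. -/
theorem exists_isNormalCompl_quotient {p q : ℕ} (hp : p.Prime) (hq : q.Prime) (hqp : q ≠ p)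
    {P : Subgroup G} [P.Normal] (hmem : ∀ x : G, IsPElement p x → x ∈ P)
    (hcomm : ∀ a ∈ P, ∀ b ∈ P, Commute a b)
    (hnorm : ∀ r : ℕ, r.Prime → r ≠ p → ∀ y : G, IsPElement r y → ∀ b ∈ P,
      y * b * y⁻¹ ∈ Subgroup.zpowers b)
    (hQ : AbelianNormalAt q (G ⧸ P)) {x₀ u₀ : G} (hx₀ : IsPElement q x₀) (hu₀ : u₀ ∈ P)
    (hxu : ¬ Commute u₀ x₀) : ∃ K : Subgroup (G ⧸ P), IsNormalCompl q K := by
  let π : G →* G ⧸ P := QuotientGroup.mk' P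
  have hker : π.ker = P := QuotientGroup.ker_mk' P
  refine exists_isNormalCompl hq fun r hr hrq x y' hx hy' => ?_
  obtain ⟨y, hy, rfl⟩ := hy'.exists_lift (QuotientGroup.mk'_surjective P) hr
  rcases eq_or_ne r p with rfl | hrp
  · rw [show QuotientGroup.mk' P y = 1 from (QuotientGroup.eq_one_iff y).2 (hmem y hy)]
    exact Commute.one_left _
  let D : Subgroup (G ⧸ P) := (Subgroup.centralizer (P : Set G)).map π
  have hD : ∀ x : G ⧸ P, IsPElement q x → Commute (π y) x ∨ x ∈ D := fun x hx =>
    commute_or_mem_map_centralizer (QuotientGroup.mk'_surjective P) hq hr hrq (hnorm q hq hqp) hy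
      (hnorm r hr hrp _ hy.inv) hx (hQ.conj_mem_zpowers hx _)
  have hx₀D : π x₀ ∉ D := by
    intro h
    have hker_le : π.ker ≤ Subgroup.centralizer (P : Set G) := by
      rw [hker]
      exact fun a ha => Subgroup.mem_centralizer_iff.2 fun u hu => hcomm u hu a ha
    rw [← Subgroup.mem_comap, Subgroup.comap_map_eq_self hker_le] at h
    exact hxu (Subgroup.mem_centralizer_iff.1 h u₀ hu₀)
  have hyx₀ := (hD (π x₀) (hx₀.map π)).resolve_right hx₀D
  refine (hD x hx).elim id fun hxD => ?_
  have hxx₀ := (hD _ (hx.mul_of_commute (hx₀.map π) (hQ.commute _ _ hx (hx₀.map π)))).resolve_right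
    fun h => hx₀D ((Subgroup.mul_mem_cancel_left D hxD).1 h)
  simpa only [mul_inv_cancel_right] using hxx₀.mul_right hyx₀.inv_right

end Quotient

theorem HasLocalStructure.of_quotient {p : ℕ} (hp : p.Prime) {P : Subgroup G} [hPn : P.Normal]
    (hP : IsPGroup p P) (hmem : ∀ x : G, IsPElement p x → x ∈ P) (hG : CoprimeNormalizes G)
    (hQ : HasLocalStructure (G ⧸ P)) : HasLocalStructure G := by
  have hnorm : ∀ q : ℕ, q.Prime → q ≠ p → ∀ y : G, IsPElement q y → ∀ b ∈ P,
      y * b * y⁻¹ ∈ Subgroup.zpowers b :=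
    fun q hq hqp => hG p q hp hq hqp P hPn hP
  have hker : IsPGroup p (QuotientGroup.mk' P).ker := by rwa [QuotientGroup.ker_mk']
  intro q hq
  rcases eq_or_ne q p with rfl | hqp
  · exact hG.abelianNormalAt_or_exists_isNormalCompl hq hP hmem
  have hlift : (∃ K : Subgroup (G ⧸ P), IsNormalCompl q K) → ∃ K : Subgroup G, IsNormalCompl q K :=
    fun ⟨K, hK⟩ => ⟨_, hK.comap hq hp hqp.symm hker⟩
  rcases hQ q hq with hab | hcompl
  · by_cases hc : ∀ x : G, IsPElement q x → ∀ u ∈ P, Commute u x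
    · exact .inl (hab.of_quotient hp hq hqp hker (by rwa [QuotientGroup.ker_mk']))
    · push Not at hc
      obtain ⟨x₀, hx₀, u₀, hu₀, hxu⟩ := hc
      have hcomm := (commute_or_commute_of_isPGroup hp hq hqp.symm hP hx₀
        (hnorm q hq hqp x₀ hx₀)).resolve_right fun h => hxu (h u₀ hu₀).symm
      exact .inr (hlift (exists_isNormalCompl_quotient hp hq hqp hmem hcomm hnorm hab hx₀ hu₀ hxu))
  · exact .inr (hlift hcompl)

end LocalStructure

/-! ### The classes of PST-, SST- and BT-groups -/

section Classes

variable {G : Type*} [Group G]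

theorem eq_one_of_coprime_card {p : ℕ} (hp : p.Prime) {A X : Subgroup G} (hA : IsPGroup p A)
    (hAbot : A ≠ ⊥) (hcoprime : Nat.Coprime (Nat.card A) (Nat.card X)) {x : G} (hx : x ∈ X)
    (hxp : IsPElement p x) : x = 1 := by
  obtain ⟨a, ha, ha1⟩ := A.bot_or_exists_ne_one.resolve_left hAbot
  by_contra hx1
  exact Nat.not_coprime_of_dvd_of_dvd hp.one_lt
    ((IsPElement.of_mem hA ha).dvd_card hp ha ha1) (hxp.dvd_card hp hx hx1) hcoprime

theorem SemiIn.of_isPGroup {p : ℕ} (hp : p.Prime) {A B : Subgroup G} (hB : IsPGroup p B)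
    (hAB : A ≤ B) : SemiIn A B := by
  intro X hX hcoprime
  rcases eq_or_ne A ⊥ with rfl | hAbot
  · exact Permutes.of_normal _ _
  · obtain rfl : X = ⊥ := (Subgroup.eq_bot_iff_forall X).2 fun x hx =>
      eq_one_of_coprime_card hp (hB.to_le hAB) hAbot hcoprime hx (.of_mem hB (hX hx))
    exact (Permutes.of_normal _ _).symm

theorem Permutes.conj_mem_of_isPGroup {p q : ℕ} (hp : p.Prime) (hq : q.Prime) (hqp : q ≠ p)
    {A B Q : Subgroup G} [B.Normal] (hB : IsPGroup p B) (hQ : IsPGroup q Q) (hAB : A ≤ B)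
    (h : Permutes A Q) {a y : G} (ha : a ∈ A) (hy : y ∈ Q) : y * a * y⁻¹ ∈ A :=
  h.conj_mem hAB (fun _ hx hxQ => IsPElement.eq_one hq hp hqp (.of_mem hQ hxQ) (.of_mem hB hx))
    ha hy

variable [Finite G]

theorem SPermIn.of_isPGroup {p : ℕ} (hp : p.Prime) {A B : Subgroup G} (hB : IsPGroup p B)
    (hAB : A ≤ B) : SPermIn A B := by
  intro r hr Q hQ
  rcases eq_or_ne r p with rfl | hrp
  · have := hQ.eq_of_le hr hB le_rfl hQ.le
    exact Permutes.of_le (this ▸ hAB)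
  · refine Permutes.of_normalizes fun b hb a ha => ?_
    rw [IsPElement.eq_one hr hp hrp (.of_mem hQ.isPGroup hb) (.of_mem hB (hQ.le hb))]
    simpa using ha

theorem exists_index_eq_prime_pow {p : ℕ} (hp : p.Prime) {A L : Subgroup G} (hA : IsPGroup p A)
    (h : ∀ k : G, ∃ a ∈ A, ∃ l ∈ L, k = a * l) : ∃ n, L.index = p ^ n := by
  have := Fact.mk hp
  have : MulAction.IsPretransitive A (G ⧸ L) := by
    refine (MulAction.isPretransitive_iff_base (QuotientGroup.mk (1 : G))).2 fun x => ?_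
    obtain ⟨g, rfl⟩ := QuotientGroup.mk_surjective x
    obtain ⟨a, ha, l, hl, rfl⟩ := h g
    refine ⟨⟨a, ha⟩, ?_⟩
    change ((a * 1 : G) : G ⧸ L) = _
    rw [QuotientGroup.eq]
    simpa using hl
  rw [Subgroup.index,
    ← MulAction.index_stabilizer_of_transitive A (QuotientGroup.mk (1 : G) : G ⧸ L)]
  exact hA.index _

/-- Since `y` acts on the `p`-power number of cosets of `L`, it fixes one of them. -/
theorem exists_conj_mem_of_isPElement {p q : ℕ} (hp : p.Prime) (hq : q.Prime) (hqp : q ≠ p)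
    {A L : Subgroup G} (hA : IsPGroup p A) (h : ∀ k : G, ∃ a ∈ A, ∃ l ∈ L, k = a * l) {y : G}
    (hy : IsPElement q y) : ∃ a ∈ A, a⁻¹ * y * a ∈ L := by
  have := Fact.mk hq
  obtain ⟨n, hn⟩ := exists_index_eq_prime_pow hp hA h
  have hndvd : ¬ q ∣ Nat.card (G ⧸ L) := by
    rw [← Subgroup.index, hn]
    exact fun hd => hqp ((Nat.prime_dvd_prime_iff_eq hq hp).1 (hq.dvd_of_dvd_pow hd))
  obtain ⟨x, hx⟩ := hy.isPGroup_zpowers.nonempty_fixed_point_of_prime_not_dvd_card (G ⧸ L) hndvd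
  obtain ⟨g, rfl⟩ := QuotientGroup.mk_surjective x
  obtain ⟨a, ha, l, hl, rfl⟩ := h g
  have hfix : ((a * l : G) : G ⧸ L) = ((y * (a * l) : G) : G ⧸ L) :=
    (hx ⟨y, Subgroup.mem_zpowers y⟩).symm
  rw [QuotientGroup.eq] at hfix
  refine ⟨a, ha, ?_⟩
  convert L.mul_mem (L.mul_mem hl hfix) (L.inv_mem hl) using 1
  group

theorem SSPermIn.exists_permutes {p q : ℕ} (hp : p.Prime) (hq : q.Prime) (hqp : q ≠ p)
    {A : Subgroup G} (hA : IsPGroup p A) (h : SSPermIn A ⊤) {y : G} (hy : IsPElement q y) :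
    ∃ Q : Subgroup G, IsPGroup q Q ∧ y ∈ Q ∧ Permutes A Q := by
  obtain ⟨L, -, hL, hperm⟩ := h
  obtain ⟨a, ha, hya⟩ := exists_conj_mem_of_isPElement hp hq hqp hA (fun k => hL k trivial) hy
  have hyq : IsPElement q (a⁻¹ * y * a) := by simpa only [inv_inv] using hy.conj a⁻¹
  obtain ⟨Q, hQ, hle⟩ := IsSylowIn.exists_ge hq hyq.isPGroup_zpowers (Subgroup.zpowers_le.2 hya)
  have hconj := (hperm q hq Q hQ).map (MulAut.conj a).toMonoidHom
  have hAconj : A.map (MulAut.conj a).toMonoidHom = A := Subgroup.conj_smul_eq_self_of_mem ha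
  rw [hAconj] at hconj
  refine ⟨_, hQ.isPGroup.map _, ⟨_, hle (Subgroup.mem_zpowers _), ?_⟩, hconj⟩
  simp [mul_assoc]

theorem coprime_card_of_isPGroup {p q : ℕ} (hp : p.Prime) (hq : q.Prime) (hqp : q ≠ p)
    {A B : Subgroup G} (hA : IsPGroup p A) (hB : IsPGroup q B) :
    Nat.Coprime (Nat.card A) (Nat.card B) := by
  have := Fact.mk hp
  have := Fact.mk hq
  exact IsPGroup.coprime_card_of_ne p q hqp.symm A B hA hB

theorem IsPSTGroup.coprimeNormalizes (h : IsPSTGroup G) : CoprimeNormalizes G := by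
  rw [isPSTGroup_iff] at h
  intro p q hp hq hqp B hBn hB y hy b hb
  have hle := Subgroup.zpowers_le.2 hb
  have hperm := h _ B hle (.of_isPGroup hp hB hle) (.of_normal B ⊤)
  obtain ⟨Q, hQ, hyQ⟩ := IsSylowIn.exists_ge hq hy.isPGroup_zpowers (le_top (a := _))
  exact (hperm q hq Q hQ).conj_mem_of_isPGroup hp hq hqp hB hQ.isPGroup hle
    (Subgroup.mem_zpowers b) (hyQ (Subgroup.mem_zpowers y))

theorem IsSSTGroup.coprimeNormalizes (h : IsSSTGroup G) : CoprimeNormalizes G := by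
  rw [isSSTGroup_iff] at h
  intro p q hp hq hqp B hBn hB y hy b hb
  have hle := Subgroup.zpowers_le.2 hb
  have hss := h _ B hle (SPermIn.of_isPGroup hp hB hle).ssPermIn (SPermIn.of_normal B ⊤).ssPermIn
  obtain ⟨Q, hQ, hyQ, hperm⟩ := hss.exists_permutes hp hq hqp (hB.to_le hle) hy
  exact hperm.conj_mem_of_isPGroup hp hq hqp hB hQ hle (Subgroup.mem_zpowers b) hyQ

theorem IsBTGroup.coprimeNormalizes (h : IsBTGroup G) : CoprimeNormalizes G := by
  rw [isBTGroup_iff] at h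
  intro p q hp hq hqp B hBn hB y hy b hb
  have hle := Subgroup.zpowers_le.2 hb
  have hperm := h _ B hle (.of_isPGroup hp hB hle) (.of_normal B ⊤) (Subgroup.zpowers y) le_top
    (coprime_card_of_isPGroup hp hq hqp (hB.to_le hle) hy.isPGroup_zpowers)
  exact hperm.conj_mem_of_isPGroup hp hq hqp hB hy.isPGroup_zpowers hle (Subgroup.mem_zpowers b)
    (Subgroup.mem_zpowers y)

universe u

/-- A class of groups to which the local structure theorem applies. It has to be closed under
quotients by normal Hall subgroups only, because BT-groups are not closed under all quotients. -/
structure IsCoprimeNormalizingClass (C : ∀ (G : Type u) [Group G], Prop) : Prop where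
  coprimeNormalizes : ∀ {G : Type u} [Group G] [Finite G], C G → CoprimeNormalizes G
  subgroup_of_normal : ∀ {G : Type u} [Group G] [Finite G], C G →
    ∀ (T : Subgroup G) [T.Normal], C T
  quotient : ∀ {G : Type u} [Group G] [Finite G], C G → ∀ (N : Subgroup G) [N.Normal],
    Nat.Coprime (Nat.card N) N.index → C (G ⧸ N)

theorem isCoprimeNormalizingClass_isPSTGroup :
    IsCoprimeNormalizingClass fun (G : Type u) [Group G] => IsPSTGroup G where
  coprimeNormalizes h := h.coprimeNormalizes
  subgroup_of_normal h T := h.subgroup_of_normal T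
  quotient h N _ _ := h.of_surjective (QuotientGroup.mk'_surjective N)

theorem isCoprimeNormalizingClass_isSSTGroup :
    IsCoprimeNormalizingClass fun (G : Type u) [Group G] => IsSSTGroup G where
  coprimeNormalizes h := h.coprimeNormalizes
  subgroup_of_normal h T := h.subgroup_of_normal T
  quotient h N _ _ := h.of_surjective (QuotientGroup.mk'_surjective N)

theorem isCoprimeNormalizingClass_isBTGroup :
    IsCoprimeNormalizingClass fun (G : Type u) [Group G] => IsBTGroup G where
  coprimeNormalizes h := h.coprimeNormalizes
  subgroup_of_normal h T := h.subgroup_of_normal T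
  quotient h N _ hcoprime := h.of_surjective (QuotientGroup.mk'_surjective N)
    (by rwa [QuotientGroup.ker_mk'])

end Classes

/-! ### Normal Sylow subgroups and the local structure theorem -/

section NormalSylow

variable {G : Type*} [Group G]

theorem exists_prime_dvd_card_forall_le [Finite G] {T : Subgroup G} (hT : T ≠ ⊥) :
    ∃ p : ℕ, p.Prime ∧ p ∣ Nat.card T ∧ ∀ q : ℕ, q.Prime → q ∣ Nat.card T → q ≤ p := by
  obtain ⟨p, hp, hmax⟩ := (Nat.card T).primeFactors.exists_max_image id
    (Nat.nonempty_primeFactors.2 ((Subgroup.one_lt_card_iff_ne_bot T).2 hT))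
  exact ⟨p, Nat.prime_of_mem_primeFactors hp, Nat.dvd_of_mem_primeFactors hp,
    fun q hq hd => hmax q (Nat.mem_primeFactors.2 ⟨hq, hd, Nat.card_pos.ne'⟩)⟩

theorem card_quotient_lt [Finite G] {M : Subgroup G} (hM : M ≠ ⊥) :
    Nat.card (G ⧸ M) < Nat.card G := by
  rw [Subgroup.card_eq_card_quotient_mul_card_subgroup M]
  exact lt_mul_of_one_lt_right Nat.card_pos ((Subgroup.one_lt_card_iff_ne_bot M).2 hM)

theorem card_subgroup_lt [Finite G] {T : Subgroup G} (hT : T ≠ ⊤) : Nat.card T < Nat.card G :=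
  lt_of_le_of_ne (Nat.le_of_dvd Nat.card_pos T.card_subgroup_dvd_card)
    fun h => hT (T.eq_top_of_card_eq h)

theorem pClosure_ne_bot [Finite G] {p : ℕ} (hp : p.Prime) {T : Subgroup G}
    (hd : p ∣ Nat.card T) : pClosure p T ≠ ⊥ := by
  have := Fact.mk hp
  obtain ⟨x, hx⟩ := exists_prime_orderOf_dvd_card' p hd
  rw [← Subgroup.orderOf_coe] at hx
  refine fun hbot => hp.one_lt.ne (hx ▸ (orderOf_eq_one_iff.2 ?_).symm)
  rw [← Subgroup.mem_bot, ← hbot]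
  exact mem_pClosure x.2 ⟨1, by rw [pow_one, ← hx, pow_orderOf_eq_one]⟩

theorem coprime_card_index_of_forall_mem [Finite G] {p : ℕ} (hp : p.Prime) {P : Subgroup G}
    (hP : IsPGroup p P) (h : ∀ x : G, IsPElement p x → x ∈ P) :
    Nat.Coprime (Nat.card P) P.index := by
  have := Fact.mk hp
  obtain ⟨S, hS, hPS⟩ := IsSylowIn.exists_ge hp hP le_top
  have hSP : S = P := le_antisymm (fun x hx => h x (.of_mem hS.isPGroup hx)) hPS
  have hndvd := hS.not_dvd
  rw [hSP, Subgroup.relIndex_top_right] at hndvd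
  obtain ⟨n, hn⟩ := hP.exists_card_eq
  rw [hn]
  exact Nat.Coprime.pow_left n (hp.coprime_iff_not_dvd.2 hndvd)

theorem exists_commute_of_isPGroup_of_normal [Finite G] {p : ℕ} (hp : p.Prime) {X P : Subgroup G}
    (hX : IsPGroup p X) (hP : IsPGroup p P) [P.Normal] (hPbot : P ≠ ⊥) :
    ∃ z ∈ P, z ≠ 1 ∧ z ^ p = 1 ∧ ∀ x ∈ X, Commute x z := by
  have := Fact.mk hp
  obtain ⟨b, hbP, hb1⟩ := P.bot_or_exists_ne_one.resolve_left hPbot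
  have hd : p ∣ Nat.card P := (IsPElement.of_mem hP hbP).dvd_card hp hbP hb1
  let : MulAction X P :=
    MulAction.compHom P ((MulAut.conjNormal (H := P)).comp X.subtype)
  have hsmul : ∀ (x : X) (a : P), ((x • a : P) : G) = x * a * (x : G)⁻¹ := fun x a => rfl
  obtain ⟨w, hw, hw1⟩ := hX.exists_fixed_point_of_prime_dvd_card_of_fixed_point P hd
    (a := 1) (fun x => Subtype.ext (by rw [hsmul]; simp))
  obtain ⟨z, hz, hz1, hzp⟩ := (IsPElement.of_mem hP w.2).exists_pow_prime_eq_one hp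
    (fun h => hw1 (Subtype.ext h.symm))
  refine ⟨z, Subgroup.zpowers_le.2 w.2 hz, hz1, hzp, fun x hx => commute_of_mem_zpowers ?_ hz⟩
  have hfix := congrArg Subtype.val (hw ⟨x, hx⟩)
  rw [hsmul] at hfix
  exact mul_inv_eq_iff_eq_mul.1 hfix

theorem commute_of_zpowers_normal [Finite G] {p : ℕ} (hp : p.Prime) {z : G} (hz1 : z ≠ 1)
    (hzp : z ^ p = 1) [(Subgroup.zpowers z).Normal] {x : G} (hx : IsPElement p x) :
    Commute x z := by
  have hz : IsPElement p z := ⟨1, by rwa [pow_one]⟩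
  obtain ⟨w, hwz, hw1, -, hxw⟩ := exists_commute_of_isPGroup_of_normal hp hx.isPGroup_zpowers
    hz.isPGroup_zpowers fun h => hz1 (Subgroup.zpowers_eq_bot.1 h)
  obtain ⟨k, rfl⟩ := Subgroup.mem_zpowers_iff.1 hwz
  have hk : ¬ (p : ℤ) ∣ k := by
    rintro ⟨m, rfl⟩
    exact hw1 (by rw [zpow_mul, zpow_natCast, hzp, one_zpow])
  exact commute_of_mem_zpowers (hxw x (Subgroup.mem_zpowers x)) (hz.mem_zpowers_zpow hp hk)

section CoprimeNormalizes

variable [Finite G]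

theorem IsPElement.mem_commutator_of_pClosure_eq_top {p q : ℕ} (hp : p.Prime) (hq : q.Prime)
    (hqp : q ≠ p) (htop : pClosure p (⊤ : Subgroup G) = ⊤) {y : G} (hy : IsPElement q y) :
    y ∈ commutator G := by
  have hab : IsPGroup p (pClosure p (⊤ : Subgroup (Abelianization G))) :=
    isPGroup_pClosure_of_commute hp fun x _ y _ _ _ => Commute.all x y
  rw [← Abelianization.ker_of, MonoidHom.mem_ker]
  exact (hy.map Abelianization.of).eq_one hq hp hqp
    (.of_mem hab (map_mem_pClosure_top Abelianization.of (htop.ge (Subgroup.mem_top y))))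

theorem primeToClosure_le_commutator {p : ℕ} (hp : p.Prime)
    (htop : pClosure p (⊤ : Subgroup G) = ⊤) :
    primeToClosure p (⊤ : Subgroup G) ≤ commutator G :=
  (Subgroup.closure_le _).2 fun _ ⟨_, _, hq, hqp, hx⟩ =>
    hx.mem_commutator_of_pClosure_eq_top hp hq hqp htop

/-- If `P` is abelian, some `⟨z⟩ ≤ P` of order `p` is normalized by a Sylow `p`-subgroup, hence by
every Sylow subgroup. So `z` commutes with all `p`-elements, which generate `G`. -/
theorem CoprimeNormalizes.commute_of_pClosure_eq_top (hG : CoprimeNormalizes G)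
    {p q : ℕ} (hp : p.Prime) (hq : q.Prime) (hqp : q ≠ p)
    (htop : pClosure p (⊤ : Subgroup G) = ⊤) {P : Subgroup G} (hP : IsPGroup p P) [hPn : P.Normal]
    {y : G} (hy : IsPElement q y) {a : G} (ha : a ∈ P) : Commute y a := by
  have hnorm := hG p q hp hq hqp P hPn hP y hy
  refine (commute_or_commute_of_isPGroup hp hq hqp.symm hP hy hnorm).elim (fun hcomm => ?_)
    fun hcomm => hcomm a ha
  rcases eq_or_ne a 1 with rfl | ha1
  · exact Commute.one_right y
  obtain ⟨S, hS⟩ := exists_isSylowIn hp (⊤ : Subgroup G)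
  obtain ⟨z, hzP, hz1, hzp, hSz⟩ := exists_commute_of_isPGroup_of_normal hp hS.isPGroup hP
    fun h => ha1 (Subgroup.mem_bot.1 (h ▸ ha))
  have hnormal : (Subgroup.zpowers z).Normal := by
    refine zpowers_normal_of_forall_isSylowIn fun r hr => ?_
    rcases eq_or_ne r p with rfl | hrp
    · refine ⟨S, hS, fun s hs => ?_⟩
      rw [(hSz s hs).eq, mul_inv_cancel_right]
      exact Subgroup.mem_zpowers z
    · obtain ⟨Q, hQ⟩ := exists_isSylowIn hr (⊤ : Subgroup G)
      exact ⟨Q, hQ, fun s hs => hG p r hp hr hrp P hPn hP s (.of_mem hQ.isPGroup hs) z hzP⟩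
  refine commute_of_commute_of_isPGroup hp hq hqp.symm hP hy hnorm hcomm hzP hz1 ?_ ha
  exact (commute_of_mem_closure (fun x hx => (commute_of_zpowers_normal hp hz1 hzp hx.2).symm)
    (htop.ge (Subgroup.mem_top y))).symm

theorem CoprimeNormalizes.pClosure_primeToClosure_eq_bot (hG : CoprimeNormalizes G) {p : ℕ}
    (hp : p.Prime) (htop : pClosure p (⊤ : Subgroup G) = ⊤)
    (hcomm : IsPGroup p (pClosure p (commutator G))) :
    pClosure p (primeToClosure p (⊤ : Subgroup G)) = ⊥ := by
  have hle := primeToClosure_le_commutator hp htop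
  refine eq_bot_iff.2 ((Subgroup.closure_le _).2 fun x hx => Subgroup.mem_bot.2 ?_)
  exact eq_one_of_mem_primeToClosure hp (fun q hq hqp y _ hy x hx hxp =>
    hG.commute_of_pClosure_eq_top hp hq hqp htop hcomm hy (mem_pClosure (hle hx) hxp)) hx.1 hx.2

theorem CoprimeNormalizes.isPGroup_pClosure_of_quotient_of_lt (hG : CoprimeNormalizes G) {p r : ℕ}
    (hp : p.Prime) (hr : r.Prime) (hrp : r < p) {R : Subgroup G} [hRn : R.Normal]
    (hR : IsPGroup r R) (h : IsPGroup p (pClosure p (⊤ : Subgroup (G ⧸ R)))) :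
    IsPGroup p (pClosure p (⊤ : Subgroup G)) := by
  refine isPGroup_pClosure_of_quotient (f := QuotientGroup.mk' R) hp ?_ h
  rw [QuotientGroup.ker_mk']
  exact fun x hx m hm => (commute_of_conj_mem_zpowers_of_lt hp hr hrp hx (.of_mem hR hm)
    (hG r p hr hp hrp.ne' R hRn hR x hx m hm)).symm

end CoprimeNormalizes

universe u

namespace IsCoprimeNormalizingClass

variable {C : ∀ (G : Type u) [Group G], Prop}

theorem isPGroup_pClosure_top (hC : IsCoprimeNormalizingClass C) {G : Type u} [Group G] [Finite G]
    [Group.IsSolvable G] (hG : C G) {p : ℕ} (hp : p.Prime)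
    (hle : ∀ q : ℕ, q.Prime → q ∣ Nat.card G → q ≤ p) :
    IsPGroup p (pClosure p (⊤ : Subgroup G)) := by
  induction hn : Nat.card G using Nat.strong_induction_on generalizing G p with
  | _ n ih
  subst hn
  have hsub : ∀ (T : Subgroup G) [T.Normal], T ≠ ⊤ → ∀ r : ℕ, r.Prime →
      (∀ q : ℕ, q.Prime → q ∣ Nat.card T → q ≤ r) → IsPGroup r (pClosure r T) :=
    fun T _ hT r hr hler => isPGroup_pClosure_of_subgroup
      (ih _ (card_subgroup_lt hT) (hC.subgroup_of_normal hG T) hr hler rfl)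
  have hdvd : ∀ T : Subgroup G, ∀ q : ℕ, q.Prime → q ∣ Nat.card T → q ≤ p :=
    fun T q hq hd => hle q hq (hd.trans T.card_subgroup_dvd_card)
  by_cases htop : pClosure p (⊤ : Subgroup G) = ⊤
  swap
  · refine (hsub _ htop p hp (hdvd _)).to_le ((Subgroup.closure_le _).2 fun x hx => ?_)
    exact mem_pClosure (mem_pClosure hx.1 hx.2) hx.2
  by_cases hbot : primeToClosure p (⊤ : Subgroup G) = ⊥
  · exact isPGroup_pClosure_of_primeToClosure_eq_bot hp hbot
  have : Nontrivial G := Subgroup.nontrivial_iff.1 ⟨_, _, hbot⟩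
  have hcomm : commutator G ≠ ⊤ := (Group.IsSolvable.commutator_lt_top_of_nontrivial G).ne
  have hpbot := (hC.coprimeNormalizes hG).pClosure_primeToClosure_eq_bot hp htop
    (hsub _ hcomm p hp (hdvd _))
  obtain ⟨r, hr, hrd, hmax⟩ := exists_prime_dvd_card_forall_le hbot
  have hrp : r ≠ p := by
    rintro rfl
    exact pClosure_ne_bot hr hrd hpbot
  have hmem : ∀ x : G, IsPElement r x → x ∈ pClosure r (primeToClosure p (⊤ : Subgroup G)) :=
    fun x hx => mem_pClosure (mem_primeToClosure trivial hr hrp hx) hx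
  have hR := hsub _ (fun h => hcomm (top_le_iff.1 (h ▸ primeToClosure_le_commutator hp htop)))
    r hr hmax
  refine (hC.coprimeNormalizes hG).isPGroup_pClosure_of_quotient_of_lt hp hr
    ((hdvd _ r hr hrd).lt_of_ne hrp) hR (ih _ (card_quotient_lt (pClosure_ne_bot hr hrd))
      (hC.quotient hG _ (coprime_card_index_of_forall_mem hr hR hmem)) hp
      (fun q hq hd => hle q hq (hd.trans (Subgroup.card_quotient_dvd_card _))) rfl)

theorem hasLocalStructure (hC : IsCoprimeNormalizingClass C) {G : Type u} [Group G] [Finite G]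
    [Group.IsSolvable G] (hG : C G) : HasLocalStructure G := by
  induction hn : Nat.card G using Nat.strong_induction_on generalizing G with
  | _ n ih
  subst hn
  rcases subsingleton_or_nontrivial G with hs | hs
  · exact fun p _ => .inr ⟨⊤, inferInstance, fun _ _ _ => Subsingleton.elim _ _,
      fun _ _ _ _ _ => trivial⟩
  obtain ⟨p, hp, hpd, hmax⟩ := exists_prime_dvd_card_forall_le (G := G) top_ne_bot
  have hP := hC.isPGroup_pClosure_top hG hp (by rwa [Subgroup.card_top] at hmax)
  have hmem : ∀ x : G, IsPElement p x → x ∈ pClosure p (⊤ : Subgroup G) :=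
    fun x hx => mem_pClosure trivial hx
  exact .of_quotient hp hP hmem (hC.coprimeNormalizes hG)
    (ih _ (card_quotient_lt (pClosure_ne_bot hp hpd))
      (hC.quotient hG _ (coprime_card_index_of_forall_mem hp hP hmem)) rfl)

end IsCoprimeNormalizingClass

theorem IsPSTGroup.hasLocalStructure {G : Type*} [Group G] [Finite G] [Group.IsSolvable G]
    (hG : IsPSTGroup G) : HasLocalStructure G :=
  isCoprimeNormalizingClass_isPSTGroup.hasLocalStructure hG

theorem IsSSTGroup.hasLocalStructure {G : Type*} [Group G] [Finite G] [Group.IsSolvable G]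
    (hG : IsSSTGroup G) : HasLocalStructure G :=
  isCoprimeNormalizingClass_isSSTGroup.hasLocalStructure hG

theorem IsBTGroup.hasLocalStructure {G : Type*} [Group G] [Finite G] [Group.IsSolvable G]
    (hG : IsBTGroup G) : HasLocalStructure G :=
  isCoprimeNormalizingClass_isBTGroup.hasLocalStructure hG

end NormalSylow

/-! ### Smaller primes act on larger ones -/

section SmallerNormalizes

variable {G : Type*} [Group G]

/-- For primes `q < p`, the `q`-elements normalize every cyclic `p`-subgroup of `G`, and therefore
every `p`-subgroup. -/
def SmallerNormalizes (G : Type*) [Group G] : Prop :=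
  ∀ p q : ℕ, p.Prime → q.Prime → q < p → ∀ x y : G, IsPElement p x → IsPElement q y →
    y * x * y⁻¹ ∈ Subgroup.zpowers x

/-- The intersection of the normal `q`-complements of `G` for the primes `q ≠ p`. -/
def complInf (p : ℕ) (G : Type*) [Group G] : Subgroup G :=
  sInf {K | ∃ q : ℕ, q.Prime ∧ q ≠ p ∧ IsNormalCompl q K}

instance complInf_normal (p : ℕ) (G : Type*) [Group G] : (complInf p G).Normal where
  conj_mem x hx g := by
    refine Subgroup.mem_sInf.2 fun K hK => ?_
    have ⟨_, _, _, hcompl⟩ := hK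
    exact hcompl.normal.conj_mem x (Subgroup.mem_sInf.1 hx K hK) g

theorem IsPElement.mem_complInf {p : ℕ} (hp : p.Prime) {x : G} (hx : IsPElement p x) :
    x ∈ complInf p G :=
  Subgroup.mem_sInf.2 fun _ ⟨_, _, hqp, hcompl⟩ => hcompl.mem p hp hqp.symm x hx

theorem le_complInf {p : ℕ} (hp : p.Prime) {P : Subgroup G} (hP : IsPGroup p P) :
    P ≤ complInf p G :=
  fun _ hx => (IsPElement.of_mem hP hx).mem_complInf hp

theorem AbelianNormalAt.normal {p : ℕ} (h : AbelianNormalAt p G) {A : Subgroup G}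
    (hA : IsPGroup p A) : A.Normal :=
  ⟨fun _ ha g => Subgroup.zpowers_le.2 ha (h.conj_mem_zpowers (.of_mem hA ha) g)⟩

theorem HasLocalStructure.conj_mem_zpowers (h : HasLocalStructure G) {p r : ℕ} (hr : r.Prime)
    (hrp : r ≠ p) {x : G} (hx : x ∈ complInf p G) (hxr : IsPElement r x) (g : G) :
    g * x * g⁻¹ ∈ Subgroup.zpowers x := by
  rcases h r hr with hab | ⟨K, hK⟩
  · exact hab.conj_mem_zpowers hxr g
  · rw [hK.eq_one x (Subgroup.mem_sInf.1 hx K ⟨r, hr, hrp, hK⟩) hxr, mul_one, mul_inv_cancel]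
    exact one_mem _

variable [Finite G]

theorem HasLocalStructure.conj_mem_of_le_complInf (h : HasLocalStructure G) {p : ℕ}
    {X : Subgroup G} (hX : X ≤ complInf p G) (hXp : ∀ x ∈ X, IsPElement p x → x = 1) (g : G)
    {x : G} (hx : x ∈ X) : g * x * g⁻¹ ∈ X := by
  have hle : X ≤ X.comap (MulAut.conj g).toMonoidHom :=
    le_of_forall_isPElement_mem fun r hr x hx hxr => by
      change g * x * g⁻¹ ∈ X
      rcases eq_or_ne r p with rfl | hrp
      · rw [hXp x hx hxr, mul_one, mul_inv_cancel]
        exact one_mem _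
      · exact Subgroup.zpowers_le.2 hx (h.conj_mem_zpowers hr hrp (hX hx) hxr g)
  exact hle hx

theorem HasLocalStructure.semiIn_complInf (h : HasLocalStructure G) {p : ℕ} (hp : p.Prime)
    {P : Subgroup G} (hP : IsPGroup p P) : SemiIn P (complInf p G) := by
  intro X hX hcoprime
  rcases eq_or_ne P ⊥ with rfl | hPbot
  · exact Permutes.of_normal _ _
  · exact (Permutes.of_normalizes fun g _ _ hx => h.conj_mem_of_le_complInf hX
      (fun _ => eq_one_of_coprime_card hp hP hPbot hcoprime) g hx).symm

theorem IsNormalCompl.complInf_le_sup {p : ℕ} (hp : p.Prime) {K P : Subgroup G}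
    (hK : IsNormalCompl p K) (hP : IsSylowIn p P ⊤) : complInf p G ≤ P ⊔ (K ⊓ complInf p G) := by
  refine le_of_forall_isSylowIn_le fun q hq => ?_
  rcases eq_or_ne q p with rfl | hqp
  · refine ⟨P, ⟨le_complInf hq hP.isPGroup, hP.isPGroup, fun hd => hP.not_dvd ?_⟩, le_sup_left⟩
    rw [Subgroup.relIndex_top_right]
    exact hd.trans (Subgroup.relIndex_dvd_index_of_le (le_complInf hq hP.isPGroup))
  · obtain ⟨Q, hQ⟩ := exists_isSylowIn hq (complInf p G)
    exact ⟨Q, hQ, fun x hx => Subgroup.mem_sup_right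
      ⟨hK.mem q hq hqp x (.of_mem hQ.isPGroup hx), hQ.le hx⟩⟩

theorem HasLocalStructure.ssPermIn_complInf (h : HasLocalStructure G) {p : ℕ} (hp : p.Prime)
    {K P : Subgroup G} (hK : IsNormalCompl p K) (hP : IsSylowIn p P ⊤) :
    SSPermIn P (complInf p G) := by
  have := hK.normal
  refine ⟨K ⊓ complInf p G, inf_le_right, fun k hk => ?_, fun _ _ R hR => ?_⟩
  · obtain ⟨a, ha, l, hl, e⟩ :=
      Subgroup.mem_sup_of_normal_right.1 (hK.complInf_le_sup hp hP hk)
    exact ⟨a, ha, l, hl, e.symm⟩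
  · exact (Permutes.of_normalizes fun g _ _ hx => h.conj_mem_of_le_complInf
      (hR.le.trans inf_le_right) (fun x hx => hK.eq_one x (hR.le hx).1) g hx).symm

theorem IsBTGroup.semiIn_of_isPGroup (hG : IsBTGroup G) (h : HasLocalStructure G) {p : ℕ}
    (hp : p.Prime) {A : Subgroup G} (hA : IsPGroup p A) : SemiIn A ⊤ := by
  rw [isBTGroup_iff] at hG
  obtain ⟨P, hP, hAP⟩ := IsSylowIn.exists_ge hp hA le_top
  exact hG A P hAP (.of_isPGroup hp hP.isPGroup hAP)
    (hG P (complInf p G) (le_complInf hp hP.isPGroup) (h.semiIn_complInf hp hP.isPGroup)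
      (.of_normal _ _))

theorem IsSSTGroup.ssPermIn_of_isPGroup (hG : IsSSTGroup G) (h : HasLocalStructure G) {p : ℕ}
    (hp : p.Prime) {A : Subgroup G} (hA : IsPGroup p A) : SSPermIn A ⊤ := by
  rw [isSSTGroup_iff] at hG
  rcases h p hp with hab | ⟨K, hK⟩
  · have := hab.normal hA
    exact (SPermIn.of_normal A ⊤).ssPermIn
  · obtain ⟨P, hP, hAP⟩ := IsSylowIn.exists_ge hp hA le_top
    exact hG A P hAP (SPermIn.of_isPGroup hp hP.isPGroup hAP).ssPermIn
      (hG P (complInf p G) (le_complInf hp hP.isPGroup) (h.ssPermIn_complInf hp hK hP)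
        (SPermIn.of_normal _ _).ssPermIn)

theorem HasLocalStructure.smallerNormalizes (h : HasLocalStructure G)
    (hpermutes : ∀ p q : ℕ, p.Prime → q.Prime → q ≠ p → ∀ x y : G, IsPElement p x →
      IsPElement q y → ∃ Q : Subgroup G, IsPGroup q Q ∧ y ∈ Q ∧ Permutes (Subgroup.zpowers x) Q) :
    SmallerNormalizes G := by
  intro p q hp hq hqp x y hx hy
  rcases h q hq with hab | ⟨K, hK⟩
  · have hyx := commute_of_conj_mem_zpowers_of_lt hp hq hqp hx hy (hab.conj_mem_zpowers hy x)
    rw [← hyx.eq, mul_inv_cancel_right]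
    exact Subgroup.mem_zpowers x
  · obtain ⟨Q, hQ, hyQ, hxQ⟩ := hpermutes p q hp hq hqp.ne x y hx hy
    have := hK.normal
    exact hxQ.conj_mem (Subgroup.zpowers_le.2 (hK.mem p hp hqp.ne' x hx))
      (fun z hz hzQ => hK.eq_one z hz (.of_mem hQ hzQ)) (Subgroup.mem_zpowers x) hyQ

theorem IsBTGroup.smallerNormalizes [Group.IsSolvable G] (hG : IsBTGroup G) :
    SmallerNormalizes G :=
  hG.hasLocalStructure.smallerNormalizes fun _ _ hp hq hqp _ y hx hy =>
    ⟨Subgroup.zpowers y, hy.isPGroup_zpowers, Subgroup.mem_zpowers y,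
      hG.semiIn_of_isPGroup hG.hasLocalStructure hp hx.isPGroup_zpowers _ le_top
        (coprime_card_of_isPGroup hp hq hqp hx.isPGroup_zpowers hy.isPGroup_zpowers)⟩

theorem IsSSTGroup.smallerNormalizes [Group.IsSolvable G] (hG : IsSSTGroup G) :
    SmallerNormalizes G :=
  hG.hasLocalStructure.smallerNormalizes fun _ _ hp hq hqp _ _ hx hy =>
    (hG.ssPermIn_of_isPGroup hG.hasLocalStructure hp hx.isPGroup_zpowers).exists_permutes
      hp hq hqp hx.isPGroup_zpowers hy

end SmallerNormalizes

/-! ### Sufficient conditions for transitivity -/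

section Sufficiency

variable {G : Type*} [Group G] [Finite G]

/-- If `P` permutes with `R` then `P` stabilizes the set `RP`; hence the Sylow subgroups of `H`
generate a subgroup of the stabilizer of `RH`. -/
theorem Permutes.of_forall_isSylowIn {H R : Subgroup G}
    (h : ∀ p : ℕ, p.Prime → ∃ P, IsSylowIn p P H ∧ Permutes P R) : Permutes H R := by
  have hle : H ≤ MulAction.stabilizer G ((R : Set G) * (H : Set G)) := by
    refine le_of_forall_isSylowIn_le fun p hp => ?_
    obtain ⟨P, hP, hPR⟩ := h p hp
    refine ⟨P, hP, fun x hx => ?_⟩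
    rw [MulAction.mem_stabilizer_set_iff_smul_set_subset (Set.toFinite _)]
    rintro _ ⟨_, ⟨r, hr, g, hg, rfl⟩, rfl⟩
    obtain ⟨r', hr', x', hx', e⟩ := hPR.symm r hr x hx
    refine ⟨r', hr', x' * g, H.mul_mem (hP.le hx') hg, ?_⟩
    simp only [smul_eq_mul, ← mul_assoc, e]
  refine Permutes.symm fun r hr g hg => ?_
  have hmem : g • (r * 1) ∈ (R : Set G) * (H : Set G) := by
    rw [← MulAction.mem_stabilizer_iff.1 (hle hg)]
    exact Set.smul_mem_smul_set ⟨r, hr, 1, H.one_mem, rfl⟩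
  obtain ⟨r', hr', g', hg', e⟩ := hmem
  exact ⟨r', hr', g', hg', by simpa only [smul_eq_mul, mul_one] using e.symm⟩

theorem SmallerNormalizes.permutes {G : Type*} [Group G] (h : SmallerNormalizes G) {p q : ℕ}
    (hp : p.Prime) (hq : q.Prime) (hqp : q ≠ p) {A B : Subgroup G} (hA : IsPGroup p A)
    (hB : IsPGroup q B) : Permutes A B := by
  rcases lt_or_gt_of_ne hqp with hlt | hlt
  · exact .of_normalizes fun b hb a ha => Subgroup.zpowers_le.2 ha
      (h p q hp hq hlt a b (.of_mem hA ha) (.of_mem hB hb))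
  · exact Permutes.symm <| .of_normalizes fun a ha b hb => Subgroup.zpowers_le.2 hb
      (h q p hq hp hlt b a (.of_mem hB hb) (.of_mem hA ha))

theorem SmallerNormalizes.isBTGroup (h : SmallerNormalizes G) : IsBTGroup G := by
  rw [isBTGroup_iff]
  intro H _ _ _ _ X _ hcoprime
  refine Permutes.of_forall_isSylowIn fun p hp => ?_
  obtain ⟨P, hP⟩ := exists_isSylowIn hp H
  refine ⟨P, hP, Permutes.symm (Permutes.of_forall_isSylowIn fun q hq => ?_)⟩
  obtain ⟨Q, hQ⟩ := exists_isSylowIn hq X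
  refine ⟨Q, hQ, ?_⟩
  rcases eq_or_ne q p with rfl | hqp
  · have hcop : Nat.Coprime (Nat.card P) (Nat.card X) :=
      hcoprime.coprime_dvd_left (Subgroup.card_dvd_of_le hP.le)
    rcases eq_or_ne P ⊥ with rfl | hPbot
    · exact (Permutes.of_normal _ _).symm
    · obtain rfl : Q = ⊥ := (Subgroup.eq_bot_iff_forall Q).2 fun x hx =>
        eq_one_of_coprime_card hp hP.isPGroup hPbot hcop (hQ.le hx) (.of_mem hQ.isPGroup hx)
      exact Permutes.of_normal _ _
  · exact (h.permutes hp hq hqp hP.isPGroup hQ.isPGroup).symm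

theorem relIndex_eq_index_iff {H L : Subgroup G} :
    L.relIndex H = L.index ↔ ∀ k : G, ∃ a ∈ H, ∃ l ∈ L, k = a * l := by
  have hstab : MulAction.stabilizer H (QuotientGroup.mk (1 : G) : G ⧸ L) = L.subgroupOf H := by
    ext a
    rw [MulAction.mem_stabilizer_iff, Subgroup.mem_subgroupOf]
    change ((a * 1 : G) : G ⧸ L) = _ ↔ _
    rw [mul_one, eq_comm, QuotientGroup.eq, inv_one, one_mul]
  have hcard : (MulAction.orbit H (QuotientGroup.mk (1 : G) : G ⧸ L)).ncard =
      (Set.univ : Set (G ⧸ L)).ncard ↔ MulAction.orbit H (QuotientGroup.mk (1 : G) : G ⧸ L) =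
        Set.univ :=
    ⟨fun h => Set.eq_of_subset_of_ncard_le (Set.subset_univ _) h.ge, fun h => by rw [h]⟩
  rw [Subgroup.relIndex, ← hstab, MulAction.index_stabilizer, Subgroup.index, ← Set.ncard_univ,
    hcard, Set.eq_univ_iff_forall]
  constructor
  · intro h k
    obtain ⟨a, ha⟩ := h (QuotientGroup.mk k)
    refine ⟨a, a.2, (a : G)⁻¹ * k, ?_, by group⟩
    change ((a * 1 : G) : G ⧸ L) = _ at ha
    rwa [mul_one, QuotientGroup.eq] at ha
  · intro h x
    obtain ⟨g, rfl⟩ := QuotientGroup.mk_surjective x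
    obtain ⟨a, ha, l, hl, rfl⟩ := h g
    refine ⟨⟨a, ha⟩, ?_⟩
    change ((a * 1 : G) : G ⧸ L) = _
    rwa [mul_one, QuotientGroup.eq, inv_mul_cancel_left]

section CoprimeIndex

variable {ι : Type*} {L : ι → Subgroup G} {s : Finset ι}

theorem index_iInf_eq_prod
    (hcoprime : ∀ i ∈ s, ∀ j ∈ s, i ≠ j → Nat.Coprime (L i).index (L j).index) :
    (⨅ i ∈ s, L i).index = ∏ i ∈ s, (L i).index := by
  classical
  induction s using Finset.induction_on with
  | empty => simp
  | insert i s hi ih =>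
    have hcoprime_i : Nat.Coprime (L i).index (∏ j ∈ s, (L j).index) :=
      Nat.Coprime.prod_right fun j hj => hcoprime i (Finset.mem_insert_self i s) j
        (Finset.mem_insert_of_mem hj) (fun e => hi (e ▸ hj))
    have hprod := ih fun i hi j hj =>
      hcoprime i (Finset.mem_insert_of_mem hi) j (Finset.mem_insert_of_mem hj)
    rw [Finset.iInf_insert, Finset.prod_insert hi, ← hprod]
    rw [← hprod] at hcoprime_i
    exact le_antisymm Subgroup.index_inf_le
      (Nat.le_of_dvd (Nat.pos_of_ne_zero Subgroup.FiniteIndex.index_ne_zero)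
        (hcoprime_i.mul_dvd_of_dvd_of_dvd (Subgroup.index_dvd_of_le inf_le_left)
          (Subgroup.index_dvd_of_le inf_le_right)))

theorem exists_mul_iInf
    (hcoprime : ∀ i ∈ s, ∀ j ∈ s, i ≠ j → Nat.Coprime (L i).index (L j).index)
    {H : Subgroup G} (h : ∀ i ∈ s, ∀ k : G, ∃ a ∈ H, ∃ l ∈ L i, k = a * l) (k : G) :
    ∃ a ∈ H, ∃ l ∈ ⨅ i ∈ s, L i, k = a * l := by
  refine relIndex_eq_index_iff.1 (le_antisymm ?_ (Nat.le_of_dvd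
    (Nat.pos_of_ne_zero Subgroup.FiniteIndex.index_ne_zero) ?_)) k
  · rw [← Subgroup.relIndex_top_right]
    refine Subgroup.relIndex_le_of_le_right le_top ?_
    rw [Subgroup.relIndex_top_right]
    exact Subgroup.FiniteIndex.index_ne_zero
  · rw [index_iInf_eq_prod hcoprime]
    refine Finset.prod_dvd_of_isRelPrime
      (fun i hi j hj hij => Nat.coprime_iff_isRelPrime.1 (hcoprime i hi j hj hij)) fun i hi => ?_
    rw [← relIndex_eq_index_iff.2 (h i hi)]
    exact Subgroup.relIndex_dvd_of_le_left H (iInf₂_le i hi)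

theorem not_dvd_relIndex_iInf
    (hcoprime : ∀ i ∈ s, ∀ j ∈ s, i ≠ j → Nat.Coprime (L i).index (L j).index) {q : ℕ}
    (hq : q.Prime) {i : ι} (hi : i ∈ s) (hd : ∀ j ∈ s, j ≠ i → ¬ q ∣ (L j).index) :
    ¬ q ∣ (⨅ j ∈ s, L j).relIndex (L i) := by
  classical
  have hmul := Subgroup.relIndex_mul_index (iInf₂_le (f := fun j (_ : j ∈ s) => L j) i hi)
  rw [index_iInf_eq_prod hcoprime, ← Finset.prod_erase_mul _ _ hi] at hmul
  rw [Nat.eq_of_mul_eq_mul_right (Nat.pos_of_ne_zero Subgroup.FiniteIndex.index_ne_zero) hmul,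
    hq.prime.dvd_finsetProd_iff]
  rintro ⟨j, hj, hjd⟩
  exact hd j (Finset.mem_of_mem_erase hj) (Finset.ne_of_mem_erase hj) hjd

end CoprimeIndex

theorem coprime_index_of_isPGroup {p q : ℕ} (hp : p.Prime) (hq : q.Prime) (hpq : p ≠ q)
    {A B K L : Subgroup G} (hA : IsPGroup p A) (hB : IsPGroup q B)
    (hAK : ∀ k : G, ∃ a ∈ A, ∃ l ∈ K, k = a * l) (hBL : ∀ k : G, ∃ b ∈ B, ∃ l ∈ L, k = b * l) :
    Nat.Coprime K.index L.index := by
  obtain ⟨n, hn⟩ := exists_index_eq_prime_pow hp hA hAK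
  obtain ⟨m, hm⟩ := exists_index_eq_prime_pow hq hB hBL
  rw [hn, hm]
  exact Nat.Coprime.pow n m ((Nat.coprime_primes hp hq).2 hpq)

/-- The intersection of the supplements `L p` is the required supplement of `H`. -/
theorem SmallerNormalizes.ssPermIn_top (h : SmallerNormalizes G) {H : Subgroup G}
    {P L : ℕ → Subgroup G} (hP : ∀ p : ℕ, p.Prime → IsSylowIn p (P p) H)
    (hPL : ∀ p : ℕ, p.Prime → ∀ k : G, ∃ a ∈ P p, ∃ l ∈ L p, k = a * l)
    (hperm : ∀ p : ℕ, p.Prime → SPermIn (P p) (L p)) : SSPermIn H ⊤ := by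
  let s := (Nat.card G).primeFactors
  have hs : ∀ p ∈ s, p.Prime := fun p hp => Nat.prime_of_mem_primeFactors hp
  have hcoprime : ∀ p ∈ s, ∀ q ∈ s, p ≠ q → Nat.Coprime (L p).index (L q).index :=
    fun p hp q hq hpq => coprime_index_of_isPGroup (hs p hp) (hs q hq) hpq
      (hP p (hs p hp)).isPGroup (hP q (hs q hq)).isPGroup (hPL p (hs p hp)) (hPL q (hs q hq))
  refine ⟨⨅ p ∈ s, L p, le_top, fun k _ => exists_mul_iInf hcoprime (fun p hp k => ?_) k,
    fun q hq Q hQ => Permutes.of_forall_isSylowIn fun p hp => ⟨P p, hP p hp, ?_⟩⟩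
  · obtain ⟨a, ha, l, hl, e⟩ := hPL p (hs p hp) k
    exact ⟨a, (hP p (hs p hp)).le ha, l, hl, e⟩
  rcases eq_or_ne q p with rfl | hqp
  · by_cases hqs : q ∈ s
    · refine hperm q hq q hq Q (hQ.trans hq (iInf₂_le q hqs)
        (not_dvd_relIndex_iInf hcoprime hq hqs fun r hr hrq hd => ?_))
      obtain ⟨n, hn⟩ := exists_index_eq_prime_pow (hs r hr) (hP r (hs r hr)).isPGroup
        (hPL r (hs r hr))
      rw [hn] at hd
      exact hrq ((Nat.prime_dvd_prime_iff_eq hq (hs r hr)).1 (hq.dvd_of_dvd_pow hd)).symm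
    · obtain rfl : Q = ⊥ := by
        refine (Subgroup.eq_bot_iff_forall Q).2 fun x hx => by_contra fun hx1 => hqs ?_
        exact Nat.mem_primeFactors.2 ⟨hq, ((IsPElement.of_mem hQ.isPGroup hx).dvd_card hq hx
          hx1).trans Q.card_subgroup_dvd_card, Nat.card_pos.ne'⟩
      exact (Permutes.of_normal _ _).symm
  · exact h.permutes hp hq hqp (hP p hp).isPGroup hQ.isPGroup

theorem SmallerNormalizes.isSSTGroup (h : SmallerNormalizes G)
    (hss : ∀ p : ℕ, p.Prime → ∀ A : Subgroup G, IsPGroup p A → SSPermIn A ⊤) : IsSSTGroup G := by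
  rw [isSSTGroup_iff]
  intro H _ _ _ _
  have hex : ∀ p : ℕ, p.Prime → ∃ P L : Subgroup G, IsSylowIn p P H ∧
      (∀ k : G, ∃ a ∈ P, ∃ l ∈ L, k = a * l) ∧ SPermIn P L := by
    intro p hp
    obtain ⟨P, hP⟩ := exists_isSylowIn hp H
    obtain ⟨L, -, hL, hperm⟩ := hss p hp P hP.isPGroup
    exact ⟨P, L, hP, fun k => hL k trivial, hperm⟩
  choose! P L hP hPL hperm using hex
  exact h.ssPermIn_top hP hPL hperm

end Sufficiency

/-! ### Elements of coprime orders in the derived subgroup -/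

section CoprimeCommute

variable {G : Type*} [Group G]

/-- At every prime `r`, either the `r`-elements of `N` centralize the derived subgroup of `N`, or
`N` has a normal `r`-complement, which is then `primeToClosure r N`. This weak form of
`HasLocalStructure N` speaks about elements of the ambient group. -/
def HasLocalStructureIn (N : Subgroup G) : Prop :=
  ∀ r : ℕ, r.Prime → (∀ x ∈ N, IsPElement r x → ∀ v ∈ ⁅N, N⁆, Commute x v) ∨
    ∀ x ∈ primeToClosure r N, IsPElement r x → x = 1

/-- Elements of coprime prime power orders in `V` commute. -/
def CoprimeCommute (V : Subgroup G) : Prop :=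
  ∀ r s : ℕ, r.Prime → s.Prime → r ≠ s → ∀ x ∈ V, ∀ y ∈ V, IsPElement r x → IsPElement s y →
    Commute x y

theorem AbelianNormalAt.commute_of_mem_commutator {r : ℕ} {N : Subgroup G}
    (h : AbelianNormalAt r N) {x : G} (hx : x ∈ N) (hxr : IsPElement r x) {v : G}
    (hv : v ∈ ⁅N, N⁆) : Commute x v := by
  have hconj : ∀ g ∈ N, g⁻¹ * x * g⁻¹⁻¹ ∈ Subgroup.zpowers x := by
    intro g hg
    obtain ⟨k, hk⟩ := Subgroup.mem_zpowers_iff.1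
      (h.conj_mem_zpowers (IsPElement.coe_iff (x := (⟨x, hx⟩ : N)).1 hxr) ⟨g⁻¹, N.inv_mem hg⟩)
    exact Subgroup.mem_zpowers_iff.2 ⟨k, congrArg Subtype.val hk⟩
  rw [Subgroup.commutator_def] at hv
  refine commute_of_mem_closure ?_ hv
  rintro _ ⟨a, ha, b, hb, rfl⟩
  simpa only [inv_inv] using
    (commute_commutatorElement_of_conj_mem_zpowers (hconj a ha) (hconj b hb)).symm

theorem IsNormalCompl.primeToClosure_le {r : ℕ} {N : Subgroup G} {K : Subgroup N}
    (hK : IsNormalCompl r K) : primeToClosure r N ≤ K.map N.subtype :=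
  (Subgroup.closure_le _).2 fun y ⟨hy, q, hq, hqr, hyq⟩ =>
    ⟨⟨y, hy⟩, hK.mem q hq hqr _ (IsPElement.coe_iff.1 hyq), rfl⟩

theorem HasLocalStructure.hasLocalStructureIn {N : Subgroup G} (h : HasLocalStructure N) :
    HasLocalStructureIn N := by
  intro r hr
  rcases h r hr with hab | ⟨K, hK⟩
  · exact .inl fun x hx hxr v hv => hab.commute_of_mem_commutator hx hxr hv
  · refine .inr fun x hx hxr => ?_
    obtain ⟨z, hz, rfl⟩ := hK.primeToClosure_le hx
    rw [hK.eq_one z hz (IsPElement.coe_iff.1 hxr), map_one]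

theorem commute_of_commute_commutatorElement {r s : ℕ} (hr : r.Prime) (hs : s.Prime) (hrs : r ≠ s)
    {x y : G} (hx : IsPElement r x) (hy : IsPElement s y) (hcx : Commute x ⁅x, y⁆)
    (hcy : Commute y ⁅x, y⁆) : Commute x y := by
  obtain ⟨n, hn⟩ := hx
  obtain ⟨m, hm⟩ := hy
  refine commutatorElement_eq_one_iff_commute.1 (IsPElement.eq_one hr hs hrs ⟨n, ?_⟩ ⟨m, ?_⟩)
  · rw [← zpow_natCast, ← commutatorElement_zpow_left hcx, zpow_natCast, hn,
      commutatorElement_one_left]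
  · rw [← zpow_natCast, ← commutatorElement_zpow_right hcy, zpow_natCast, hm,
      commutatorElement_one_right]

theorem commutatorElement_mem_primeToClosure {N : Subgroup G} [N.Normal] {r s : ℕ} (hr : r.Prime)
    (hs : s.Prime) (hrs : r ≠ s) {x y : G} (hx : x ∈ N) (hy : y ∈ N) (hxr : IsPElement r x)
    (hys : IsPElement s y) (t : ℕ) : ⁅x, y⁆ ∈ primeToClosure t N := by
  rcases eq_or_ne r t with rfl | hrt
  · exact Subgroup.commutator_le_right ⊤ _ (Subgroup.commutator_mem_commutator trivial
      (mem_primeToClosure hy hs hrs.symm hys))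
  · exact Subgroup.commutator_le_left _ ⊤ (Subgroup.commutator_mem_commutator
      (mem_primeToClosure hx hr hrt hxr) trivial)

theorem commutatorElement_mul_mul {a b e f : G} (hae : Commute a e) (haf : Commute a f)
    (hbe : Commute b e) (hbf : Commute b f) : ⁅a * e, b * f⁆ = ⁅a, b⁆ * ⁅e, f⁆ := by
  have ha : a⁻¹ * (e * f * e⁻¹) = e * f * e⁻¹ * a⁻¹ :=
    ((hae.mul_right haf).mul_right hae.inv_right).inv_left.eq
  have hb : b⁻¹ * ⁅e, f⁆ = ⁅e, f⁆ * b⁻¹ :=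
    (((hbe.mul_right hbf).mul_right hbe.inv_right).mul_right hbf.inv_right).inv_left.eq
  calc ⁅a * e, b * f⁆
      = a * (e * b) * f * e⁻¹ * a⁻¹ * f⁻¹ * b⁻¹ := by rw [commutatorElement_def]; group
    _ = a * b * (e * f * e⁻¹ * a⁻¹) * f⁻¹ * b⁻¹ := by rw [← hbe.eq]; group
    _ = a * b * a⁻¹ * (⁅e, f⁆ * b⁻¹) := by rw [← ha, commutatorElement_def]; group
    _ = ⁅a, b⁆ * ⁅e, f⁆ := by rw [← hb, commutatorElement_def a b]; group

variable [Finite G]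

theorem HasLocalStructureIn.commute_of_forall_mem_primeToClosure {N : Subgroup G}
    (h : HasLocalStructureIn N) {v z : G} (hv : v ∈ ⁅N, N⁆)
    (hz : ∀ t : ℕ, z ∈ primeToClosure t N) : Commute v z := by
  have hle : ⨅ t : ℕ, primeToClosure t N ≤ Subgroup.centralizer {v} := by
    refine le_of_forall_isPElement_mem fun t ht z hz hzt => ?_
    have hzK := Subgroup.mem_iInf.1 hz t
    refine Subgroup.mem_centralizer_singleton_iff.2 ?_
    rcases h t ht with hcomm | heq_one
    · exact hcomm z (primeToClosure_le t N hzK) hzt v hv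
    · rw [heq_one z hzK hzt, one_mul, mul_one]
  exact (Subgroup.mem_centralizer_singleton_iff.1 (hle (Subgroup.mem_iInf.2 hz))).symm

theorem HasLocalStructureIn.coprimeCommute {N : Subgroup G} [N.Normal]
    (h : HasLocalStructureIn N) : CoprimeCommute ⁅N, N⁆ := by
  intro r s hr hs hrs x hx y hy hxr hys
  have hmem := commutatorElement_mem_primeToClosure hr hs hrs (Subgroup.commutator_le_left N N hx)
    (Subgroup.commutator_le_left N N hy) hxr hys
  exact commute_of_commute_commutatorElement hr hs hrs hxr hys
    (h.commute_of_forall_mem_primeToClosure hx hmem)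
    (h.commute_of_forall_mem_primeToClosure hy hmem)

theorem le_pClosure_sup_primeToClosure (r : ℕ) (V : Subgroup G) :
    V ≤ pClosure r V ⊔ primeToClosure r V :=
  le_of_forall_isPElement_mem fun q hq x hx hxq => by
    rcases eq_or_ne q r with rfl | hqr
    · exact Subgroup.mem_sup_left (mem_pClosure hx hxq)
    · exact Subgroup.mem_sup_right (mem_primeToClosure hx hq hqr hxq)

namespace CoprimeCommute

variable {V : Subgroup G} {r : ℕ}

theorem isPGroup_pClosure (h : CoprimeCommute V) (hr : r.Prime) : IsPGroup r (pClosure r V) :=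
  _root_.isPGroup_pClosure hr fun q hq hqr y hy hyq x hx hxr =>
    h q r hq hr hqr y (pClosure_le r V hy) x hx hyq hxr

theorem commute (h : CoprimeCommute V) (hr : r.Prime) {a e : G} (ha : a ∈ pClosure r V)
    (he : e ∈ primeToClosure r V) : Commute a e :=
  commute_of_mem_primeToClosure (fun q hq hqr y hy hyq => h q r hq hr hqr y hy a
    (pClosure_le r V ha) hyq (.of_mem (h.isPGroup_pClosure hr) ha)) he

theorem commutator_le [V.Normal] (h : CoprimeCommute V) (hr : r.Prime) :
    ⁅V, V⁆ ≤ ⁅pClosure r V, pClosure r V⁆ ⊔ primeToClosure r V := by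
  rw [Subgroup.commutator_le]
  intro v hv w hw
  obtain ⟨a, ha, e, he, rfl⟩ :=
    Subgroup.mem_sup_of_normal_right.1 (le_pClosure_sup_primeToClosure r V hv)
  obtain ⟨b, hb, f, hf, rfl⟩ :=
    Subgroup.mem_sup_of_normal_right.1 (le_pClosure_sup_primeToClosure r V hw)
  rw [commutatorElement_mul_mul (h.commute hr ha he) (h.commute hr ha hf) (h.commute hr hb he)
    (h.commute hr hb hf)]
  exact mul_mem (Subgroup.mem_sup_left (Subgroup.commutator_mem_commutator ha hb))
    (Subgroup.mem_sup_right (Subgroup.commutator_le_self _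
      (Subgroup.commutator_mem_commutator he hf)))

theorem mem_commutator_pClosure [V.Normal] (h : CoprimeCommute V) (hr : r.Prime) {u : G}
    (hu : u ∈ ⁅V, V⁆) (hur : IsPElement r u) : u ∈ ⁅pClosure r V, pClosure r V⁆ := by
  obtain ⟨s, hs, e, he, rfl⟩ := Subgroup.mem_sup_of_normal_right.1 (h.commutator_le hr hu)
  have hsW : s ∈ pClosure r V := Subgroup.commutator_le_self _ hs
  have her : IsPElement r e := by
    simpa only [inv_mul_cancel_left] using
      (IsPElement.of_mem (h.isPGroup_pClosure hr) hsW).inv.mul_of_commute hur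
        (((Commute.refl s).mul_right (h.commute hr hsW he)).inv_left)
  have he1 : e = 1 := eq_one_of_mem_primeToClosure hr (fun q hq hqr y hy hyq x hx hxr =>
    h q r hq hr hqr y hy x (primeToClosure_le r V hx) hyq hxr) he her
  rwa [he1, mul_one]

end CoprimeCommute

end CoprimeCommute

/-! ### Lifting from the quotient by `N''` -/

section Lifting

variable {G : Type*} [Group G]

theorem commutatorElement_mem_iff {U : Subgroup G} [U.Normal] {x y : G} :
    ⁅x, y⁆ ∈ U ↔ Commute (QuotientGroup.mk' U x) (QuotientGroup.mk' U y) := by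
  rw [← commutatorElement_eq_one_iff_commute, ← map_commutatorElement, ← MonoidHom.mem_ker,
    QuotientGroup.ker_mk']

theorem le_of_commutator_le_of_le_sup [Group.IsSolvable G] {N P K : Subgroup G} [K.Normal]
    (h : N ≤ P ⊔ K) (hP : ⁅P, P⁆ ≤ ⁅⁅N, N⁆, ⁅N, N⁆⁆) : ⁅N, N⁆ ≤ K := by
  let κ := QuotientGroup.mk' K
  have hNP : N.map κ ≤ P.map κ := by
    rw [Subgroup.map_le_map_iff, QuotientGroup.ker_mk']
    exact h
  have hperfect : ⁅N, N⁆.map κ ≤ ⁅⁅N, N⁆.map κ, ⁅N, N⁆.map κ⁆ :=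
    calc ⁅N, N⁆.map κ = ⁅N.map κ, N.map κ⁆ := Subgroup.map_commutator _ _ _
      _ ≤ ⁅P.map κ, P.map κ⁆ := Subgroup.commutator_mono hNP hNP
      _ = ⁅P, P⁆.map κ := (Subgroup.map_commutator _ _ _).symm
      _ ≤ ⁅⁅N, N⁆, ⁅N, N⁆⁆.map κ := Subgroup.map_mono hP
      _ = _ := Subgroup.map_commutator _ _ _
  have hbot : ⁅N, N⁆.map κ = ⊥ :=
    by_contra fun hne => (Group.IsSolvable.commutator_lt_of_ne_bot hne).not_ge hperfect
  rwa [Subgroup.map_eq_bot_iff, QuotientGroup.ker_mk'] at hbot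

theorem commute_of_conj_mem_zpowers_of_mem {p r : ℕ} (hp : p.Prime) (hr : r.Prime) (hrp : r ≠ p)
    {W : Subgroup G} [hWn : W.Normal] (hW : IsPGroup r W) {x v : G} (hx : IsPElement p x)
    (hv : v ∈ W) (h : v * x * v⁻¹ ∈ Subgroup.zpowers x) : Commute v x := by
  have hvx : ⁅v, x⁆ ∈ W := by
    simpa only [commutatorElement_def, mul_assoc] using
      W.mul_mem hv (hWn.conj_mem _ (W.inv_mem hv) x)
  exact commutatorElement_eq_one_iff_commute.1 <| IsPElement.eq_one hr hp hrp (.of_mem hW hvx)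
    (hx.mem_of_mem_zpowers (mul_mem h (inv_mem (Subgroup.mem_zpowers x))))

theorem Permutes.exists_mul_of_mem_sup {A B : Subgroup G} (h : Permutes A B) {k : G}
    (hk : k ∈ A ⊔ B) : ∃ a ∈ A, ∃ b ∈ B, k = a * b := by
  let X : Subgroup G :=
    { carrier := {k | ∃ a ∈ A, ∃ b ∈ B, k = a * b}
      one_mem' := ⟨1, one_mem A, 1, one_mem B, (mul_one 1).symm⟩
      mul_mem' := by
        rintro _ _ ⟨a, ha, b, hb, rfl⟩ ⟨c, hc, d, hd, rfl⟩
        obtain ⟨c', hc', b', hb', e⟩ := h c hc b hb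
        refine ⟨a * c', mul_mem ha hc', b' * d, mul_mem hb' hd, ?_⟩
        calc a * b * (c * d) = a * (b * c) * d := by group
          _ = a * c' * (b' * d) := by rw [e]; group
      inv_mem' := by
        rintro _ ⟨a, ha, b, hb, rfl⟩
        rw [mul_inv_rev]
        exact h _ (inv_mem ha) _ (inv_mem hb) }
  have hle : A ⊔ B ≤ X := sup_le (fun a ha => ⟨a, ha, 1, one_mem B, (mul_one a).symm⟩)
    fun b hb => ⟨1, one_mem A, b, hb, (one_mul b).symm⟩
  exact hle hk

theorem IsSylowIn.exists_conj_mem {p : ℕ} (hp : p.Prime) {R : Subgroup G}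
    (hR : IsSylowIn p R ⊤) {x : G} (hx : IsPElement p x) : ∃ g : G, g * x * g⁻¹ ∈ R := by
  have := Fact.mk hp
  have hindex : ¬ p ∣ Nat.card (G ⧸ R) := by
    have := hR.not_dvd
    rwa [Subgroup.relIndex_top_right] at this
  obtain ⟨c, hc⟩ := hx.isPGroup_zpowers.nonempty_fixed_point_of_prime_not_dvd_card (G ⧸ R) hindex
  obtain ⟨g, rfl⟩ := QuotientGroup.mk_surjective c
  have hfixed : ((x * g : G) : G ⧸ R) = (g : G ⧸ R) := hc ⟨x, Subgroup.mem_zpowers x⟩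
  rw [eq_comm, QuotientGroup.eq] at hfixed
  exact ⟨g⁻¹, by rwa [inv_inv, mul_assoc]⟩

variable [Finite G]

theorem IsSylowIn.le_sup_primeToClosure {p : ℕ} {P K : Subgroup G} (hP : IsSylowIn p P K) :
    K ≤ P ⊔ primeToClosure p K := by
  refine le_of_forall_isSylowIn_le fun q hq => ?_
  rcases eq_or_ne q p with rfl | hqp
  · exact ⟨P, hP, le_sup_left⟩
  · obtain ⟨Q, hQ⟩ := exists_isSylowIn hq K
    exact ⟨Q, hQ, fun z hz => Subgroup.mem_sup_right
      (mem_primeToClosure (hQ.le hz) hq hqp (.of_mem hQ.isPGroup hz))⟩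

theorem eq_top_of_sup_commutator_eq_top [Group.IsNilpotent G] {C : Subgroup G}
    (h : C ⊔ commutator G = ⊤) : C = ⊤ := by
  by_contra hC
  obtain ⟨M, hM, hCM⟩ := (eq_top_or_exists_le_coatom C).resolve_left hC
  have hMn : M.Normal :=
    Subgroup.NormalizerCondition.normal_of_coatom M Group.normalizerCondition_of_isNilpotent hM
  have hsup : ⊤ ≤ commutator G ⊔ M := by
    rw [← h, sup_comm]
    exact sup_le_sup_left hCM _
  have hle : commutator G ≤ M := le_of_commutator_le_of_le_sup (P := commutator G) hsup le_rfl
  exact hM.1 (top_le_iff.1 (h.symm.le.trans (sup_le hCM hle)))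

theorem le_of_isNilpotent_of_forall_exists_mul_mem {P C : Subgroup G} [Group.IsNilpotent P]
    (h : ∀ v ∈ P, ∃ s ∈ ⁅P, P⁆, v * s ∈ C) : P ≤ C := by
  refine Subgroup.subgroupOf_eq_top.1 (eq_top_of_sup_commutator_eq_top (top_le_iff.1 ?_))
  rintro ⟨v, hv⟩ -
  obtain ⟨s, hs, hvs⟩ := h v hv
  rw [← Subgroup.map_subtype_commutator] at hs
  obtain ⟨t, ht, rfl⟩ := hs
  have hvt : (⟨v, hv⟩ : P) * t ∈ C.subgroupOf P := hvs
  rw [← mul_inv_cancel_right (⟨v, hv⟩ : P) t]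
  exact mul_mem (Subgroup.mem_sup_left hvt) (Subgroup.mem_sup_right (inv_mem ht))

theorem Permutes.isPGroup_sup {p : ℕ} (hp : p.Prime) {A B : Subgroup G} (h : Permutes A B)
    (hA : IsPGroup p A) (hB : IsPGroup p B) : IsPGroup p (A ⊔ B : Subgroup G) := by
  have := Fact.mk hp
  have hmul : ∀ k : (A ⊔ B : Subgroup G), ∃ a ∈ A.subgroupOf (A ⊔ B), ∃ b ∈ B.subgroupOf (A ⊔ B),
      k = a * b := by
    rintro ⟨_, hk⟩
    obtain ⟨a, ha, b, hb, rfl⟩ := h.exists_mul_of_mem_sup hk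
    exact ⟨⟨a, Subgroup.mem_sup_left ha⟩, ha, ⟨b, Subgroup.mem_sup_right hb⟩, hb, rfl⟩
  obtain ⟨n, hn⟩ := exists_index_eq_prime_pow hp (hA.comap_subtype (K := A ⊔ B)) hmul
  obtain ⟨m, hm⟩ := IsPGroup.iff_card.1 (hB.comap_subtype (K := A ⊔ B))
  refine IsPGroup.of_card (n := m + n) ?_
  rw [← Subgroup.card_mul_index (B.subgroupOf (A ⊔ B)), pow_add]
  exact congrArg₂ _ hm hn

theorem commutator_le_of_isSylowIn_of_commutatorElement_notMem {U : Subgroup G} [U.Normal]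
    (hS : SmallerNormalizes (G ⧸ U)) {r s : ℕ} (hr : r.Prime) (hs : s.Prime) (hsr : s < r)
    {R : Subgroup G} (hR : IsSylowIn r R ⊤) {x y : G} (hx : IsPElement r x) (hy : IsPElement s y)
    (hxy : ⁅y, x⁆ ∉ U) : ⁅R, R⁆ ≤ U := by
  let π := QuotientGroup.mk' U
  obtain ⟨g, hg⟩ := hR.exists_conj_mem hr hx
  have hRπ := hR.isPGroup.map π
  have hyπ := (hy.conj g).map π
  rcases commute_or_commute_of_isPGroup hr hs hsr.ne' hRπ hyπ
    (fun z hz => hS r s hr hs hsr z _ (.of_mem hRπ hz) hyπ) with hab | hcentral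
  · rw [Subgroup.commutator_le]
    exact fun a ha b hb => commutatorElement_mem_iff.2
      (hab _ (Subgroup.mem_map_of_mem π ha) _ (Subgroup.mem_map_of_mem π hb))
  · refine absurd (commutatorElement_mem_iff.2 ((Commute.conj_iff (π g)).1 ?_)) hxy
    simpa only [map_mul, map_inv] using hcentral _ (Subgroup.mem_map_of_mem π hg)

theorem HasLocalStructureIn.eq_one_of_commute {N : Subgroup G} [N.Normal]
    (hN : HasLocalStructureIn N) {r : ℕ} (hr : r.Prime)
    (h : ∀ x ∈ N, IsPElement r x → ∀ v ∈ ⁅N, N⁆, Commute x v) {u : G}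
    (hu : u ∈ ⁅⁅N, N⁆, ⁅N, N⁆⁆) (hur : IsPElement r u) : u = 1 := by
  have hbot : ⁅pClosure r ⁅N, N⁆, pClosure r ⁅N, N⁆⁆ ≤ ⊥ := by
    rw [Subgroup.commutator_le]
    intro a ha b hb
    rw [Subgroup.mem_bot, commutatorElement_eq_one_iff_commute]
    exact h a (Subgroup.commutator_le_self N (pClosure_le _ _ ha))
      (.of_mem (hN.coprimeCommute.isPGroup_pClosure hr) ha) b (pClosure_le _ _ hb)
  exact Subgroup.mem_bot.1 (hbot (hN.coprimeCommute.mem_commutator_pClosure hr hu hur))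

variable [Group.IsSolvable G] {N U : Subgroup G} [N.Normal] [U.Normal]

namespace HasLocalStructureIn

theorem eq_one_of_commutatorElement_notMem (hN : HasLocalStructureIn N)
    (hU : U ≤ ⁅⁅N, N⁆, ⁅N, N⁆⁆) (hS : SmallerNormalizes (G ⧸ U)) {r s : ℕ} (hr : r.Prime)
    (hs : s.Prime) (hsr : s < r) {x y : G} (hx : IsPElement r x) (hy : IsPElement s y)
    (hxy : ⁅y, x⁆ ∉ U) {u : G} (hu : u ∈ U) (hur : IsPElement r u) : u = 1 := by
  rcases hN r hr with hcomm | heq_one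
  · exact hN.eq_one_of_commute hr hcomm (hU hu) hur
  obtain ⟨R₀, hR₀⟩ := exists_isSylowIn hr N
  obtain ⟨R, hR, hRR⟩ := IsSylowIn.exists_ge hr hR₀.isPGroup (le_top (a := R₀))
  have hRU := commutator_le_of_isSylowIn_of_commutatorElement_notMem hS hr hs hsr hR hx hy hxy
  have hNK : ⁅N, N⁆ ≤ primeToClosure r N := le_of_commutator_le_of_le_sup
    (hR₀.le_sup_primeToClosure.trans (sup_le_sup_right hRR _)) (hRU.trans hU)
  exact heq_one u (hNK (Subgroup.commutator_le_self _ (hU hu))) hur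

theorem commutatorElement_mem (hN : HasLocalStructureIn N)
    (hU : U ≤ ⁅⁅N, N⁆, ⁅N, N⁆⁆) (hS : SmallerNormalizes (G ⧸ U)) {p r : ℕ} (hp : p.Prime)
    (hr : r.Prime) (hrp : r ≠ p) {u : G} (hu : u ∈ U) (hur : IsPElement r u) (hu1 : u ≠ 1)
    {W : Subgroup G} [W.Normal] (hW : IsPGroup r W) {x v : G} (hx : IsPElement p x)
    (hv : v ∈ W) : ⁅v, x⁆ ∈ U := by
  let π := QuotientGroup.mk' U
  have hvr : IsPElement r v := .of_mem hW hv
  rcases lt_or_gt_of_ne hrp with hlt | hlt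
  · have : (W.map π).Normal := Subgroup.Normal.map ‹_› π (QuotientGroup.mk'_surjective U)
    exact commutatorElement_mem_iff.2 <| commute_of_conj_mem_zpowers_of_mem hp hr hrp (hW.map π)
      (hx.map π) (Subgroup.mem_map_of_mem π hv) (hS p r hp hr hlt _ _ (hx.map π) (hvr.map π))
  · by_contra hvx
    refine hu1 (hN.eq_one_of_commutatorElement_notMem hU hS hr hp hlt hvr hx (fun hxv => hvx ?_)
      hu hur)
    rw [← commutatorElement_inv]
    exact inv_mem hxv

theorem commute (hN : HasLocalStructureIn N) (hU : U ≤ ⁅⁅N, N⁆, ⁅N, N⁆⁆)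
    (hS : SmallerNormalizes (G ⧸ U)) {p r : ℕ} (hp : p.Prime) (hr : r.Prime) (hrp : r ≠ p)
    {x u : G} (hx : IsPElement p x) (hu : u ∈ U) (hur : IsPElement r u) : Commute x u := by
  have := Fact.mk hr
  rcases eq_or_ne u 1 with rfl | hu1
  · exact Commute.one_right x
  let W := pClosure r ⁅N, N⁆
  have hW : IsPGroup r W := hN.coprimeCommute.isPGroup_pClosure hr
  have hWW : ⁅W, W⁆ ≤ W := Subgroup.commutator_le_self W
  have hcard : ¬ p ∣ Nat.card (⁅W, W⁆ : Subgroup G) := by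
    obtain ⟨n, hn⟩ := IsPGroup.iff_card.1 (hW.to_le hWW)
    rw [hn]
    exact fun hdvd => hrp ((Nat.prime_dvd_prime_iff_eq hp hr).1 (hp.dvd_of_dvd_pow hdvd)).symm
  have hcomm : ∀ v ∈ W, v⁻¹ * (x * v * x⁻¹) ∈ ⁅W, W⁆ := by
    intro v hv
    have hvx : ⁅v⁻¹, x⁆ = v⁻¹ * (x * v * x⁻¹) := by rw [commutatorElement_def]; group
    rw [← hvx]
    have hvxW : ⁅v⁻¹, x⁆ ∈ W := Subgroup.commutator_le_left W ⊤
      (Subgroup.commutator_mem_commutator (W.inv_mem hv) trivial)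
    exact hN.coprimeCommute.mem_commutator_pClosure hr
      (hU (hN.commutatorElement_mem hU hS hp hr hrp hu hur hu1 hW hx (W.inv_mem hv)))
      (.of_mem hW hvxW)
  have hle : W ≤ Subgroup.centralizer {x} := by
    have := hW.isNilpotent
    refine le_of_isNilpotent_of_forall_exists_mul_mem fun v hv => ?_
    obtain ⟨s, hs, hsx⟩ := hx.exists_commute_mul hp hcard
      (fun s hs => (inferInstance : (⁅W, W⁆ : Subgroup G).Normal).conj_mem s hs x) (hcomm v hv)
    exact ⟨s, hs, Subgroup.mem_centralizer_singleton_iff.2 hsx.eq.symm⟩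
  exact (Subgroup.mem_centralizer_singleton_iff.1
    (hle (hWW (hN.coprimeCommute.mem_commutator_pClosure hr (hU hu) hur)))).symm

theorem isPGroup_pClosure (hN : HasLocalStructureIn N) (hU : U ≤ ⁅⁅N, N⁆, ⁅N, N⁆⁆)
    (hS : SmallerNormalizes (G ⧸ U)) {p : ℕ} (hp : p.Prime) {T : Subgroup G}
    (hT : ∀ t ∈ T, IsPElement p (QuotientGroup.mk' U t)) : IsPGroup p (pClosure p T) := by
  refine _root_.isPGroup_pClosure hp fun q hq hqp y hy hyq x _ hxp => ?_
  have hyU := (hyq.map (QuotientGroup.mk' U)).eq_one hq hp hqp (hT y (pClosure_le p T hy))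
  exact (hN.commute hU hS hp hq hqp hxp ((QuotientGroup.eq_one_iff y).1 hyU) hyq).symm

theorem isPElement_conj_mul_zpow (hN : HasLocalStructureIn N)
    (hU : U ≤ ⁅⁅N, N⁆, ⁅N, N⁆⁆) (hS : SmallerNormalizes (G ⧸ U)) {p : ℕ} (hp : p.Prime)
    {x y : G} (hx : IsPElement p x) (hyx : QuotientGroup.mk' U (y * x * y⁻¹) ∈
      Subgroup.zpowers (QuotientGroup.mk' U x)) (k : ℤ) :
    IsPElement p (y * x * y⁻¹ * (x ^ k)⁻¹) := by
  let π := QuotientGroup.mk' U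
  let T := (Subgroup.zpowers (π x)).comap π
  have hT : IsPGroup p (pClosure p T) :=
    hN.isPGroup_pClosure hU hS hp fun _ ht => (hx.map π).mem_of_mem_zpowers ht
  have hxT : x ∈ pClosure p T := mem_pClosure (Subgroup.mem_zpowers (π x)) hx
  exact .of_mem hT (mul_mem (mem_pClosure hyx (hx.conj y)) (inv_mem (zpow_mem hxT k)))

theorem isPElement_commutatorElement (hN : HasLocalStructureIn N)
    (hU : U ≤ ⁅⁅N, N⁆, ⁅N, N⁆⁆) (hS : SmallerNormalizes (G ⧸ U)) {p : ℕ} (hp : p.Prime)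
    {x y : G} (hx : IsPElement p x) (hyx : ⁅y, x⁆ ∈ U) : IsPElement p ⁅y, x⁆ := by
  have hconj : QuotientGroup.mk' U (y * x * y⁻¹) ∈ Subgroup.zpowers (QuotientGroup.mk' U x) := by
    rw [map_mul, map_mul, (commutatorElement_mem_iff.1 hyx).eq, map_inv, mul_inv_cancel_right]
    exact Subgroup.mem_zpowers _
  simpa only [zpow_one, ← commutatorElement_def] using
    hN.isPElement_conj_mul_zpow hU hS hp hx hconj 1

theorem commute_of_commutatorElement_mem (hN : HasLocalStructureIn N)
    (hU : U ≤ ⁅⁅N, N⁆, ⁅N, N⁆⁆) (hS : SmallerNormalizes (G ⧸ U)) {p q : ℕ} (hp : p.Prime)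
    (hq : q.Prime) (hpq : p ≠ q) {x y : G} (hx : IsPElement p x) (hy : IsPElement q y)
    (hyx : ⁅y, x⁆ ∈ U) : Commute y x := by
  have hxy : ⁅x, y⁆ ∈ U := by
    rw [← commutatorElement_inv]
    exact inv_mem hyx
  have hyxp := hN.isPElement_commutatorElement hU hS hp hx hyx
  have hyxq := (hN.isPElement_commutatorElement hU hS hq hy hxy).inv
  rw [commutatorElement_inv] at hyxq
  exact commutatorElement_eq_one_iff_commute.1 (hyxp.eq_one hp hq hpq hyxq)

theorem smallerNormalizes (hN : HasLocalStructureIn N) (hU : U ≤ ⁅⁅N, N⁆, ⁅N, N⁆⁆)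
    (hS : SmallerNormalizes (G ⧸ U)) : SmallerNormalizes G := by
  intro p q hp hq hqp x y hx hy
  let π := QuotientGroup.mk' U
  by_cases hc : ⁅y, x⁆ ∈ U
  · rw [(hN.commute_of_commutatorElement_mem hU hS hp hq hqp.ne' hx hy hc).eq,
      mul_inv_cancel_right]
    exact Subgroup.mem_zpowers x
  · have hyx : π (y * x * y⁻¹) ∈ Subgroup.zpowers (π x) :=
      hS p q hp hq hqp (π x) (π y) (hx.map π) (hy.map π)
    obtain ⟨k, hk⟩ := Subgroup.mem_zpowers_iff.1 hyx
    have hu : y * x * y⁻¹ * (x ^ k)⁻¹ ∈ U := by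
      refine (QuotientGroup.eq_one_iff _).1 (?_ : π (y * x * y⁻¹ * (x ^ k)⁻¹) = 1)
      rw [map_mul, ← hk, map_inv, map_zpow, mul_inv_cancel]
    exact Subgroup.mem_zpowers_iff.2 ⟨k, (mul_inv_eq_one.1
      (hN.eq_one_of_commutatorElement_notMem hU hS hp hq hqp hx hy hc hu
        (hN.isPElement_conj_mul_zpow hU hS hp hx hyx k))).symm⟩

theorem permutes_of_map (hN : HasLocalStructureIn N) (hU : U ≤ ⁅⁅N, N⁆, ⁅N, N⁆⁆)
    (hS : SmallerNormalizes (G ⧸ U)) {p : ℕ} (hp : p.Prime) {A B : Subgroup G}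
    (hA : IsPGroup p A) (hB : IsPGroup p B) (hUB : pClosure p U ≤ B)
    (h : Permutes (A.map (QuotientGroup.mk' U)) (B.map (QuotientGroup.mk' U))) :
    Permutes A B := by
  let π := QuotientGroup.mk' U
  let T := (A.map π ⊔ B.map π).comap π
  have hT : IsPGroup p (pClosure p T) := hN.isPGroup_pClosure hU hS hp fun _ ht =>
    .of_mem (h.isPGroup_sup hp (hA.map π) (hB.map π)) ht
  have hAT : ∀ a ∈ A, a ∈ pClosure p T := fun a ha =>
    mem_pClosure (Subgroup.mem_sup_left (Subgroup.mem_map_of_mem π ha)) (.of_mem hA ha)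
  have hBT : ∀ b ∈ B, b ∈ pClosure p T := fun b hb =>
    mem_pClosure (Subgroup.mem_sup_right (Subgroup.mem_map_of_mem π hb)) (.of_mem hB hb)
  intro a ha b hb
  obtain ⟨_, ⟨a', ha', rfl⟩, _, ⟨b', hb', rfl⟩, e⟩ :=
    h _ (Subgroup.mem_map_of_mem π ha) _ (Subgroup.mem_map_of_mem π hb)
  have hu : (a' * b')⁻¹ * (b * a) ∈ U := QuotientGroup.eq.1 e.symm
  have hup : IsPElement p ((a' * b')⁻¹ * (b * a)) := .of_mem hT
    (mul_mem (inv_mem (mul_mem (hAT a' ha') (hBT b' hb'))) (mul_mem (hBT b hb) (hAT a ha)))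
  refine ⟨a', ha', b' * ((a' * b')⁻¹ * (b * a)), mul_mem hb' (hUB (mem_pClosure hu hup)), ?_⟩
  rw [← mul_assoc, mul_inv_cancel_left]

theorem ssPermIn (hN : HasLocalStructureIn N) (hU : U ≤ ⁅⁅N, N⁆, ⁅N, N⁆⁆)
    (hS : SmallerNormalizes (G ⧸ U)) {p : ℕ} (hp : p.Prime) {A : Subgroup G} (hA : IsPGroup p A)
    (h : SSPermIn (A.map (QuotientGroup.mk' U)) ⊤) : SSPermIn A ⊤ := by
  let π := QuotientGroup.mk' U
  have hπ : Function.Surjective π := QuotientGroup.mk'_surjective U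
  obtain ⟨L, -, hmul, hL⟩ := h
  refine ⟨L.comap π, le_top, fun k _ => ?_, fun q hq R hR => ?_⟩
  · obtain ⟨_, ⟨a, ha, rfl⟩, l, hl, e⟩ := hmul (π k) trivial
    refine ⟨a, ha, a⁻¹ * k, ?_, (mul_inv_cancel_left a k).symm⟩
    rw [Subgroup.mem_comap, map_mul, e, map_inv, inv_mul_cancel_left]
    exact hl
  rcases ne_or_eq q p with hqp | rfl
  · exact (hN.smallerNormalizes hU hS).permutes hp hq hqp hA hR.isPGroup
  have hπU : ∀ u ∈ U, π u = 1 := fun u hu => (QuotientGroup.eq_one_iff u).2 hu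
  have hUq : IsPGroup q (pClosure q U) := hN.isPGroup_pClosure hU hS hq fun u hu => by
    rw [hπU u hu]
    exact .one q
  have hUR : pClosure q U ≤ R := hR.le_of_normal hq hUq fun u hu => by
    rw [Subgroup.mem_comap, hπU u (pClosure_le q U hu)]
    exact one_mem L
  refine hN.permutes_of_map hU hS hq hA hR.isPGroup hUR (hL q hq _ ?_)
  simpa only [Subgroup.map_comap_eq_self_of_surjective hπ] using hR.map π

end HasLocalStructureIn

end Lifting

/-! ### The characterizations -/

section Characterization

variable {G : Type*} [Group G]

theorem isPSTGroup_of_subsingleton (G : Type*) [Group G] [Subsingleton G] : IsPSTGroup G :=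
  fun H K _ _ hK => Subsingleton.elim K H ▸ hK

theorem map_subtype_derivedSeries_two (N : Subgroup G) :
    (derivedSeries N 2).map N.subtype = ⁅⁅N, N⁆, ⁅N, N⁆⁆ := by
  rw [derivedSeries_succ, derivedSeries_one, Subgroup.map_commutator,
    Subgroup.map_subtype_commutator]

theorem isSolvable_of_isSolvable_quotient_map_subtype {N : Subgroup G} (K : Subgroup N)
    [Group.IsSolvable N] [(K.map N.subtype).Normal] [Group.IsSolvable (G ⧸ K.map N.subtype)] :
    Group.IsSolvable G :=
  Group.isSolvable_of_ker_le_range N.subtype (QuotientGroup.mk' (K.map N.subtype)) <| by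
    rw [QuotientGroup.ker_mk', N.range_subtype]
    exact Subgroup.map_subtype_le K

variable [Finite G] (N : Subgroup G) [N.Normal] [((derivedSeries N 2).map N.subtype).Normal]
  [Group.IsSolvable N] [Group.IsSolvable (G ⧸ (derivedSeries N 2).map N.subtype)]

theorem IsPSTGroup.smallerNormalizes (hN : IsPSTGroup N)
    (h : SmallerNormalizes (G ⧸ (derivedSeries N 2).map N.subtype)) : SmallerNormalizes G :=
  have := isSolvable_of_isSolvable_quotient_map_subtype (derivedSeries N 2)
  hN.hasLocalStructure.hasLocalStructureIn.smallerNormalizes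
    (map_subtype_derivedSeries_two N).le h

theorem IsBTGroup.of_quotient_derivedSeries_two (hN : IsPSTGroup N)
    (h : IsBTGroup (G ⧸ (derivedSeries N 2).map N.subtype)) : IsBTGroup G :=
  (hN.smallerNormalizes N h.smallerNormalizes).isBTGroup

theorem IsSSTGroup.of_quotient_derivedSeries_two (hN : IsPSTGroup N)
    (h : IsSSTGroup (G ⧸ (derivedSeries N 2).map N.subtype)) : IsSSTGroup G := by
  have := isSolvable_of_isSolvable_quotient_map_subtype (derivedSeries N 2)
  have hL := hN.hasLocalStructure.hasLocalStructureIn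
  refine (hN.smallerNormalizes N h.smallerNormalizes).isSSTGroup fun p hp A hA => ?_
  exact hL.ssPermIn (map_subtype_derivedSeries_two N).le h.smallerNormalizes hp hA
    (h.ssPermIn_of_isPGroup h.hasLocalStructure hp (hA.map _))

end Characterization

/-- Theorem I. -/
theorem theoremI {G : Type*} [Group G] [Finite G] :
    ((IsSolvable G ∧ IsSSTGroup G) ↔
      ∃ (N : Subgroup G) (_ : N.Normal)
        (hM : ((derivedSeries N 2).map N.subtype).Normal),
        (IsSolvable N ∧ IsPSTGroup N) ∧
          (letI := hM
           IsSolvable (G ⧸ (derivedSeries N 2).map N.subtype) ∧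
             IsSSTGroup (G ⧸ (derivedSeries N 2).map N.subtype))) ∧
    ((IsSolvable G ∧ IsBTGroup G) ↔
      ∃ (N : Subgroup G) (_ : N.Normal)
        (hM : ((derivedSeries N 2).map N.subtype).Normal),
        (IsSolvable N ∧ IsPSTGroup N) ∧
          (letI := hM
           IsSolvable (G ⧸ (derivedSeries N 2).map N.subtype) ∧
             IsBTGroup (G ⧸ (derivedSeries N 2).map N.subtype))) := by
  refine ⟨⟨?_, ?_⟩, ⟨?_, ?_⟩⟩
  · rintro ⟨(_ : Group.IsSolvable G), hG⟩
    exact ⟨⊥, inferInstance, inferInstance,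
      ⟨(inferInstance : Group.IsSolvable _), isPSTGroup_of_subsingleton _⟩,
      (inferInstance : Group.IsSolvable _), hG.of_surjective (QuotientGroup.mk'_surjective _)⟩
  · rintro ⟨N, _, _, ⟨(_ : Group.IsSolvable N), hN⟩, (_ : Group.IsSolvable (G ⧸ _)), hGN⟩
    exact ⟨isSolvable_of_isSolvable_quotient_map_subtype (derivedSeries N 2),
      .of_quotient_derivedSeries_two N hN hGN⟩
  · rintro ⟨(_ : Group.IsSolvable G), hG⟩
    refine ⟨⊥, inferInstance, inferInstance,
      ⟨(inferInstance : Group.IsSolvable _), isPSTGroup_of_subsingleton _⟩,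
      (inferInstance : Group.IsSolvable _), hG.of_surjective (QuotientGroup.mk'_surjective _) ?_⟩
    rw [QuotientGroup.ker_mk', Subsingleton.elim (derivedSeries _ 2) ⊥, Subgroup.map_bot,
      Subgroup.card_bot]
    exact Nat.coprime_one_left _
  · rintro ⟨N, _, _, ⟨(_ : Group.IsSolvable N), hN⟩, (_ : Group.IsSolvable (G ⧸ _)), hGN⟩
    exact ⟨isSolvable_of_isSolvable_quotient_map_subtype (derivedSeries N 2),
      .of_quotient_derivedSeries_two N hN hGN⟩
end

section
/- If a subgroup H of a finite group G is SS-permutable in G, then H is S-semipermutable in G, i.e., H permutes with every Sylow q-subgroup of G for every prime q not dividing |H|. -/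
open scoped Pointwise

/-!
Suppose `G = HK` and `q ∤ |H|`. Then `H` acts transitively on `G ⧸ K`, so `|G : K|` divides `|H|`
and is prime to `q`. A Sylow `q`-subgroup `Q` of `G` acts on `G ⧸ K` by left multiplication and, by
counting modulo `q`, fixes a coset `gK`; thus `Q ≤ gKg⁻¹`. Writing `g = ak` with `a ∈ H` and `k ∈ K`
gives `a⁻¹Qa ≤ K`, so `a⁻¹Qa` is a Sylow subgroup of `K`, with which `H` permutes. Conjugating by
`a ∈ H` shows that `H` permutes with `Q`.
-/

section

variable {G : Type*} [Group G] {H K P : Subgroup G}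

theorem isPretransitive_quotient_of_mul_eq_univ (hHK : (H : Set G) * (K : Set G) = Set.univ) :
    MulAction.IsPretransitive H (G ⧸ K) := by
  refine (MulAction.isPretransitive_iff_base ((1 : G) : G ⧸ K)).2 fun x => ?_
  induction x using QuotientGroup.induction_on with | H g => ?_
  obtain ⟨a, ha, k, hk, rfl⟩ : g ∈ (H : Set G) * (K : Set G) := hHK ▸ Set.mem_univ g
  refine ⟨⟨a, ha⟩, ?_⟩
  calc ((a * 1 : G) : G ⧸ K) = (a : G ⧸ K) := by rw [mul_one]
    _ = ((a * k : G) : G ⧸ K) := (QuotientGroup.mk_mul_of_mem a hk).symm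

theorem index_dvd_card_of_mul_eq_univ (hHK : (H : Set G) * (K : Set G) = Set.univ) :
    K.index ∣ Nat.card H := by
  have := isPretransitive_quotient_of_mul_eq_univ hHK
  rw [Subgroup.index, ← MulAction.index_stabilizer_of_transitive H ((1 : G) : G ⧸ K)]
  exact Subgroup.index_dvd_card _

theorem exists_le_conj_smul_of_not_dvd_index {p : ℕ} [Fact p.Prime] (hP : IsPGroup p P)
    (hK : ¬ p ∣ K.index) : ∃ g : G, P ≤ MulAut.conj g • K := by
  obtain ⟨x, hx⟩ := hP.nonempty_fixed_point_of_prime_not_dvd_card (G ⧸ K) hK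
  induction x using QuotientGroup.induction_on with | H g => ?_
  refine ⟨g, fun y hy => ?_⟩
  have hfix : (g : G ⧸ K) = ((y * g : G) : G ⧸ K) := (hx ⟨y, hy⟩).symm
  rw [Subgroup.mem_pointwise_smul_iff_inv_smul_mem, ← map_inv, MulAut.smul_def, MulAut.conj_apply,
    inv_inv, mul_assoc]
  exact QuotientGroup.eq.1 hfix

theorem exists_mem_conj_smul_eq_of_mul_eq_univ (hHK : (H : Set G) * (K : Set G) = Set.univ)
    (g : G) : ∃ a ∈ H, MulAut.conj a • K = MulAut.conj g • K := by
  obtain ⟨a, ha, k, hk, rfl⟩ : g ∈ (H : Set G) * (K : Set G) := hHK ▸ Set.mem_univ g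
  exact ⟨a, ha, by rw [map_mul, mul_smul, Subgroup.conj_smul_eq_self_of_mem hk]⟩

theorem mul_conj_smul_comm_of_mem (hP : (H : Set G) * (P : Set G) = (P : Set G) * (H : Set G))
    {a : G} (ha : a ∈ H) :
    (H : Set G) * ((MulAut.conj a • P : Subgroup G) : Set G) =
      ((MulAut.conj a • P : Subgroup G) : Set G) * (H : Set G) := by
  have hH : MulAut.conj a • (H : Set G) = H := by
    rw [← Subgroup.coe_pointwise_smul, Subgroup.conj_smul_eq_self_of_mem ha]
  rw [Subgroup.coe_pointwise_smul]
  calc (H : Set G) * MulAut.conj a • (P : Set G)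
      = MulAut.conj a • ((H : Set G) * (P : Set G)) := by rw [smul_mul', hH]
    _ = MulAut.conj a • ((P : Set G) * (H : Set G)) := by rw [hP]
    _ = MulAut.conj a • (P : Set G) * H := by rw [smul_mul', hH]

namespace IsSSSupplement

variable {q : ℕ} [Fact q.Prime]

theorem mul_sylow_comm_of_le (hK : IsSSSupplement H K) {Q : Sylow q G} (hQ : Q ≤ K) :
    (H : Set G) * ((Q : Subgroup G) : Set G) = ((Q : Subgroup G) : Set G) * (H : Set G) := by
  have hcomm := hK.2 q (Q.subtype hQ)
  rwa [Sylow.coe_subtype, Subgroup.map_subgroupOf_eq_of_le hQ] at hcomm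

theorem mul_sylow_comm_of_not_dvd_index (hK : IsSSSupplement H K) (hq : ¬ q ∣ K.index)
    (Q : Sylow q G) :
    (H : Set G) * ((Q : Subgroup G) : Set G) = ((Q : Subgroup G) : Set G) * (H : Set G) := by
  obtain ⟨g, hQg⟩ := exists_le_conj_smul_of_not_dvd_index Q.isPGroup' hq
  obtain ⟨a, ha, hag⟩ := exists_mem_conj_smul_eq_of_mul_eq_univ hK.1 g
  have hle : (a⁻¹ • Q : Sylow q G) ≤ K := by
    rw [Sylow.coe_subgroup_smul, Subgroup.pointwise_smul_subset_iff, ← map_inv, inv_inv, hag]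
    exact hQg
  have hcomm := mul_conj_smul_comm_of_mem (hK.mul_sylow_comm_of_le hle) ha
  rwa [← Sylow.coe_subgroup_smul, smul_inv_smul] at hcomm

end IsSSSupplement

end

theorem isSSemipermutable_of_isSSPermutable_general {G : Type*} [Group G] (H : Subgroup G)
    [Finite H] (h : IsSSPermutable H) : IsSSemipermutable H := by
  obtain ⟨K, hK⟩ := h
  intro q _ hq Q
  have hindex : ¬ q ∣ K.index := fun hd => hq (hd.trans (index_dvd_card_of_mul_eq_univ hK.1))
  exact hK.mul_sylow_comm_of_not_dvd_index hindex Q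

/-- Lemma 2.1(4): every SS-permutable subgroup is S-semipermutable. -/
theorem isSSemipermutable_of_isSSPermutable {G : Type*} [Group G] [Finite G]
    (H : Subgroup G) (h : IsSSPermutable H) : IsSSemipermutable H :=
  isSSemipermutable_of_isSSPermutable_general H h
end

section
/- Let H be a p-subgroup of a finite group G, for a prime p dividing |G|, and suppose H is SS-permutable in G with SS-permutable supplement K. Then HK_p is a Sylow p-subgroup of G for every Sylow p-subgroup K_p of K. -/
open scoped Pointwise

/-!
If `Q ≥ H` is a `p`-subgroup containing `K_p`, then `K ∩ Q` is a `p`-subgroup of `K` containing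
`K_p`, so `K ∩ Q = K_p` and Dedekind's law gives `Q = H(K ∩ Q) = HK_p`. Hence the subgroup `HK_p`
is a maximal `p`-subgroup as soon as it is a `p`-group at all. It is one because `|HK_p : K_p|`
equals `|H : H ∩ K_p|`, a power of `p`; the normal core of `K_p` in `HK_p` then also has index a
power of `p`, and raising an element to this power moves it into `K_p`.
-/

section Permuting

variable {G : Type*} [Group G] {A B M : Subgroup G}

theorem coe_sup_eq_mul_of_mul_comm (h : (A : Set G) * (B : Set G) = (B : Set G) * (A : Set G)) :
    ((A ⊔ B : Subgroup G) : Set G) = (A : Set G) * (B : Set G) := by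
  let product : Subgroup G :=
    { carrier := (A : Set G) * (B : Set G)
      one_mem' := ⟨1, A.one_mem, 1, B.one_mem, one_mul 1⟩
      mul_mem' := fun {x y} hx hy => by
        have hAB : (A : Set G) * B * ((A : Set G) * B) = (A : Set G) * B := calc
          (A : Set G) * B * ((A : Set G) * B) = A * ((B : Set G) * A) * B := by
            simp only [mul_assoc]
          _ = (A : Set G) * A * ((B : Set G) * B) := by rw [← h]; simp only [mul_assoc]
          _ = (A : Set G) * B := by rw [coe_mul_coe, coe_mul_coe]
        exact hAB ▸ Set.mul_mem_mul hx hy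
      inv_mem' := fun {x} hx => by
        have hAB : ((A : Set G) * B)⁻¹ = (A : Set G) * B := by
          rw [mul_inv_rev, inv_coe_set, inv_coe_set, h]
        exact hAB ▸ Set.inv_mem_inv.2 hx }
  have hle : A ⊔ B ≤ product :=
    sup_le (fun a ha => ⟨a, ha, 1, B.one_mem, mul_one a⟩)
      (fun b hb => ⟨1, A.one_mem, b, hb, one_mul b⟩)
  refine (SetLike.coe_subset_coe.2 hle).antisymm ?_
  rintro _ ⟨a, ha, b, hb, rfl⟩
  exact Subgroup.mul_mem_sup ha hb

theorem relIndex_eq_relIndex_of_subset_mul (hAM : A ≤ M)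
    (h : (M : Set G) ⊆ (A : Set G) * (B : Set G)) : B.relIndex M = B.relIndex A := by
  let ι := Subgroup.quotientSubgroupOfEmbeddingOfLE B hAM
  have hsurj : Function.Surjective ι := by
    rintro ⟨m⟩
    obtain ⟨a, ha, b, hb, hab : a * b = m⟩ := h m.2
    refine ⟨QuotientGroup.mk ⟨a, ha⟩, QuotientGroup.eq.2 ?_⟩
    simpa [Subgroup.mem_subgroupOf, ← hab] using hb
  exact (Nat.card_congr (Equiv.ofBijective ι ⟨ι.injective, hsurj⟩)).symm

end Permuting

section PGroup

variable {G : Type*} [Group G] {p : ℕ} [Fact p.Prime]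

theorem isPGroup_of_index_eq_pow {B : Subgroup G} (hB : IsPGroup p B) {n : ℕ}
    (hn : B.index = p ^ n) : IsPGroup p G := by
  have : B.FiniteIndex := ⟨hn ▸ pow_ne_zero n (Fact.out : p.Prime).ne_zero⟩
  obtain ⟨m, hm⟩ : ∃ m, B.normalCore.relIndex B = p ^ m := hB.index _
  have hcore : B.normalCore.index = p ^ (m + n) := by
    rw [← Subgroup.relIndex_mul_index B.normalCore_le, hm, hn, pow_add]
  intro x
  have hx : x ^ p ^ (m + n) ∈ B :=
    B.normalCore_le (hcore ▸ B.normalCore.pow_index_mem x)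
  obtain ⟨k, hk⟩ := hB ⟨_, hx⟩
  refine ⟨m + n + k, ?_⟩
  rw [pow_add, pow_mul]
  exact congrArg Subtype.val hk

theorem isPGroup_sup_of_mul_comm {A B : Subgroup G} [B.IsFiniteRelIndex A]
    (hA : IsPGroup p A) (hB : IsPGroup p B)
    (h : (A : Set G) * (B : Set G) = (B : Set G) * (A : Set G)) :
    IsPGroup p (A ⊔ B : Subgroup G) := by
  obtain ⟨n, hn⟩ : ∃ n, B.relIndex A = p ^ n := hA.index _
  have hindex : B.relIndex (A ⊔ B) = p ^ n := by
    rw [relIndex_eq_relIndex_of_subset_mul le_sup_left (coe_sup_eq_mul_of_mul_comm h).subset, hn]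
  exact isPGroup_of_index_eq_pow hB.comap_subtype hindex

end PGroup

section Supplement

variable {G : Type*} [Group G] {p : ℕ} {H K Q : Subgroup G}

theorem inf_eq_map_sylow_of_le (P : Sylow p K) (hQ : IsPGroup p Q)
    (hPQ : P.toSubgroup.map K.subtype ≤ Q) : K ⊓ Q = P.toSubgroup.map K.subtype := by
  rw [← P.is_maximal' (hQ.comap_of_injective K.subtype K.subtype_injective)
    (Subgroup.map_le_iff_le_comap.1 hPQ), ← Subgroup.subgroupOf, Subgroup.subgroupOf_map_subtype,
    inf_comm]

theorem coe_eq_mul_map_sylow_of_le (hHK : (H : Set G) * (K : Set G) = Set.univ) (P : Sylow p K)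
    (hQ : IsPGroup p Q) (hHQ : H ≤ Q) (hPQ : P.toSubgroup.map K.subtype ≤ Q) :
    (Q : Set G) = (H : Set G) * ((P.toSubgroup.map K.subtype : Subgroup G) : Set G) := by
  rw [← inf_eq_map_sylow_of_le P hQ hPQ, Subgroup.mul_inf_assoc H K Q hHQ, hHK, Set.univ_inter]

theorem mul_sylow_of_supplement_is_sylow_general [Fact p.Prime] (hH : IsPGroup p H)
    (hHK : (H : Set G) * (K : Set G) = Set.univ) (Kp : Sylow p K)
    [(Kp.toSubgroup.map K.subtype).IsFiniteRelIndex H]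
    (hcomm : (H : Set G) * ((Kp.toSubgroup.map K.subtype : Subgroup G) : Set G) =
      ((Kp.toSubgroup.map K.subtype : Subgroup G) : Set G) * (H : Set G)) :
    ∃ Q : Sylow p G,
      (H : Set G) * ((Kp.toSubgroup.map K.subtype : Subgroup G) : Set G) =
        ((Q : Subgroup G) : Set G) := by
  have hsup : IsPGroup p (H ⊔ Kp.toSubgroup.map K.subtype : Subgroup G) :=
    isPGroup_sup_of_mul_comm hH (Kp.isPGroup'.map K.subtype) hcomm
  have hcoe := coe_sup_eq_mul_of_mul_comm hcomm
  refine ⟨⟨_, hsup, fun {R} hR hle => SetLike.coe_injective ?_⟩, hcoe.symm⟩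
  rw [hcoe]
  exact coe_eq_mul_map_sylow_of_le hHK Kp hR (le_sup_left.trans hle) (le_sup_right.trans hle)

end Supplement

/-- Lemma 2.1(8): if `H` is an SS-permutable `p`-subgroup with SS-permutable supplement
`K`, then `H·K_p` is a Sylow `p`-subgroup of `G` for every Sylow `p`-subgroup `K_p` of `K`. -/
theorem mul_sylow_of_supplement_is_sylow {G : Type*} [Group G] [Finite G]
    (p : ℕ) (hp : p.Prime) (hdvd : p ∣ Nat.card G)
    (H : Subgroup G) (hH : IsPGroup p H) (K : Subgroup G) (hK : IsSSSupplement H K)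
    (Kp : Sylow p K) :
    ∃ Q : Sylow p G,
      (H : Set G) * ((Kp.toSubgroup.map K.subtype : Subgroup G) : Set G) =
        ((Q : Subgroup G) : Set G) := by
  have : Fact p.Prime := ⟨hp⟩
  have : (Kp.toSubgroup.map K.subtype).IsFiniteRelIndex H :=
    Subgroup.isFiniteRelIndex_of_finiteIndex
  exact mul_sylow_of_supplement_is_sylow_general hH hK.1 Kp (hK.2 p Kp)
end

section
/- A finite solvable group G is a BT-group if and only if every cyclic subgroup of G of prime power order is S-semipermutable in G. -/
/-!
Both conditions say that all subgroups of `G` are semipermutable.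

If `G` is a solvable BT-group, induct on a semipermutable subgroup `K ≠ 1` to see that its
subgroups are all semipermutable in `G`. By solvability `K` has a normal subgroup `N` of prime
index `r`, and `N` is semipermutable in `G` by transitivity. If `H, X ≤ K` have coprime orders, then
`r` fails to divide one of these orders, so one of `H`, `X` lies in `N` and, by induction, permutes
with the other. Hence `H` is semipermutable in `K`, and by transitivity in `G`.

Conversely, let `A` and `B` be a cyclic `p`-subgroup and a cyclic `q`-subgroup with `p ≠ q`,
contained in Sylow subgroups `P` and `Q`. As `P ∩ Q = 1`, we have `AB = AQ ∩ PB` and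
`BA = BP ∩ QA`, so S-semipermutability of `A` and `B` gives `AB = BA`. This extends to all pairs of
subgroups of coprime orders: a finite group is generated by its elements of prime power order, and a
join of subgroups permuting with `X` permutes with `X`.
-/

open scoped Pointwise

section Permutability

variable {G : Type*} [Group G]

theorem commute_coe_of_mul_subset {H X : Subgroup G} (h : (X : Set G) * H ⊆ H * X) :
    Commute (H : Set G) X := by
  refine Set.Subset.antisymm ?_ h
  simpa only [mul_inv_rev, inv_coe_set] using Set.inv_subset_inv.2 h

theorem commute_coe_iSup {ι : Sort*} {H : ι → Subgroup G} {X : Subgroup G}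
    (h : ∀ i, Commute (H i : Set G) X) : Commute ((⨆ i, H i : Subgroup G) : Set G) X := by
  refine commute_coe_of_mul_subset ?_
  rintro _ ⟨x, hx, a, ha, rfl⟩
  refine Subgroup.iSup_induction H
    (C := fun a => ∀ x ∈ X, x * a ∈ ((⨆ i, H i : Subgroup G) : Set G) * X) ha
    (fun i a ha x hx => ?_) (fun x hx => ⟨1, one_mem _, x, hx, by simp⟩)
    (fun a b iha ihb x hx => ?_) x hx
  · have hmem : x * a ∈ (H i : Set G) * X := (h i).eq ▸ Set.mul_mem_mul hx ha
    exact Set.mul_subset_mul_right (le_iSup H i) hmem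
  · obtain ⟨a', ha', y, hy, hay : a' * y = x * a⟩ := iha x hx
    obtain ⟨b', hb', z, hz, hbz : b' * z = y * b⟩ := ihb y hy
    refine ⟨a' * b', mul_mem ha' hb', z, hz, ?_⟩
    calc a' * b' * z = a' * y * b := by rw [mul_assoc, hbz, mul_assoc]
      _ = x * (a * b) := by rw [hay, mul_assoc]

theorem mul_inter_mul_of_disjoint {A B P Q : Subgroup G} (hAP : A ≤ P) (hBQ : B ≤ Q)
    (hPQ : Disjoint P Q) : ((A : Set G) * Q) ∩ ((P : Set G) * B) = A * B := by
  refine Set.Subset.antisymm ?_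
    (Set.subset_inter (Set.mul_subset_mul_left hBQ) (Set.mul_subset_mul_right hAP))
  rintro _ ⟨⟨a, ha, q, hq, rfl⟩, p, hp, b, hb, hpb : p * b = a * q⟩
  have hfactor := Subgroup.mul_injective_of_disjoint hPQ
    (a₁ := (⟨p, hp⟩, ⟨b, hBQ hb⟩)) (a₂ := (⟨a, hAP ha⟩, ⟨q, hq⟩)) hpb
  obtain rfl : b = q := congrArg (fun g => (g.2 : G)) hfactor
  exact ⟨a, ha, b, hb, rfl⟩

theorem commute_coe_of_disjoint {A B P Q : Subgroup G} (hAP : A ≤ P) (hBQ : B ≤ Q)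
    (hPQ : Disjoint P Q) (hAQ : Commute (A : Set G) Q) (hPB : Commute (P : Set G) B) :
    Commute (A : Set G) B :=
  calc (A : Set G) * B
    _ = ((A : Set G) * Q) ∩ ((P : Set G) * B) := (mul_inter_mul_of_disjoint hAP hBQ hPQ).symm
    _ = ((B : Set G) * P) ∩ ((Q : Set G) * A) := by rw [hAQ.eq, hPB.eq, Set.inter_comm]
    _ = B * A := mul_inter_mul_of_disjoint hBQ hAP hPQ.symm

theorem commute_coe_subgroupOf_iff {H X K : Subgroup G} (hHK : H ≤ K) (hXK : X ≤ K) :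
    Commute (H.subgroupOf K : Set K) (X.subgroupOf K) ↔ Commute (H : Set G) X := by
  have himage : ∀ {L : Subgroup G}, L ≤ K → K.subtype '' (L.subgroupOf K : Set K) = L := by
    intro L hL
    rw [← Subgroup.coe_map, Subgroup.map_subgroupOf_eq_of_le hL]
  rw [commute_iff_eq, commute_iff_eq, ← K.subtype_injective.image_injective.eq_iff,
    Set.image_mul, Set.image_mul, himage hHK, himage hXK]

theorem isPrimePow_orderOf_of_isPGroup {p : ℕ} [hp : Fact p.Prime] (hG : IsPGroup p G) {a : G}
    (ha : a ≠ 1) : IsPrimePow (orderOf a) := by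
  obtain ⟨k, hk⟩ := hG.exists_orderOf_eq_pow a
  rw [hk]
  refine hp.out.isPrimePow.pow fun hk0 => ha ?_
  rw [← orderOf_eq_one_iff, hk, hk0, pow_zero]

theorem le_of_forall_isPrimePow_orderOf_mem {H K : Subgroup G} [Finite H]
    (h : ∀ a ∈ H, IsPrimePow (orderOf a) → a ∈ K) : H ≤ K := by
  rw [← Subgroup.subgroupOf_eq_top]
  refine Subgroup.eq_top_of_le_card _ (Nat.le_of_dvd Nat.card_pos ?_)
  refine (Nat.dvd_iff_prime_pow_dvd_dvd _ _).2 fun p k hp hpk => ?_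
  have : Fact p.Prime := ⟨hp⟩
  obtain ⟨P, hP⟩ := Sylow.exists_subgroup_card_pow_prime p hpk
  have hPK : P ≤ K.subgroupOf H := fun a ha => by
    rcases eq_or_ne a 1 with rfl | ha1
    · exact one_mem _
    have ha1' : (⟨a, ha⟩ : P) ≠ 1 := fun h1 => ha1 (congrArg Subtype.val h1)
    have hpp := isPrimePow_orderOf_of_isPGroup (IsPGroup.of_card hP) ha1'
    rw [Subgroup.orderOf_mk, ← Subgroup.orderOf_coe] at hpp
    exact h a a.2 hpp
  exact hP ▸ Subgroup.card_dvd_of_le hPK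

theorem commute_coe_of_forall_isPrimePow_orderOf {H X : Subgroup G} [Finite H]
    (h : ∀ a ∈ H, IsPrimePow (orderOf a) → Commute (Subgroup.zpowers a : Set G) X) :
    Commute (H : Set G) X := by
  have hH : H = ⨆ a : {a // a ∈ H ∧ IsPrimePow (orderOf a)}, Subgroup.zpowers (a : G) := by
    refine le_antisymm ?_ (iSup_le fun a => (Subgroup.zpowers_le (H := H)).2 a.2.1)
    exact le_of_forall_isPrimePow_orderOf_mem fun a ha hpp =>
      Subgroup.mem_iSup_of_mem ⟨a, ha, hpp⟩ (Subgroup.mem_zpowers a)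
  rw [hH]
  exact commute_coe_iSup fun a => h a a.2.1 a.2.2

end Permutability

section PrimeIndex

variable {G : Type*} [Group G]

theorem index_prime_of_isCoatom {A : Type*} [CommGroup A] {M : Subgroup A} (hM : IsCoatom M) :
    M.index.Prime := by
  have := Set.isSimpleOrder_Ici_iff_isCoatom.2 hM
  have : IsSimpleOrder (Subgroup (A ⧸ M)) :=
    OrderIso.isSimpleOrder (β := Set.Ici M) (QuotientGroup.comapMk'OrderIso M)
  have : Nontrivial (A ⧸ M) := Subgroup.nontrivial_iff.1 inferInstance
  exact CommGroup.is_simple_iff_prime_card.1 ⟨fun H _ => eq_bot_or_eq_top H⟩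

variable (G) in
theorem exists_normal_index_prime [Finite G] [Nontrivial G] [Group.IsSolvable G] :
    ∃ N : Subgroup G, N.Normal ∧ N.index.Prime := by
  have : Nontrivial (Abelianization G) := QuotientGroup.nontrivial_iff.2
    (Group.IsSolvable.commutator_lt_top_of_nontrivial G).ne
  obtain ⟨M, hM⟩ := IsCoatomic.exists_coatom (Subgroup (Abelianization G))
  refine ⟨M.comap Abelianization.of, inferInstance, ?_⟩
  rw [M.index_comap_of_surjective QuotientGroup.mk_surjective]
  exact index_prime_of_isCoatom hM

theorem exists_lt_normal_relIndex_prime {K : Subgroup G} [Finite K] [Group.IsSolvable K]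
    (hK : K ≠ ⊥) : ∃ N < K, (N.subgroupOf K).Normal ∧ (N.relIndex K).Prime := by
  have : Nontrivial K := K.nontrivial_iff_ne_bot.2 hK
  obtain ⟨N, hN, hprime⟩ := exists_normal_index_prime K
  have hsub : (N.map K.subtype).subgroupOf K = N :=
    Subgroup.comap_map_eq_self_of_injective K.subtype_injective N
  rw [← hsub] at hN hprime
  refine ⟨N.map K.subtype, (Subgroup.map_subtype_le N).lt_of_not_ge fun hle => ?_, hN, hprime⟩
  exact hprime.ne_one (Subgroup.relIndex_eq_one.2 hle)

theorem le_of_coprime_card_relIndex {H N K : Subgroup G} [(N.subgroupOf K).Normal] (hHK : H ≤ K)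
    (h : (Nat.card H).Coprime (N.relIndex K)) : H ≤ N := by
  have hdvd : N.relIndex H ∣ N.relIndex K := by
    rw [← Subgroup.relIndex_subgroupOf hHK]
    exact Subgroup.relIndex_dvd_index_of_normal _ _
  exact Subgroup.relIndex_eq_one.1
    (Nat.eq_one_of_dvd_coprimes h (Subgroup.relIndex_dvd_card N H) hdvd)

end PrimeIndex

section Semipermutability

variable {G : Type*} [Group G]

theorem isSemipermutable_of_normal (N : Subgroup G) [N.Normal] : IsSemipermutable N := by
  intro X _
  rw [← Subgroup.normal_mul, ← Subgroup.mul_normal, sup_comm]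

theorem isSemipermutable_subgroupOf_iff {H K : Subgroup G} (hHK : H ≤ K) :
    IsSemipermutable (H.subgroupOf K) ↔
      ∀ X ≤ K, (Nat.card H).Coprime (Nat.card X) → Commute (H : Set G) X := by
  have hcard : ∀ {L : Subgroup G}, L ≤ K → Nat.card (L.subgroupOf K) = Nat.card L := fun hL =>
    Nat.card_congr (Subgroup.subgroupOfEquivOfLe hL).toEquiv
  refine Subgroup.forall.trans (forall₂_congr fun X hXK => ?_)
  rw [hcard hHK, hcard hXK]
  exact imp_congr_right fun _ => commute_coe_subgroupOf_iff hHK hXK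

theorem IsSemipermutable.isSSemipermutable [Finite G] {H : Subgroup G} (hH : IsSemipermutable H) :
    IsSSemipermutable H := by
  intro q hq hdvd Q
  refine hH Q ?_
  obtain ⟨n, hn⟩ := IsPGroup.iff_card.1 Q.isPGroup'
  rw [hn]
  exact hq.out.coprime_pow_of_not_dvd hdvd

theorem IsBTGroup.isSemipermutable_of_le [Finite G] [Group.IsSolvable G] (hG : IsBTGroup G)
    {H K : Subgroup G} (hHK : H ≤ K) (hK : IsSemipermutable K) : IsSemipermutable H := by
  induction K using WellFoundedLT.induction generalizing H with
  | ind K ih =>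
    rcases eq_or_ne K ⊥ with rfl | hne
    · rwa [le_bot_iff.1 hHK]
    obtain ⟨N, hNK, hN, hprime⟩ := exists_lt_normal_relIndex_prime hne
    have hNsemi : IsSemipermutable N := hG N K hNK.le (isSemipermutable_of_normal _) hK
    have hsemi : ∀ L ≤ K, ¬ N.relIndex K ∣ Nat.card L → IsSemipermutable L := fun L hLK hL =>
      ih N hNK (le_of_coprime_card_relIndex hLK (hprime.coprime_iff_not_dvd.2 hL).symm) hNsemi
    refine hG H K hHK ((isSemipermutable_subgroupOf_iff hHK).2 fun X hXK hHX => ?_) hK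
    by_cases hdvd : N.relIndex K ∣ Nat.card H
    · have hX : ¬ N.relIndex K ∣ Nat.card X := fun hX =>
        Nat.not_coprime_of_dvd_of_dvd hprime.one_lt hdvd hX hHX
      exact (hsemi X hXK hX H hHX.symm).symm
    · exact hsemi H hHK hdvd X hHX

theorem IsBTGroup.isSemipermutable [Finite G] [Group.IsSolvable G] (hG : IsBTGroup G)
    (H : Subgroup G) : IsSemipermutable H :=
  hG.isSemipermutable_of_le le_top (isSemipermutable_of_normal ⊤)

theorem IsSSemipermutable.commute_coe_sylow {p q : ℕ} [hp : Fact p.Prime]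
    [hq : Fact q.Prime] (hpq : p ≠ q) {A : Subgroup G} [Finite A] (hA : IsSSemipermutable A)
    (hAp : IsPGroup p A) (Q : Sylow q G) : Commute (A : Set G) Q := by
  refine hA q (fun hdvd => hpq ?_) Q
  obtain ⟨k, hk⟩ := IsPGroup.iff_card.1 hAp
  exact ((Nat.prime_dvd_prime_iff_eq hq.out hp.out).1 (hq.out.dvd_of_dvd_pow (hk ▸ hdvd))).symm

theorem IsSSemipermutable.commute_coe {p q : ℕ} [Fact p.Prime] [Fact q.Prime]
    (hpq : p ≠ q) {A B : Subgroup G} [Finite A] [Finite B] (hA : IsSSemipermutable A)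
    (hB : IsSSemipermutable B) (hAp : IsPGroup p A) (hBq : IsPGroup q B) :
    Commute (A : Set G) B := by
  obtain ⟨P, hAP⟩ := hAp.exists_le_sylow
  obtain ⟨Q, hBQ⟩ := hBq.exists_le_sylow
  have hPQ : Disjoint (P : Subgroup G) Q :=
    IsPGroup.disjoint_of_ne p q hpq _ _ P.isPGroup' Q.isPGroup'
  exact commute_coe_of_disjoint hAP hBQ hPQ (hA.commute_coe_sylow hpq hAp Q)
    (hB.commute_coe_sylow hpq.symm hBq P).symm

theorem isSemipermutable_of_forall_isSSemipermutable_zpowers [Finite G]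
    (h : ∀ a : G, IsPrimePow (orderOf a) → IsSSemipermutable (Subgroup.zpowers a))
    (H : Subgroup G) : IsSemipermutable H := by
  intro X hHX
  refine commute_coe_of_forall_isPrimePow_orderOf fun a ha hpa => Commute.symm ?_
  refine commute_coe_of_forall_isPrimePow_orderOf fun b hb hpb => Commute.symm ?_
  have hab : (orderOf a).Coprime (orderOf b) :=
    hHX.of_dvd (H.orderOf_dvd_natCard ha) (X.orderOf_dvd_natCard hb)
  have hSa := h a hpa
  have hSb := h b hpb
  obtain ⟨p, k, hp, hk, hpk⟩ := (isPrimePow_nat_iff _).1 hpa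
  obtain ⟨q, l, hq, hl, hql⟩ := (isPrimePow_nat_iff _).1 hpb
  have : Fact p.Prime := ⟨hp⟩
  have : Fact q.Prime := ⟨hq⟩
  have hpq : p ≠ q := by
    rintro rfl
    exact Nat.not_coprime_of_dvd_of_dvd hp.one_lt (hpk ▸ dvd_pow_self p hk.ne')
      (hql ▸ dvd_pow_self p hl.ne') hab
  exact hSa.commute_coe hpq hSb (.of_card (Nat.card_zpowers a ▸ hpk.symm))
    (.of_card (Nat.card_zpowers b ▸ hql.symm))

end Semipermutability

/-- Lemma 2.4: a finite solvable group is a BT-group iff every cyclic subgroup of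
prime power order is S-semipermutable. -/
theorem bt_group_iff_cyclic_prime_power_sSemipermutable {G : Type*} [Group G] [Finite G]
    (hsol : IsSolvable G) :
    IsBTGroup G ↔
      ∀ H : Subgroup G, IsCyclic H → (∃ p k : ℕ, p.Prime ∧ Nat.card H = p ^ k) →
        IsSSemipermutable H := by
  have : Group.IsSolvable G := hsol
  refine ⟨fun hG H _ _ => (hG.isSemipermutable H).isSSemipermutable, fun h H _ _ _ _ => ?_⟩
  refine isSemipermutable_of_forall_isSSemipermutable_zpowers (fun a ha => ?_) H
  obtain ⟨p, k, hp, -, hpk⟩ := (isPrimePow_nat_iff _).1 ha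
  exact h _ inferInstance ⟨p, k, hp, by rw [Nat.card_zpowers, hpk]⟩
end
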